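/- arXiv:2102.12025 — 4 statements merged into one kernel-verified Lean document; each statement's English description precedes it below -/
import Mathlib

section
/- Let L > 0 and ℓ, k, k₀, b > 0. There exists a constant β > 0, depending only on L, ℓ, k, k₀, b, such that for all φ, ψ, w ∈ C¹([0,L]) with φ(0) = φ(L) = ψ(0) = ψ(L) = w(0) = w(L) = 0: ∫₀^L (|φ_x|² + |ψ_x|² + |w_x|²) dx ≤ β [ b∫₀^L |ψ_x|² dx + k∫₀^L |φ_x + ψ + ℓw|² dx + k₀∫₀^L |w_x − ℓφ|² dx ]. -/
theorem stmt_11 (L ℓ k k₀ b : ℝ) (hL : 0 < L) (hℓ : 0 < ℓ) (hk : 0 < k)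
    (hk₀ : 0 < k₀) (hb : 0 < b) :
    ∃ β : ℝ, 0 < β ∧
      ∀ φ ψ w : ℝ → ℝ, ContDiff ℝ 1 φ → ContDiff ℝ 1 ψ → ContDiff ℝ 1 w →
        φ 0 = 0 → φ L = 0 → ψ 0 = 0 → ψ L = 0 → w 0 = 0 → w L = 0 →
        (∫ x in (0:ℝ)..L, ((deriv φ x) ^ 2 + (deriv ψ x) ^ 2 + (deriv w x) ^ 2))
          ≤ β * (b * (∫ x in (0:ℝ)..L, (deriv ψ x) ^ 2)
            + k * (∫ x in (0:ℝ)..L, (deriv φ x + ψ x + ℓ * w x) ^ 2)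
            + k₀ * (∫ x in (0:ℝ)..L, (deriv w x - ℓ * φ x) ^ 2)) := by
  refine ⟨(3 + (3 + 3 * ℓ ^ 2) * Real.exp (2 * L) * L) * (1 / b + 1 / k + 1 / k₀),
    by positivity, ?_⟩
  intro φ ψ w hφ hψ hw hφ0 _ hψ0 _ hw0 _
  have cφ := hφ.continuous
  have cψ := hψ.continuous
  have cw := hw.continuous
  have cφ' := hφ.continuous_deriv le_rfl
  have cψ' := hψ.continuous_deriv le_rfl
  have cw' := hw.continuous_deriv le_rfl
  have dφ : ∀ x, HasDerivAt φ (deriv φ x) x := fun x =>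
    ((hφ.differentiable one_ne_zero) x).hasDerivAt
  have dψ : ∀ x, HasDerivAt ψ (deriv ψ x) x := fun x =>
    ((hψ.differentiable one_ne_zero) x).hasDerivAt
  have dw : ∀ x, HasDerivAt w (deriv w x) x := fun x =>
    ((hw.differentiable one_ne_zero) x).hasDerivAt
  set F : ℝ → ℝ := fun x => (deriv ψ x) ^ 2 + (deriv φ x + ψ x + ℓ * w x) ^ 2
    + (deriv w x - ℓ * φ x) ^ 2 with hF
  have cF : Continuous F := by fun_prop
  have F0 : ∀ x, 0 ≤ F x := fun x => by simp only [hF]; positivity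
  set E : ℝ → ℝ := fun x => φ x ^ 2 + ψ x ^ 2 + w x ^ 2 with hE
  have dE : ∀ x, HasDerivAt E
      (2 * φ x * deriv φ x + 2 * ψ x * deriv ψ x + 2 * w x * deriv w x) x := by
    intro x
    have := (((dφ x).pow 2).add ((dψ x).pow 2)).add ((dw x).pow 2)
    refine HasDerivAt.congr_deriv (f := E) this ?_
    norm_num
  have dexp : ∀ x : ℝ, HasDerivAt (fun x => Real.exp (-2 * x)) (Real.exp (-2 * x) * (-2)) x := by
    intro x
    have := ((hasDerivAt_id x).const_mul (-2)).exp
    simpa using this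
  set H : ℝ → ℝ := fun x => (∫ t in (0:ℝ)..x, F t) - Real.exp (-2 * x) * E x with hH
  have dH : ∀ x, HasDerivAt H (F x - (Real.exp (-2 * x) * (-2) * E x + Real.exp (-2 * x) *
      (2 * φ x * deriv φ x + 2 * ψ x * deriv ψ x + 2 * w x * deriv w x))) x := by
    intro x
    exact (cF.integral_hasStrictDerivAt 0 x).hasDerivAt.sub ((dexp x).mul (dE x))
  have key : ∀ x, 2 * φ x * deriv φ x + 2 * ψ x * deriv ψ x + 2 * w x * deriv w x
      ≤ 2 * E x + F x := by
    intro x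
    simp only [hE, hF]
    nlinarith [sq_nonneg (φ x - (deriv φ x + ψ x + ℓ * w x)), sq_nonneg (φ x + ψ x),
      sq_nonneg (w x - (deriv w x - ℓ * φ x)), sq_nonneg (ψ x - deriv ψ x), sq_nonneg (w x)]
  have mono : MonotoneOn H (Set.Icc 0 L) := by
    apply monotoneOn_of_deriv_nonneg (convex_Icc 0 L)
    · exact fun x _ => (dH x).continuousAt.continuousWithinAt
    · exact fun x _ => (dH x).differentiableAt.differentiableWithinAt
    · intro x hx
      rw [interior_Icc] at hx
      rw [(dH x).deriv]
      have h1 : Real.exp (-2 * x) ≤ 1 := Real.exp_le_one_iff.2 (by linarith [hx.1])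
      have h2 := mul_le_mul_of_nonneg_left (key x) (Real.exp_pos (-2 * x)).le
      have h3 := mul_le_mul_of_nonneg_right h1 (F0 x)
      nlinarith
  set R := ∫ t in (0:ℝ)..L, F t with hR
  have R0 : 0 ≤ R := intervalIntegral.integral_nonneg hL.le fun x _ => F0 x
  have bE : ∀ x ∈ Set.Icc 0 L, E x ≤ Real.exp (2 * L) * R := by
    intro x hx
    have h1 := mono (Set.left_mem_Icc.2 hL.le) hx hx.1
    have h0 : H 0 = 0 := by simp [hH, hE, hφ0, hψ0, hw0]
    rw [h0] at h1
    have h2 : (∫ t in (0:ℝ)..x, F t) ≤ R := by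
      have := intervalIntegral.integral_add_adjacent_intervals
        (cF.intervalIntegrable (μ := MeasureTheory.volume) 0 x) (cF.intervalIntegrable x L)
      have h4 : 0 ≤ ∫ t in x..L, F t :=
        intervalIntegral.integral_nonneg hx.2 fun x _ => F0 x
      linarith
    have h3 : Real.exp (-2 * x) * E x ≤ R := by simp only [hH] at h1; linarith
    have h5 : Real.exp (2 * x) * (Real.exp (-2 * x) * E x) = E x := by
      rw [← mul_assoc, ← Real.exp_add]; simp
    rw [← h5]
    have h6 : Real.exp (2 * x) ≤ Real.exp (2 * L) := Real.exp_le_exp.2 (by linarith [hx.2])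
    exact (mul_le_mul_of_nonneg_left h3 (Real.exp_pos _).le).trans
      (mul_le_mul_of_nonneg_right h6 R0)
  have step : (∫ x in (0:ℝ)..L, ((deriv φ x) ^ 2 + (deriv ψ x) ^ 2 + (deriv w x) ^ 2))
      ≤ ∫ x in (0:ℝ)..L, (3 * F x + (3 + 3 * ℓ ^ 2) * (Real.exp (2 * L) * R)) := by
    apply intervalIntegral.integral_mono_on hL.le
    · exact Continuous.intervalIntegrable (by fun_prop) _ _
    · exact Continuous.intervalIntegrable (by fun_prop) _ _
    · intro x hx
      have h1 := mul_le_mul_of_nonneg_left (bE x hx) (by positivity : 0 ≤ 3 + 3 * ℓ ^ 2)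
      refine le_trans ?_ (add_le_add_right h1 _)
      have a1 : ∀ f p q : ℝ, (f - p - q) ^ 2 ≤ 3 * (f ^ 2 + p ^ 2 + q ^ 2) := fun f p q => by
        nlinarith [sq_nonneg (f + p), sq_nonneg (f + q), sq_nonneg (p - q)]
      have a2 : ∀ f p : ℝ, (f + p) ^ 2 ≤ 2 * (f ^ 2 + p ^ 2) := fun f p => by
        nlinarith [sq_nonneg (f - p)]
      have b1 := a1 (deriv φ x + ψ x + ℓ * w x) (ψ x) (ℓ * w x)
      have b2 := a2 (deriv w x - ℓ * φ x) (ℓ * φ x)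
      have e1 : deriv φ x + ψ x + ℓ * w x - ψ x - ℓ * w x = deriv φ x := by ring
      have e2 : deriv w x - ℓ * φ x + ℓ * φ x = deriv w x := by ring
      rw [e1] at b1
      rw [e2] at b2
      simp only [hE, hF]
      generalize deriv φ x + ψ x + ℓ * w x = f at *
      generalize deriv w x - ℓ * φ x = g at *
      have := sq_nonneg (ℓ * φ x)
      have := sq_nonneg (ℓ * ψ x)
      simp only [mul_pow] at *
      nlinarith [sq_nonneg (φ x), sq_nonneg (w x), sq_nonneg g, sq_nonneg (deriv ψ x)]
  have hrhs : (∫ x in (0:ℝ)..L, (3 * F x + (3 + 3 * ℓ ^ 2) * (Real.exp (2 * L) * R)))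
      = 3 * R + L * ((3 + 3 * ℓ ^ 2) * (Real.exp (2 * L) * R)) := by
    rw [intervalIntegral.integral_add (Continuous.intervalIntegrable (by fun_prop) _ _)
      (Continuous.intervalIntegrable (by fun_prop) _ _), intervalIntegral.integral_const_mul,
      intervalIntegral.integral_const, ← hR, smul_eq_mul, sub_zero]
  rw [hrhs] at step
  have hsplit : R = (∫ x in (0:ℝ)..L, (deriv ψ x) ^ 2)
      + (∫ x in (0:ℝ)..L, (deriv φ x + ψ x + ℓ * w x) ^ 2)
      + (∫ x in (0:ℝ)..L, (deriv w x - ℓ * φ x) ^ 2) := by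
    rw [hR, hF]
    rw [intervalIntegral.integral_add (Continuous.intervalIntegrable (by fun_prop) _ _)
      (Continuous.intervalIntegrable (by fun_prop) _ _),
      intervalIntegral.integral_add (Continuous.intervalIntegrable (by fun_prop) _ _)
      (Continuous.intervalIntegrable (by fun_prop) _ _)]
  have A0 : 0 ≤ ∫ x in (0:ℝ)..L, (deriv ψ x) ^ 2 :=
    intervalIntegral.integral_nonneg hL.le fun x _ => sq_nonneg _
  have B0 : 0 ≤ ∫ x in (0:ℝ)..L, (deriv φ x + ψ x + ℓ * w x) ^ 2 :=
    intervalIntegral.integral_nonneg hL.le fun x _ => sq_nonneg _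
  have C0 : 0 ≤ ∫ x in (0:ℝ)..L, (deriv w x - ℓ * φ x) ^ 2 :=
    intervalIntegral.integral_nonneg hL.le fun x _ => sq_nonneg _
  generalize (∫ x in (0:ℝ)..L, (deriv ψ x) ^ 2) = A at *
  generalize (∫ x in (0:ℝ)..L, (deriv φ x + ψ x + ℓ * w x) ^ 2) = B at *
  generalize (∫ x in (0:ℝ)..L, (deriv w x - ℓ * φ x) ^ 2) = C at *
  have fin : R ≤ (1 / b + 1 / k + 1 / k₀) * (b * A + k * B + k₀ * C) := by
    have : (1 / b + 1 / k + 1 / k₀) * (b * A + k * B + k₀ * C) = A + B + C +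
        ((1 / k + 1 / k₀) * (b * A) + (1 / b + 1 / k₀) * (k * B) + (1 / b + 1 / k) * (k₀ * C)) := by
      field_simp
      ring
    rw [this, hsplit]
    have : 0 ≤ (1 / k + 1 / k₀) * (b * A) + (1 / b + 1 / k₀) * (k * B)
      + (1 / b + 1 / k) * (k₀ * C) := by positivity
    linarith
  have := mul_le_mul_of_nonneg_left fin
    (by positivity : 0 ≤ 3 + (3 + 3 * ℓ ^ 2) * Real.exp (2 * L) * L)
  linarith
end

section
/- (Locally Lipschitz dependence on initial data.) Assume f₁,f₂,f₃ ∈ C¹(ℝ³) with |∇f_i(u,v,w)| ≤ c_f(1+|u|^{p−1}+|v|^{p−1}+|w|^{p−1}) for some c_f > 0, p ≥ 1; g₁,g₂,g₃ ∈ C¹(ℝ) monotone increasing with g_i(0) = 0 and m ≤ g_i' ≤ M for constants 0 < m ≤ M; and a₁,a₂,a₃ ∈ L^∞(0,L) nonnegative. Let R > 0 and let Z¹ = (φ¹,ψ¹,w¹,φ¹_t,ψ¹_t,w¹_t), Z² = (φ²,ψ²,w²,φ²_t,ψ²_t,w²_t) be two C² classical solutions of the semilinear Bresse system with localized damping on [0,L]×[0,T]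 satisfying ∥Z^i(t)∥_H ≤ R for all t ∈ [0,T]. Then there exist constants C_R, K_R > 0, depending only on R and the data, such that ∥Z¹(t) − Z²(t)∥²_H ≤ C_R e^{K_R t} ∥Z¹(0) − Z²(0)∥²_H for all t ∈ [0,T]. -/
open MeasureTheory

/-- The squared `H`-norm
`∥Z(t)∥²_H = ρ₁∥φ_t∥² + ρ₂∥ψ_t∥² + ρ₁∥w_t∥² + b∥ψ_x∥² + k∥φ_x+ψ+ℓw∥² + k₀∥w_x−ℓφ∥²`
of the state of the Bresse system at time `t`, where `∥·∥` is the `L²(0,L)`-norm. -/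
noncomputable def HnormSq (ρ₁ ρ₂ b k k₀ ℓ L : ℝ) (φ ψ w : ℝ → ℝ → ℝ) (t : ℝ) : ℝ :=
  ρ₁ * (∫ x in (0:ℝ)..L, (deriv (fun s => φ x s) t) ^ 2)
  + ρ₂ * (∫ x in (0:ℝ)..L, (deriv (fun s => ψ x s) t) ^ 2)
  + ρ₁ * (∫ x in (0:ℝ)..L, (deriv (fun s => w x s) t) ^ 2)
  + b * (∫ x in (0:ℝ)..L, (deriv (fun y => ψ y t) x) ^ 2)
  + k * (∫ x in (0:ℝ)..L, (deriv (fun y => φ y t) x + ψ x t + ℓ * w x t) ^ 2)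
  + k₀ * (∫ x in (0:ℝ)..L, (deriv (fun y => w y t) x - ℓ * φ x t) ^ 2)

/-- `(φ,ψ,w)` is a classical solution, of class `C^N`, of the semilinear Bresse
system with localized damping on `[0,L] × [0,T]`, with Dirichlet boundary
conditions. -/
def IsBresseSolution (N : ℕ) (ρ₁ ρ₂ k k₀ b ℓ L T : ℝ)
    (a₁ a₂ a₃ g₁ g₂ g₃ : ℝ → ℝ) (f₁ f₂ f₃ : ℝ → ℝ → ℝ → ℝ)
    (φ ψ w : ℝ → ℝ → ℝ) : Prop :=
  ContDiff ℝ N (fun z : ℝ × ℝ => φ z.1 z.2) ∧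
  ContDiff ℝ N (fun z : ℝ × ℝ => ψ z.1 z.2) ∧
  ContDiff ℝ N (fun z : ℝ × ℝ => w z.1 z.2) ∧
  (∀ t ∈ Set.Icc (0:ℝ) T,
    φ 0 t = 0 ∧ φ L t = 0 ∧ ψ 0 t = 0 ∧ ψ L t = 0 ∧ w 0 t = 0 ∧ w L t = 0) ∧
  (∀ x ∈ Set.Icc (0:ℝ) L, ∀ t ∈ Set.Icc (0:ℝ) T,
    (ρ₁ * deriv (deriv (fun s => φ x s)) t
      - k * deriv (fun y => deriv (fun y' => φ y' t) y + ψ y t + ℓ * w y t) x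
      - k₀ * ℓ * (deriv (fun y => w y t) x - ℓ * φ x t)
      + a₁ x * g₁ (deriv (fun s => φ x s) t)
      + f₁ (φ x t) (ψ x t) (w x t) = 0) ∧
    (ρ₂ * deriv (deriv (fun s => ψ x s)) t
      - b * deriv (fun y => deriv (fun y' => ψ y' t) y) x
      + k * (deriv (fun y => φ y t) x + ψ x t + ℓ * w x t)
      + a₂ x * g₂ (deriv (fun s => ψ x s) t)
      + f₂ (φ x t) (ψ x t) (w x t) = 0) ∧
    (ρ₁ * deriv (deriv (fun s => w x s)) t
      - k₀ * deriv (fun y => deriv (fun y' => w y' t) y - ℓ * φ y t) x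
      + k * ℓ * (deriv (fun y => φ y t) x + ψ x t + ℓ * w x t)
      + a₃ x * g₃ (deriv (fun s => w x s) t)
      + f₃ (φ x t) (ψ x t) (w x t) = 0))


structure D2 (u ux ut uxx uxt utt : ℝ → ℝ → ℝ) : Prop where
  cu : Continuous (Function.uncurry u)
  cx : Continuous (Function.uncurry ux)
  ct : Continuous (Function.uncurry ut)
  cxx : Continuous (Function.uncurry uxx)
  cxt : Continuous (Function.uncurry uxt)
  ctt : Continuous (Function.uncurry utt)
  hx : ∀ x t, HasDerivAt (fun y => u y t) (ux x t) x
  ht : ∀ x t, HasDerivAt (fun s => u x s) (ut x t) t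
  hxx : ∀ x t, HasDerivAt (fun y => ux y t) (uxx x t) x
  hxt : ∀ x t, HasDerivAt (fun s => ux x s) (uxt x t) t
  htx : ∀ x t, HasDerivAt (fun y => ut y t) (uxt x t) x
  htt : ∀ x t, HasDerivAt (fun s => ut x s) (utt x t) t

lemma D2.exists (u : ℝ → ℝ → ℝ) (h : ContDiff ℝ 2 (fun z : ℝ × ℝ => u z.1 z.2)) :
    ∃ ux ut uxx uxt utt, D2 u ux ut uxx uxt utt := by
  set U : ℝ × ℝ → ℝ := fun z => u z.1 z.2 with hU
  have lineX : ∀ (x t : ℝ), HasDerivAt (fun y : ℝ => (y, t)) ((1:ℝ), (0:ℝ)) x := fun x t =>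
    (hasDerivAt_id x).prodMk (hasDerivAt_const x t)
  have lineT : ∀ (x t : ℝ), HasDerivAt (fun s : ℝ => (x, s)) ((0:ℝ), (1:ℝ)) t := fun x t =>
    (hasDerivAt_const t x).prodMk (hasDerivAt_id t)
  have key : ∀ V : ℝ × ℝ → ℝ, ContDiff ℝ 1 V → 
      (∀ x t, HasDerivAt (fun y => V (y, t)) (fderiv ℝ V (x, t) (1, 0)) x) ∧
      (∀ x t, HasDerivAt (fun s => V (x, s)) (fderiv ℝ V (x, t) (0, 1)) t) := by
    intro V hV
    have hd : ∀ z, HasFDerivAt V (fderiv ℝ V z) z := fun z =>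
      (hV.differentiable (by norm_num) z).hasFDerivAt
    exact ⟨fun x t => (hd (x, t)).comp_hasDerivAt x (lineX x t),
      fun x t => (hd (x, t)).comp_hasDerivAt t (lineT x t)⟩
  have h1 : ∀ v : ℝ × ℝ, ContDiff ℝ 1 (fun z => fderiv ℝ U z v) := fun v =>
    (h.fderiv_right (m := 1) (by norm_num)).clm_apply contDiff_const
  have h2 : ∀ v w : ℝ × ℝ, Continuous (fun z => fderiv ℝ (fun z => fderiv ℝ U z v) z w) := fun v w =>
    ((h1 v).continuous_fderiv (by norm_num)).clm_apply continuous_const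
  have hsym : ∀ z, fderiv ℝ (fun z => fderiv ℝ U z (1,0)) z (0,1)
      = fderiv ℝ (fun z => fderiv ℝ U z (0,1)) z (1,0) := by
    intro z
    have hs : IsSymmSndFDerivAt ℝ U z := h.contDiffAt.isSymmSndFDerivAt (by simp)
    have hd : DifferentiableAt ℝ (fderiv ℝ U) z :=
      (h.fderiv_right (m := 1) (by norm_num)).differentiable (by norm_num) z
    have e : ∀ v w : ℝ × ℝ, fderiv ℝ (fun z => fderiv ℝ U z v) z w = fderiv ℝ (fderiv ℝ U) z w v := by
      intro v w
      rw [fderiv_clm_apply hd (differentiableAt_const v)]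
      simp
    rw [e, e]
    exact hs.eq _ _
  have hxxt := fun v => key _ (h1 v)
  have h0 := key U (h.of_le (by norm_num))
  refine ⟨fun x t => fderiv ℝ U (x,t) (1,0), fun x t => fderiv ℝ U (x,t) (0,1),
    fun x t => fderiv ℝ (fun z => fderiv ℝ U z (1,0)) (x,t) (1,0),
    fun x t => fderiv ℝ (fun z => fderiv ℝ U z (1,0)) (x,t) (0,1),
    fun x t => fderiv ℝ (fun z => fderiv ℝ U z (0,1)) (x,t) (0,1),
    h.continuous, (h1 _).continuous, (h1 _).continuous, h2 _ _, h2 _ _, h2 _ _,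
    h0.1, h0.2, (hxxt _).1, (hxxt _).2, ?_, (hxxt _).2⟩
  intro x t
  rw [hsym]
  exact (hxxt _).1 x t

lemma D2.sub {u ux ut uxx uxt utt v vx vt vxx vxt vtt : ℝ → ℝ → ℝ}
    (hu : D2 u ux ut uxx uxt utt) (hv : D2 v vx vt vxx vxt vtt) :
    D2 (fun x t => u x t - v x t) (fun x t => ux x t - vx x t) (fun x t => ut x t - vt x t)
      (fun x t => uxx x t - vxx x t) (fun x t => uxt x t - vxt x t)
      (fun x t => utt x t - vtt x t) :=
  ⟨hu.cu.sub hv.cu, hu.cx.sub hv.cx, hu.ct.sub hv.ct, hu.cxx.sub hv.cxx, hu.cxt.sub hv.cxt,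
    hu.ctt.sub hv.ctt, fun x t => (hu.hx x t).sub (hv.hx x t), fun x t => (hu.ht x t).sub (hv.ht x t),
    fun x t => (hu.hxx x t).sub (hv.hxx x t), fun x t => (hu.hxt x t).sub (hv.hxt x t),
    fun x t => (hu.htx x t).sub (hv.htx x t), fun x t => (hu.htt x t).sub (hv.htt x t)⟩

lemma deriv_under (e et : ℝ → ℝ → ℝ) (L : ℝ) (ce : Continuous (Function.uncurry e))
    (cet : Continuous (Function.uncurry et)) (h : ∀ x t, HasDerivAt (fun s => e x s) (et x t) t)
    (t : ℝ) : HasDerivAt (fun s => ∫ x in (0:ℝ)..L, e x s) (∫ x in (0:ℝ)..L, et x t) t := by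
  have hK : IsCompact (Set.uIcc 0 L ×ˢ Metric.closedBall t 1) :=
    isCompact_uIcc.prod (isCompact_closedBall t 1)
  obtain ⟨B, hB⟩ := hK.exists_bound_of_continuousOn cet.continuousOn
  have c1 : ∀ s, Continuous (fun x => e x s) := fun s => ce.comp (continuous_id.prodMk continuous_const)
  have c2 : ∀ s, Continuous (fun x => et x s) := fun s => cet.comp (continuous_id.prodMk continuous_const)
  refine (intervalIntegral.hasDerivAt_integral_of_dominated_loc_of_deriv_le
    (F := fun s x => e x s) (F' := fun s x => et x s) (bound := fun _ => B)
    (s := Metric.closedBall t 1) (Metric.closedBall_mem_nhds t one_pos) ?_ ?_ ?_ ?_ ?_ ?_).2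
  · exact Filter.Eventually.of_forall fun s => (c1 s).aestronglyMeasurable
  · exact (c1 t).intervalIntegrable _ _
  · exact (c2 t).aestronglyMeasurable
  · refine Filter.Eventually.of_forall fun x hx s hs => ?_
    exact hB (x, s) ⟨Set.uIoc_subset_uIcc hx, hs⟩
  · exact intervalIntegrable_const
  · exact Filter.Eventually.of_forall fun x hx s hs => h x s

lemma sup_aux (e e1 q : ℝ → ℝ) (L : ℝ) (hL : 0 < L) (he : ∀ x, HasDerivAt e (e1 x) x)
    (c1 : Continuous e1) (cq : Continuous q) (q0 : ∀ x, 0 ≤ q x) (e0 : e 0 = 0)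
    (h : ∀ x ∈ Set.Icc 0 L, e1 x ≤ e x / (2 * L) + q x) (x : ℝ) (hx : x ∈ Set.Icc 0 L) :
    e x ≤ 2 * ∫ y in (0:ℝ)..L, q y := by
  have ce : Continuous e := continuous_iff_continuousAt.2 fun x => (he x).continuousAt
  obtain ⟨z, hz, hmax⟩ := isCompact_Icc.exists_isMaxOn ⟨x, hx⟩ ce.continuousOn
  have hm : ∀ y ∈ Set.Icc 0 L, e y ≤ e z := fun y hy => hmax hy
  have hz0 : 0 ≤ e z := e0 ▸ hm 0 ⟨le_rfl, hL.le⟩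
  have ftc : ∫ y in (0:ℝ)..z, e1 y = e z := by
    rw [intervalIntegral.integral_eq_sub_of_hasDerivAt (fun y _ => he y) (c1.intervalIntegrable _ _), e0, sub_zero]
  have m1 : ∫ y in (0:ℝ)..z, e1 y ≤ ∫ y in (0:ℝ)..z, (e z / (2 * L) + q y) := by
    refine intervalIntegral.integral_mono_on hz.1 (c1.intervalIntegrable _ _)
      ((continuous_const.add cq).intervalIntegrable _ _) fun y hy => ?_
    have hy' : y ∈ Set.Icc 0 L := ⟨hy.1, hy.2.trans hz.2⟩
    have := h y hy'
    have h3 : e y / (2 * L) ≤ e z / (2 * L) := by gcongr; exact hm y hy'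
    linarith
  have m2 : ∫ y in (0:ℝ)..z, (e z / (2 * L) + q y) ≤ ∫ y in (0:ℝ)..L, (e z / (2 * L) + q y) := by
    refine intervalIntegral.integral_mono_interval le_rfl hz.1 hz.2 ?_ ((continuous_const.add cq).intervalIntegrable _ _)
    exact Filter.Eventually.of_forall fun y => by
      have := q0 y
      show 0 ≤ _
      positivity
  have m3 : ∫ y in (0:ℝ)..L, (e z / (2 * L) + q y) = e z / 2 + ∫ y in (0:ℝ)..L, q y := by
    rw [intervalIntegral.integral_add (by simp) (cq.intervalIntegrable _ _)]
    simp
    field_simp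
  have := hm x hx
  linarith

lemma sq_hd {f : ℝ → ℝ} {f' x : ℝ} (h : HasDerivAt f f' x) :
    HasDerivAt (fun y => f y ^ 2) (2 * f x * f') x := by
  have := h.fun_pow 2
  simpa using this

lemma sup_bound (k k₀ b ℓ L : ℝ) (hk : 0 < k) (hk₀ : 0 < k₀) (hb : 0 < b) (hL : 0 < L) :
    ∃ C, 0 < C ∧ ∀ φ ψ w φx ψx wx : ℝ → ℝ, Continuous φx → Continuous ψx → Continuous wx →
      (∀ x, HasDerivAt φ (φx x) x) → (∀ x, HasDerivAt ψ (ψx x) x) → (∀ x, HasDerivAt w (wx x) x) →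
      φ 0 = 0 → ψ 0 = 0 → w 0 = 0 → ∀ x ∈ Set.Icc 0 L, φ x ^ 2 + ψ x ^ 2 + w x ^ 2 ≤
        C * ∫ y in (0:ℝ)..L, (b * ψx y ^ 2 + k * (φx y + ψ y + ℓ * w y) ^ 2
          + k₀ * (wx y - ℓ * φ y) ^ 2) := by
  refine ⟨4 * L / b + (8 * L / k + 32 * L ^ 3 / b + 4 * L / k₀), by positivity, ?_⟩
  intro φ ψ w φx ψx wx cφx cψx cwx hφ hψ hw φ0 ψ0 w0
  have cφ : Continuous φ := continuous_iff_continuousAt.2 fun x => (hφ x).continuousAt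
  have cψ : Continuous ψ := continuous_iff_continuousAt.2 fun x => (hψ x).continuousAt
  have cw : Continuous w := continuous_iff_continuousAt.2 fun x => (hw x).continuousAt
  set F : ℝ → ℝ := fun y => φx y + ψ y + ℓ * w y with hF
  set G : ℝ → ℝ := fun y => wx y - ℓ * φ y with hG
  have cF : Continuous F := by fun_prop
  have cG : Continuous G := by fun_prop
  have i1 : 0 ≤ ∫ y in (0:ℝ)..L, ψx y ^ 2 := intervalIntegral.integral_nonneg hL.le fun y _ => by positivity
  have i2 : 0 ≤ ∫ y in (0:ℝ)..L, F y ^ 2 := intervalIntegral.integral_nonneg hL.le fun y _ => by positivity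
  have i3 : 0 ≤ ∫ y in (0:ℝ)..L, G y ^ 2 := intervalIntegral.integral_nonneg hL.le fun y _ => by positivity
  have hJ : ∫ y in (0:ℝ)..L, (b * ψx y ^ 2 + k * (φx y + ψ y + ℓ * w y) ^ 2
          + k₀ * (wx y - ℓ * φ y) ^ 2) = b * (∫ y in (0:ℝ)..L, ψx y ^ 2) +
          k * (∫ y in (0:ℝ)..L, F y ^ 2) + k₀ * (∫ y in (0:ℝ)..L, G y ^ 2) := by
    rw [intervalIntegral.integral_add, intervalIntegral.integral_add]
    · simp only [intervalIntegral.integral_const_mul, hF, hG]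
    all_goals exact Continuous.intervalIntegrable (by fun_prop) _ _
  rw [hJ]
  set I1 := ∫ y in (0:ℝ)..L, ψx y ^ 2
  set I2 := ∫ y in (0:ℝ)..L, F y ^ 2
  set I3 := ∫ y in (0:ℝ)..L, G y ^ 2
  have hψb : ∀ x ∈ Set.Icc 0 L, ψ x ^ 2 ≤ 4 * L * I1 := by
    intro x hx
    have := sup_aux (fun x => ψ x ^ 2) (fun x => 2 * ψ x * ψx x) (fun x => 2 * L * ψx x ^ 2) L hL
      (fun x => sq_hd (hψ x)) (by fun_prop) (by fun_prop) (fun x => by positivity)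
      (by simp [ψ0]) (fun x _ => by
        have : ψ x ^ 2 / (2 * L) + 2 * L * ψx x ^ 2 - 2 * ψ x * ψx x = (ψ x - 2 * L * ψx x) ^ 2 / (2 * L) := by
          field_simp; ring
        have h2 : 0 ≤ (ψ x - 2 * L * ψx x) ^ 2 / (2 * L) := by positivity
        linarith) x hx
    simp only [intervalIntegral.integral_const_mul] at this
    linarith
  intro x hx
  have h2 := sup_aux (fun x => φ x ^ 2 + w x ^ 2) (fun x => 2 * φ x * φx x + 2 * w x * wx x)
      (fun x => 2 * L * (2 * F x ^ 2 + 2 * (4 * L * I1) + G x ^ 2)) L hL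
      (fun x => (sq_hd (hφ x)).add (sq_hd (hw x))) (by fun_prop) (by fun_prop)
      (fun x => by positivity)
      (by simp [φ0, w0]) (fun x hx => by
        have e1 : 2 * φ x * φx x + 2 * w x * wx x = 2 * φ x * (F x - ψ x) + 2 * w x * G x := by
          simp only [hF, hG]; ring
        have : (φ x ^ 2 + w x ^ 2) / (2 * L) + 2 * L * ((F x - ψ x) ^ 2 + G x ^ 2) - (2 * φ x * (F x - ψ x) + 2 * w x * G x)
          = ((φ x - 2 * L * (F x - ψ x)) ^ 2 + (w x - 2 * L * G x) ^ 2) / (2 * L) := by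
          field_simp; ring
        have h2 : 0 ≤ ((φ x - 2 * L * (F x - ψ x)) ^ 2 + (w x - 2 * L * G x) ^ 2) / (2 * L) := by positivity
        have h3 : (F x - ψ x) ^ 2 + G x ^ 2 ≤ 2 * F x ^ 2 + 2 * (4 * L * I1) + G x ^ 2 := by
          nlinarith [hψb x hx, sq_nonneg (F x + ψ x)]
        have h4 := mul_le_mul_of_nonneg_left h3 (by positivity : 0 ≤ 2 * L)
        rw [e1]
        linarith) x hx
  have h3 : ∫ x in (0:ℝ)..L, 2 * L * (2 * F x ^ 2 + 2 * (4 * L * I1) + G x ^ 2)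
      = 2 * L * (2 * I2 + L * (2 * (4 * L * I1)) + I3) := by
    rw [intervalIntegral.integral_const_mul, intervalIntegral.integral_add, intervalIntegral.integral_add]
    · simp only [intervalIntegral.integral_const_mul]
      simp only [intervalIntegral.integral_const, smul_eq_mul, sub_zero]
      change 2 * L * (2 * I2 + _ + I3) = _
      ring
    all_goals exact Continuous.intervalIntegrable (by fun_prop) _ _
  rw [h3] at h2
  have h1 := hψb x hx
  have e2 : (4 * L / b + (8 * L / k + 32 * L ^ 3 / b + 4 * L / k₀)) * (b * I1 + k * I2 + k₀ * I3)
      = 4 * L * I1 + 2 * (2 * L * (2 * I2 + L * (2 * (4 * L * I1)) + I3)) +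
      ((4 * L / b + 32 * L ^ 3 / b) * (k * I2 + k₀ * I3) + 8 * L / k * (b * I1 + k₀ * I3) +
       4 * L / k₀ * (b * I1 + k * I2)) := by
    field_simp; ring
  have : 0 ≤ ((4 * L / b + 32 * L ^ 3 / b) * (k * I2 + k₀ * I3) + 8 * L / k * (b * I1 + k₀ * I3) +
       4 * L / k₀ * (b * I1 + k * I2)) := by positivity
  rw [e2]
  linarith

lemma lip_bound (f : ℝ → ℝ → ℝ → ℝ) (hf : ContDiff ℝ 1 (fun z : ℝ × ℝ × ℝ => f z.1 z.2.1 z.2.2))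
    (r : ℝ) : ∃ Λ, 0 ≤ Λ ∧ ∀ u v w u' v' w' : ℝ, |u| ≤ r → |v| ≤ r → |w| ≤ r →
      |u'| ≤ r → |v'| ≤ r → |w'| ≤ r → (f u v w - f u' v' w') ^ 2 ≤
        Λ * ((u - u') ^ 2 + (v - v') ^ 2 + (w - w') ^ 2) := by
  obtain ⟨B, hB⟩ := (isCompact_closedBall (0 : ℝ × ℝ × ℝ) r).exists_bound_of_continuousOn
    (hf.continuous_fderiv (by norm_num)).continuousOn
  refine ⟨B ^ 2, by positivity, fun u v w u' v' w' hu hv hw hu' hv' hw' => ?_⟩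
  have := (convex_closedBall (0 : ℝ × ℝ × ℝ) r).norm_image_sub_le_of_norm_fderiv_le
    (𝕜 := ℝ) (f := fun z : ℝ × ℝ × ℝ => f z.1 z.2.1 z.2.2)
    (fun x _ => hf.differentiable (by norm_num) x) hB
    (x := (u', v', w')) (y := (u, v, w)) (by simp [Prod.norm_def, *]) (by simp [Prod.norm_def, *])
  have h2 : ‖((u, v, w) : ℝ × ℝ × ℝ) - (u', v', w')‖ ^ 2 ≤ (u - u') ^ 2 + (v - v') ^ 2 + (w - w') ^ 2 := by
    simp only [Prod.mk_sub_mk, Prod.norm_def, Real.norm_eq_abs]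
    rw [← sq_abs (u - u'), ← sq_abs (v - v'), ← sq_abs (w - w')]
    rcases max_choice |u - u'| (max |v - v'| |w - w'|) with h | h <;> rw [h]
    · nlinarith [sq_nonneg |v - v'|, sq_nonneg |w - w'|]
    · rcases max_choice |v - v'| |w - w'| with h | h <;> rw [h] <;>
        nlinarith [sq_nonneg |v - v'|, sq_nonneg |w - w'|, sq_nonneg |u - u'|]
  simp only [Real.norm_eq_abs] at this
  calc (f u v w - f u' v' w') ^ 2 = |f u v w - f u' v' w'| ^ 2 := (sq_abs _).symm
    _ ≤ (B * ‖((u, v, w) : ℝ × ℝ × ℝ) - (u', v', w')‖) ^ 2 := by gcongr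
    _ = B ^ 2 * ‖((u, v, w) : ℝ × ℝ × ℝ) - (u', v', w')‖ ^ 2 := by ring
    _ ≤ _ := by gcongr

def enD (ρ₁ ρ₂ b k k₀ ℓ : ℝ) (φ ψ w φx ψx wx φt ψt wt : ℝ → ℝ → ℝ) (x t : ℝ) : ℝ :=
  ρ₁ * φt x t ^ 2 + ρ₂ * ψt x t ^ 2 + ρ₁ * wt x t ^ 2 + (b * ψx x t ^ 2
    + k * (φx x t + ψ x t + ℓ * w x t) ^ 2 + k₀ * (wx x t - ℓ * φ x t) ^ 2)

lemma c_slice {u : ℝ → ℝ → ℝ} (h : Continuous (Function.uncurry u)) (t : ℝ) :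
    Continuous (fun x => u x t) := h.comp (continuous_id.prodMk continuous_const)

lemma Hn_eq (ρ₁ ρ₂ b k k₀ ℓ L : ℝ)
    {φ φx φt φxx φxt φtt ψ ψx ψt ψxx ψxt ψtt w wx wt wxx wxt wtt : ℝ → ℝ → ℝ}
    (hφ : D2 φ φx φt φxx φxt φtt) (hψ : D2 ψ ψx ψt ψxx ψxt ψtt) (hw : D2 w wx wt wxx wxt wtt)
    (t : ℝ) : HnormSq ρ₁ ρ₂ b k k₀ ℓ L φ ψ w t
      = ∫ x in (0:ℝ)..L, enD ρ₁ ρ₂ b k k₀ ℓ φ ψ w φx ψx wx φt ψt wt x t := by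
  have := c_slice hφ.cu t
  have := c_slice hφ.cx t
  have := c_slice hφ.ct t
  have := c_slice hψ.cu t
  have := c_slice hψ.cx t
  have := c_slice hψ.ct t
  have := c_slice hw.cu t
  have := c_slice hw.cx t
  have := c_slice hw.ct t
  unfold HnormSq enD
  simp only [(hφ.ht _ _).deriv, (hψ.ht _ _).deriv, (hw.ht _ _).deriv, (hφ.hx _ _).deriv,
    (hψ.hx _ _).deriv, (hw.hx _ _).deriv]
  rw [intervalIntegral.integral_add, intervalIntegral.integral_add, intervalIntegral.integral_add,
    intervalIntegral.integral_add, intervalIntegral.integral_add]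
  · simp only [intervalIntegral.integral_const_mul]
    ring
  all_goals exact Continuous.intervalIntegrable (by fun_prop) _ _

lemma bdry_zero {u : ℝ → ℝ} {u' T t : ℝ} (h : ∀ s ∈ Set.Icc 0 T, u s = 0) (ht : t ∈ Set.Ioo 0 T)
    (hd : HasDerivAt u u' t) : u' = 0 := by
  have h0 : HasDerivAt u 0 t := (hasDerivAt_const t (0:ℝ)).congr_of_eventuallyEq (by
    filter_upwards [isOpen_Ioo.mem_nhds ht] with s hs
    exact h s ⟨hs.1.le, hs.2.le⟩)
  exact hd.unique h0

lemma gron (ρ₁ ρ₂ b k k₀ ℓ L T D c : ℝ) (hL : 0 < L)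
    {φ φx φt φxx φxt φtt ψ ψx ψt ψxx ψxt ψtt w wx wt wxx wxt wtt : ℝ → ℝ → ℝ}
    (hφ : D2 φ φx φt φxx φxt φtt) (hψ : D2 ψ ψx ψt ψxx ψxt ψtt) (hw : D2 w wx wt wxx wxt wtt)
    (hbd : ∀ t ∈ Set.Icc (0:ℝ) T,
      φ 0 t = 0 ∧ φ L t = 0 ∧ ψ 0 t = 0 ∧ ψ L t = 0 ∧ w 0 t = 0 ∧ w L t = 0)
    (hP : ∀ t ∈ Set.Ioo (0:ℝ) T, ∀ x ∈ Set.Icc (0:ℝ) L,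
      2 * ((ρ₁ * φtt x t - k * (φxx x t + ψx x t + ℓ * wx x t) - k₀ * ℓ * (wx x t - ℓ * φ x t)) * φt x t
      + (ρ₂ * ψtt x t - b * ψxx x t + k * (φx x t + ψ x t + ℓ * w x t)) * ψt x t
      + (ρ₁ * wtt x t - k₀ * (wxx x t - ℓ * φx x t) + k * ℓ * (φx x t + ψ x t + ℓ * w x t)) * wt x t)
      ≤ D * (∫ y in (0:ℝ)..L, enD ρ₁ ρ₂ b k k₀ ℓ φ ψ w φx ψx wx φt ψt wt y t)
        + c * enD ρ₁ ρ₂ b k k₀ ℓ φ ψ w φx ψx wx φt ψt wt x t) :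
    ∀ t ∈ Set.Icc (0:ℝ) T,
      (∫ y in (0:ℝ)..L, enD ρ₁ ρ₂ b k k₀ ℓ φ ψ w φx ψx wx φt ψt wt y t) ≤
      Real.exp ((D * L + c) * t) *
        (∫ y in (0:ℝ)..L, enD ρ₁ ρ₂ b k k₀ ℓ φ ψ w φx ψx wx φt ψt wt y 0) := by
  set e := enD ρ₁ ρ₂ b k k₀ ℓ φ ψ w φx ψx wx φt ψt wt with he
  set E : ℝ → ℝ := fun t => ∫ y in (0:ℝ)..L, e y t with hE
  set et : ℝ → ℝ → ℝ := fun x t => ρ₁ * (2 * φt x t * φtt x t) + ρ₂ * (2 * ψt x t * ψtt x t)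
    + ρ₁ * (2 * wt x t * wtt x t) + (b * (2 * ψx x t * ψxt x t)
    + k * (2 * (φx x t + ψ x t + ℓ * w x t) * (φxt x t + ψt x t + ℓ * wt x t))
    + k₀ * (2 * (wx x t - ℓ * φ x t) * (wxt x t - ℓ * φt x t))) with het
  have hdt : ∀ x t, HasDerivAt (fun s => e x s) (et x t) t := by
    intro x t
    exact ((((sq_hd (hφ.htt x t)).const_mul ρ₁).add ((sq_hd (hψ.htt x t)).const_mul ρ₂)).add
      ((sq_hd (hw.htt x t)).const_mul ρ₁)).add
      ((((sq_hd (hψ.hxt x t)).const_mul b).add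
      ((sq_hd (((hφ.hxt x t).add (hψ.ht x t)).add ((hw.ht x t).const_mul ℓ))).const_mul k)).add
      ((sq_hd ((hw.hxt x t).sub ((hφ.ht x t).const_mul ℓ))).const_mul k₀))
  have ce : Continuous (Function.uncurry e) := by
    obtain ⟨h1, h2, h3, h4, h5, h6, -⟩ := hφ
    obtain ⟨k1, k2, k3, k4, k5, k6, -⟩ := hψ
    obtain ⟨l1, l2, l3, l4, l5, l6, -⟩ := hw
    simp only [Function.uncurry_def] at *
    simp only [he, enD]
    fun_prop
  have cet : Continuous (Function.uncurry et) := by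
    obtain ⟨h1, h2, h3, h4, h5, h6, -⟩ := hφ
    obtain ⟨k1, k2, k3, k4, k5, k6, -⟩ := hψ
    obtain ⟨l1, l2, l3, l4, l5, l6, -⟩ := hw
    simp only [Function.uncurry_def] at *
    simp only [het]
    fun_prop
  have hEd : ∀ t, HasDerivAt E (∫ x in (0:ℝ)..L, et x t) t := fun t => deriv_under e et L ce cet hdt t
  have hineq : ∀ t ∈ Set.Ioo 0 T, (∫ x in (0:ℝ)..L, et x t) ≤ (D * L + c) * E t := by
    intro t ht
    set fl : ℝ → ℝ := fun x => b * (ψx x t * ψt x t) + k * ((φx x t + ψ x t + ℓ * w x t) * φt x t)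
      + k₀ * ((wx x t - ℓ * φ x t) * wt x t) with hfl
    set fl' : ℝ → ℝ := fun x => b * (ψxx x t * ψt x t + ψx x t * ψxt x t)
      + k * ((φxx x t + ψx x t + ℓ * wx x t) * φt x t + (φx x t + ψ x t + ℓ * w x t) * φxt x t)
      + k₀ * ((wxx x t - ℓ * φx x t) * wt x t + (wx x t - ℓ * φ x t) * wxt x t) with hfl'
    have hfd : ∀ x, HasDerivAt fl (fl' x) x := by
      intro x
      exact ((((hψ.hxx x t).mul (hψ.htx x t)).const_mul b).add
        (((((hφ.hxx x t).add (hψ.hx x t)).add ((hw.hx x t).const_mul ℓ)).mul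
          (hφ.htx x t)).const_mul k)).add
        ((((hw.hxx x t).sub ((hφ.hx x t).const_mul ℓ)).mul (hw.htx x t)).const_mul k₀)
    have cfl' : Continuous fl' := by
      have h1 := c_slice hφ.cu t
      have h2 := c_slice hφ.cx t
      have h3 := c_slice hφ.ct t
      have h4 := c_slice hψ.cu t
      have h5 := c_slice hψ.cx t
      have h6 := c_slice hψ.ct t
      have h7 := c_slice hw.cu t
      have h8 := c_slice hw.cx t
      have h9 := c_slice hw.ct t
      have g1 := c_slice hφ.cxx t
      have g2 := c_slice hφ.cxt t
      have g3 := c_slice hψ.cxx t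
      have g4 := c_slice hψ.cxt t
      have g5 := c_slice hw.cxx t
      have g6 := c_slice hw.cxt t
      simp only [hfl']
      fun_prop
    have z1 := bdry_zero (fun s hs => (hbd s hs).1) ht (hφ.ht 0 t)
    have z2 := bdry_zero (fun s hs => (hbd s hs).2.1) ht (hφ.ht L t)
    have z3 := bdry_zero (fun s hs => (hbd s hs).2.2.1) ht (hψ.ht 0 t)
    have z4 := bdry_zero (fun s hs => (hbd s hs).2.2.2.1) ht (hψ.ht L t)
    have z5 := bdry_zero (fun s hs => (hbd s hs).2.2.2.2.1) ht (hw.ht 0 t)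
    have z6 := bdry_zero (fun s hs => (hbd s hs).2.2.2.2.2) ht (hw.ht L t)
    have hint : ∫ x in (0:ℝ)..L, fl' x = 0 := by
      rw [intervalIntegral.integral_eq_sub_of_hasDerivAt (fun y _ => hfd y)
        (cfl'.intervalIntegrable _ _)]
      simp [hfl, z1, z2, z3, z4, z5, z6]
    have ce1 := c_slice ce t
    have cet1 := c_slice cet t
    have m : (∫ x in (0:ℝ)..L, et x t) ≤ ∫ x in (0:ℝ)..L, (D * E t + c * e x t + 2 * fl' x) := by
      refine intervalIntegral.integral_mono_on hL.le (cet1.intervalIntegrable _ _)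
        (Continuous.intervalIntegrable (by fun_prop) _ _) fun x hx => ?_
      have := hP t ht x hx
      change _ ≤ D * E t + c * e x t at this
      simp only [het, hfl']
      linarith
    have m2 : ∫ x in (0:ℝ)..L, (D * E t + c * e x t + 2 * fl' x)
        = (L - 0) * (D * E t) + c * E t + 2 * 0 := by
      rw [intervalIntegral.integral_add, intervalIntegral.integral_add,
        intervalIntegral.integral_const, smul_eq_mul,
        intervalIntegral.integral_const_mul, intervalIntegral.integral_const_mul, hint]
      all_goals exact Continuous.intervalIntegrable (by fun_prop) _ _
    rw [m2] at m
    linarith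
  set K := D * L + c with hK
  have hG : ∀ t, HasDerivAt (fun t => Real.exp (-(K * t)) * E t)
      (Real.exp (-(K * t)) * (-(K * 1)) * E t + Real.exp (-(K * t)) * ∫ x in (0:ℝ)..L, et x t) t :=
    fun t => ((((hasDerivAt_id t).const_mul K).neg).exp).mul (hEd t)
  have anti : AntitoneOn (fun t => Real.exp (-(K * t)) * E t) (Set.Icc 0 T) := by
    refine antitoneOn_of_deriv_nonpos (convex_Icc 0 T)
      (fun t _ => (hG t).continuousAt.continuousWithinAt)
      (fun t _ => (hG t).differentiableAt.differentiableWithinAt) ?_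
    intro t ht
    rw [interior_Icc] at ht
    rw [(hG t).deriv]
    have := mul_le_mul_of_nonneg_left (hineq t ht) (Real.exp_pos (-(K * t))).le
    linarith
  intro t ht
  have h1 := anti ⟨le_rfl, ht.1.trans ht.2⟩ ht ht.1
  simp only [mul_zero, neg_zero, Real.exp_zero, one_mul] at h1
  have h2 := mul_le_mul_of_nonneg_left h1 (Real.exp_pos (K * t)).le
  rw [← mul_assoc, ← Real.exp_add, add_neg_cancel, Real.exp_zero, one_mul] at h2
  exact h2

lemma pde_alg {A D1 D2' D3 p1 p2 p3 a1 a2 a3 G1 G2 G3 F1 F2 F3 : ℝ}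
    (h1 : p1 = -(a1 * G1) - F1) (h2 : p2 = -(a2 * G2) - F2) (h3 : p3 = -(a3 * G3) - F3)
    (k1 : 0 ≤ a1) (k2 : 0 ≤ a2) (k3 : 0 ≤ a3)
    (m1 : 0 ≤ G1 * D1) (m2 : 0 ≤ G2 * D2') (m3 : 0 ≤ G3 * D3)
    (hA : F1 ^ 2 + F2 ^ 2 + F3 ^ 2 ≤ A) :
    2 * (p1 * D1 + p2 * D2' + p3 * D3) ≤ A + (D1 ^ 2 + D2' ^ 2 + D3 ^ 2) := by
  subst h1 h2 h3
  have n1 := mul_nonneg k1 m1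
  have n2 := mul_nonneg k2 m2
  have n3 := mul_nonneg k3 m3
  nlinarith [sq_nonneg (F1 + D1), sq_nonneg (F2 + D2'), sq_nonneg (F3 + D3)]

lemma mono_mul {g : ℝ → ℝ} (hg : Monotone g) (x y : ℝ) : 0 ≤ (g x - g y) * (x - y) := by
  rcases le_total x y with h | h
  · have := hg h
    nlinarith
  · have := hg h
    nlinarith

lemma en_ge (ρ₁ ρ₂ A1 A2 A3 J : ℝ) (hρ₁ : 0 < ρ₁) (hρ₂ : 0 < ρ₂) (hJ : 0 ≤ J) :
    A1 ^ 2 + A2 ^ 2 + A3 ^ 2 ≤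
      (1 / ρ₁ + 1 / ρ₂) * (ρ₁ * A1 ^ 2 + ρ₂ * A2 ^ 2 + ρ₁ * A3 ^ 2 + J) := by
  have : (1 / ρ₁ + 1 / ρ₂) * (ρ₁ * A1 ^ 2 + ρ₂ * A2 ^ 2 + ρ₁ * A3 ^ 2 + J) =
      A1 ^ 2 + A2 ^ 2 + A3 ^ 2 + (1 / ρ₁ * (ρ₂ * A2 ^ 2 + J) +
        1 / ρ₂ * (ρ₁ * A1 ^ 2 + ρ₁ * A3 ^ 2 + J)) := by
    field_simp; ring
  rw [this]
  have : 0 ≤ 1 / ρ₁ * (ρ₂ * A2 ^ 2 + J) + 1 / ρ₂ * (ρ₁ * A1 ^ 2 + ρ₁ * A3 ^ 2 + J) := by positivity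
  linarith

lemma sup_H (ρ₁ ρ₂ b k k₀ ℓ L T C : ℝ) (hρ₁ : 0 < ρ₁) (hρ₂ : 0 < ρ₂) (hL : 0 < L) (hC : 0 < C)
    (hsup : ∀ φ ψ w φx ψx wx : ℝ → ℝ, Continuous φx → Continuous ψx → Continuous wx →
      (∀ x, HasDerivAt φ (φx x) x) → (∀ x, HasDerivAt ψ (ψx x) x) → (∀ x, HasDerivAt w (wx x) x) →
      φ 0 = 0 → ψ 0 = 0 → w 0 = 0 → ∀ x ∈ Set.Icc 0 L, φ x ^ 2 + ψ x ^ 2 + w x ^ 2 ≤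
        C * ∫ y in (0:ℝ)..L, (b * ψx y ^ 2 + k * (φx y + ψ y + ℓ * w y) ^ 2
          + k₀ * (wx y - ℓ * φ y) ^ 2))
    {φ φx φt φxx φxt φtt ψ ψx ψt ψxx ψxt ψtt w wx wt wxx wxt wtt : ℝ → ℝ → ℝ}
    (hφ : D2 φ φx φt φxx φxt φtt) (hψ : D2 ψ ψx ψt ψxx ψxt ψtt) (hw : D2 w wx wt wxx wxt wtt)
    (hbd : ∀ t ∈ Set.Icc (0:ℝ) T,
      φ 0 t = 0 ∧ φ L t = 0 ∧ ψ 0 t = 0 ∧ ψ L t = 0 ∧ w 0 t = 0 ∧ w L t = 0) :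
    ∀ t ∈ Set.Icc (0:ℝ) T, ∀ x ∈ Set.Icc (0:ℝ) L, φ x t ^ 2 + ψ x t ^ 2 + w x t ^ 2 ≤
      C * HnormSq ρ₁ ρ₂ b k k₀ ℓ L φ ψ w t := by
  intro t ht x hx
  obtain ⟨z1, -, z2, -, z3, -⟩ := hbd t ht
  have h1 := c_slice hφ.cu t
  have h2 := c_slice hφ.cx t
  have h3 := c_slice hφ.ct t
  have h4 := c_slice hψ.cu t
  have h5 := c_slice hψ.cx t
  have h6 := c_slice hψ.ct t
  have h7 := c_slice hw.cu t
  have h8 := c_slice hw.cx t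
  have h9 := c_slice hw.ct t
  refine (hsup (fun y => φ y t) (fun y => ψ y t) (fun y => w y t) (fun y => φx y t)
    (fun y => ψx y t) (fun y => wx y t) h2 h5 h8 (fun y => hφ.hx y t) (fun y => hψ.hx y t)
    (fun y => hw.hx y t) z1 z2 z3 x hx).trans ?_
  rw [Hn_eq ρ₁ ρ₂ b k k₀ ℓ L hφ hψ hw]
  refine mul_le_mul_of_nonneg_left ?_ hC.le
  refine intervalIntegral.integral_mono_on hL.le (Continuous.intervalIntegrable (by fun_prop) _ _)
    (Continuous.intervalIntegrable (by unfold enD; fun_prop) _ _) fun y _ => ?_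
  unfold enD
  have : 0 ≤ ρ₁ * φt y t ^ 2 + ρ₂ * ψt y t ^ 2 + ρ₁ * wt y t ^ 2 := by positivity
  linarith

lemma pde_conv {ρ₁ ρ₂ k k₀ b ℓ : ℝ} {a₁ a₂ a₃ g₁ g₂ g₃ : ℝ → ℝ} {f₁ f₂ f₃ : ℝ → ℝ → ℝ → ℝ}
    {φ φx φt φxx φxt φtt ψ ψx ψt ψxx ψxt ψtt w wx wt wxx wxt wtt : ℝ → ℝ → ℝ}
    (hφ : D2 φ φx φt φxx φxt φtt) (hψ : D2 ψ ψx ψt ψxx ψxt ψtt) (hw : D2 w wx wt wxx wxt wtt)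
    {x t : ℝ} :
    ((ρ₁ * deriv (deriv (fun s => φ x s)) t
      - k * deriv (fun y => deriv (fun y' => φ y' t) y + ψ y t + ℓ * w y t) x
      - k₀ * ℓ * (deriv (fun y => w y t) x - ℓ * φ x t)
      + a₁ x * g₁ (deriv (fun s => φ x s) t)
      + f₁ (φ x t) (ψ x t) (w x t) = 0) ∧
    (ρ₂ * deriv (deriv (fun s => ψ x s)) t
      - b * deriv (fun y => deriv (fun y' => ψ y' t) y) x
      + k * (deriv (fun y => φ y t) x + ψ x t + ℓ * w x t)
      + a₂ x * g₂ (deriv (fun s => ψ x s) t)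
      + f₂ (φ x t) (ψ x t) (w x t) = 0) ∧
    (ρ₁ * deriv (deriv (fun s => w x s)) t
      - k₀ * deriv (fun y => deriv (fun y' => w y' t) y - ℓ * φ y t) x
      + k * ℓ * (deriv (fun y => φ y t) x + ψ x t + ℓ * w x t)
      + a₃ x * g₃ (deriv (fun s => w x s) t)
      + f₃ (φ x t) (ψ x t) (w x t) = 0)) ↔
    ((ρ₁ * φtt x t - k * (φxx x t + ψx x t + ℓ * wx x t) - k₀ * ℓ * (wx x t - ℓ * φ x t)
      + a₁ x * g₁ (φt x t) + f₁ (φ x t) (ψ x t) (w x t) = 0) ∧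
    (ρ₂ * ψtt x t - b * ψxx x t + k * (φx x t + ψ x t + ℓ * w x t)
      + a₂ x * g₂ (ψt x t) + f₂ (φ x t) (ψ x t) (w x t) = 0) ∧
    (ρ₁ * wtt x t - k₀ * (wxx x t - ℓ * φx x t) + k * ℓ * (φx x t + ψ x t + ℓ * w x t)
      + a₃ x * g₃ (wt x t) + f₃ (φ x t) (ψ x t) (w x t) = 0)) := by
  have s1 : deriv (fun s => φ x s) = fun s => φt x s := funext fun s => (hφ.ht x s).deriv
  have s2 : deriv (fun s => ψ x s) = fun s => ψt x s := funext fun s => (hψ.ht x s).deriv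
  have s3 : deriv (fun s => w x s) = fun s => wt x s := funext fun s => (hw.ht x s).deriv
  have x1 : ∀ y, deriv (fun y' => φ y' t) y = φx y t := fun y => (hφ.hx y t).deriv
  have x2 : ∀ y, deriv (fun y' => ψ y' t) y = ψx y t := fun y => (hψ.hx y t).deriv
  have x3 : ∀ y, deriv (fun y' => w y' t) y = wx y t := fun y => (hw.hx y t).deriv
  have y1 : deriv (fun y => φx y t + ψ y t + ℓ * w y t) x = φxx x t + ψx x t + ℓ * wx x t :=
    (((hφ.hxx x t).add (hψ.hx x t)).add ((hw.hx x t).const_mul ℓ)).deriv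
  have y2 : deriv (fun y => ψx y t) x = ψxx x t := (hψ.hxx x t).deriv
  have y3 : deriv (fun y => wx y t - ℓ * φ y t) x = wxx x t - ℓ * φx x t :=
    ((hw.hxx x t).sub ((hφ.hx x t).const_mul ℓ)).deriv
  simp only [s1, s2, s3, x1, x2, x3, y1, y2, y3, (hφ.htt x t).deriv, (hψ.htt x t).deriv,
    (hw.htt x t).deriv]

/-- Locally Lipschitz dependence on initial data. Assume
`f₁,f₂,f₃ ∈ C¹(ℝ³)` with `|∇fᵢ(u,v,w)| ≤ c_f(1+|u|^{p−1}+|v|^{p−1}+|w|^{p−1})`,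
`c_f > 0`, `p ≥ 1`; `g₁,g₂,g₃ ∈ C¹(ℝ)` monotone increasing with `gᵢ(0) = 0` and
`m ≤ gᵢ' ≤ M`, `0 < m ≤ M`; `a₁,a₂,a₃ ∈ L^∞(0,L)` nonnegative. Let `R > 0`. Then
there exist `C_R, K_R > 0`, depending only on `R` and the data, such that any two
`C²` classical solutions `Z¹, Z²` of the Bresse system on `[0,L]×[0,T]` with
`∥Zⁱ(t)∥_H ≤ R` on `[0,T]` satisfy
`∥Z¹(t) − Z²(t)∥²_H ≤ C_R e^{K_R t} ∥Z¹(0) − Z²(0)∥²_H` for all `t ∈ [0,T]`. -/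
theorem stmt_16 (ρ₁ ρ₂ k k₀ b ℓ L T : ℝ)
    (hρ₁ : 0 < ρ₁) (hρ₂ : 0 < ρ₂) (hk : 0 < k) (hk₀ : 0 < k₀) (hb : 0 < b)
    (hℓ : 0 < ℓ) (hL : 0 < L) (hT : 0 < T)
    (f₁ f₂ f₃ : ℝ → ℝ → ℝ → ℝ) (c_f pexp : ℝ) (hcf : 0 < c_f) (hp : 1 ≤ pexp)
    (hf₁ : ContDiff ℝ 1 (fun z : ℝ × ℝ × ℝ => f₁ z.1 z.2.1 z.2.2))
    (hf₂ : ContDiff ℝ 1 (fun z : ℝ × ℝ × ℝ => f₂ z.1 z.2.1 z.2.2))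
    (hf₃ : ContDiff ℝ 1 (fun z : ℝ × ℝ × ℝ => f₃ z.1 z.2.1 z.2.2))
    (hdf₁ : ∀ z : ℝ × ℝ × ℝ, ‖fderiv ℝ (fun q : ℝ × ℝ × ℝ => f₁ q.1 q.2.1 q.2.2) z‖
      ≤ c_f * (1 + |z.1| ^ (pexp - 1) + |z.2.1| ^ (pexp - 1) + |z.2.2| ^ (pexp - 1)))
    (hdf₂ : ∀ z : ℝ × ℝ × ℝ, ‖fderiv ℝ (fun q : ℝ × ℝ × ℝ => f₂ q.1 q.2.1 q.2.2) z‖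
      ≤ c_f * (1 + |z.1| ^ (pexp - 1) + |z.2.1| ^ (pexp - 1) + |z.2.2| ^ (pexp - 1)))
    (hdf₃ : ∀ z : ℝ × ℝ × ℝ, ‖fderiv ℝ (fun q : ℝ × ℝ × ℝ => f₃ q.1 q.2.1 q.2.2) z‖
      ≤ c_f * (1 + |z.1| ^ (pexp - 1) + |z.2.1| ^ (pexp - 1) + |z.2.2| ^ (pexp - 1)))
    (g₁ g₂ g₃ : ℝ → ℝ) (m M : ℝ) (hm : 0 < m) (hmM : m ≤ M)
    (hg₁ : ContDiff ℝ 1 g₁ ∧ Monotone g₁ ∧ g₁ 0 = 0 ∧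
      ∀ s, m ≤ deriv g₁ s ∧ deriv g₁ s ≤ M)
    (hg₂ : ContDiff ℝ 1 g₂ ∧ Monotone g₂ ∧ g₂ 0 = 0 ∧
      ∀ s, m ≤ deriv g₂ s ∧ deriv g₂ s ≤ M)
    (hg₃ : ContDiff ℝ 1 g₃ ∧ Monotone g₃ ∧ g₃ 0 = 0 ∧
      ∀ s, m ≤ deriv g₃ s ∧ deriv g₃ s ≤ M)
    (a₁ a₂ a₃ : ℝ → ℝ)
    (ha₁ : Measurable a₁ ∧ (∀ x, 0 ≤ a₁ x) ∧ ∃ A, ∀ x, a₁ x ≤ A)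
    (ha₂ : Measurable a₂ ∧ (∀ x, 0 ≤ a₂ x) ∧ ∃ A, ∀ x, a₂ x ≤ A)
    (ha₃ : Measurable a₃ ∧ (∀ x, 0 ≤ a₃ x) ∧ ∃ A, ∀ x, a₃ x ≤ A)
    (R : ℝ) (hR : 0 < R) :
    ∃ C_R K_R : ℝ, 0 < C_R ∧ 0 < K_R ∧
      ∀ φ₁' ψ₁' w₁' φ₂' ψ₂' w₂' : ℝ → ℝ → ℝ,
        IsBresseSolution 2 ρ₁ ρ₂ k k₀ b ℓ L T a₁ a₂ a₃ g₁ g₂ g₃ f₁ f₂ f₃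
          φ₁' ψ₁' w₁' →
        IsBresseSolution 2 ρ₁ ρ₂ k k₀ b ℓ L T a₁ a₂ a₃ g₁ g₂ g₃ f₁ f₂ f₃
          φ₂' ψ₂' w₂' →
        (∀ t ∈ Set.Icc (0:ℝ) T,
          Real.sqrt (HnormSq ρ₁ ρ₂ b k k₀ ℓ L φ₁' ψ₁' w₁' t) ≤ R) →
        (∀ t ∈ Set.Icc (0:ℝ) T,
          Real.sqrt (HnormSq ρ₁ ρ₂ b k k₀ ℓ L φ₂' ψ₂' w₂' t) ≤ R) →
        ∀ t ∈ Set.Icc (0:ℝ) T,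
          HnormSq ρ₁ ρ₂ b k k₀ ℓ L
              (fun x s => φ₁' x s - φ₂' x s)
              (fun x s => ψ₁' x s - ψ₂' x s)
              (fun x s => w₁' x s - w₂' x s) t
            ≤ C_R * Real.exp (K_R * t) *
              HnormSq ρ₁ ρ₂ b k k₀ ℓ L
                (fun x s => φ₁' x s - φ₂' x s)
                (fun x s => ψ₁' x s - ψ₂' x s)
                (fun x s => w₁' x s - w₂' x s) 0 := by
  obtain ⟨C, hC, hsup⟩ := sup_bound k k₀ b ℓ L hk hk₀ hb hL
  set r := Real.sqrt (C * R ^ 2) with hr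
  obtain ⟨Λ₁, hΛ₁, hl₁⟩ := lip_bound f₁ hf₁ r
  obtain ⟨Λ₂, hΛ₂, hl₂⟩ := lip_bound f₂ hf₂ r
  obtain ⟨Λ₃, hΛ₃, hl₃⟩ := lip_bound f₃ hf₃ r
  set Λ := Λ₁ + Λ₂ + Λ₃ with hΛ
  have hΛ0 : 0 ≤ Λ := by positivity
  set c := 1 / ρ₁ + 1 / ρ₂ with hc
  have hc0 : 0 < c := by positivity
  refine ⟨1, Λ * C * L + c, one_pos, by positivity, ?_⟩
  intro φ₁ ψ₁ w₁ φ₂ ψ₂ w₂ hs₁ hs₂ hR₁ hR₂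
  obtain ⟨cφ₁, cψ₁, cw₁, bd₁, pde₁⟩ := hs₁
  obtain ⟨cφ₂, cψ₂, cw₂, bd₂, pde₂⟩ := hs₂
  obtain ⟨φ₁x, φ₁t, φ₁xx, φ₁xt, φ₁tt, dφ₁⟩ := D2.exists φ₁ (by exact_mod_cast cφ₁)
  obtain ⟨ψ₁x, ψ₁t, ψ₁xx, ψ₁xt, ψ₁tt, dψ₁⟩ := D2.exists ψ₁ (by exact_mod_cast cψ₁)
  obtain ⟨w₁x, w₁t, w₁xx, w₁xt, w₁tt, dw₁⟩ := D2.exists w₁ (by exact_mod_cast cw₁)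
  obtain ⟨φ₂x, φ₂t, φ₂xx, φ₂xt, φ₂tt, dφ₂⟩ := D2.exists φ₂ (by exact_mod_cast cφ₂)
  obtain ⟨ψ₂x, ψ₂t, ψ₂xx, ψ₂xt, ψ₂tt, dψ₂⟩ := D2.exists ψ₂ (by exact_mod_cast cψ₂)
  obtain ⟨w₂x, w₂t, w₂xx, w₂xt, w₂tt, dw₂⟩ := D2.exists w₂ (by exact_mod_cast cw₂)
  have dφ := dφ₁.sub dφ₂
  have dψ := dψ₁.sub dψ₂
  have dw := dw₁.sub dw₂
  have q₁ := sup_H ρ₁ ρ₂ b k k₀ ℓ L T C hρ₁ hρ₂ hL hC hsup dφ₁ dψ₁ dw₁ bd₁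
  have q₂ := sup_H ρ₁ ρ₂ b k k₀ ℓ L T C hρ₁ hρ₂ hL hC hsup dφ₂ dψ₂ dw₂ bd₂
  have bd : ∀ t ∈ Set.Icc (0:ℝ) T,
      φ₁ 0 t - φ₂ 0 t = 0 ∧ φ₁ L t - φ₂ L t = 0 ∧ ψ₁ 0 t - ψ₂ 0 t = 0 ∧ ψ₁ L t - ψ₂ L t = 0 ∧
      w₁ 0 t - w₂ 0 t = 0 ∧ w₁ L t - w₂ L t = 0 := by
    intro t ht
    obtain ⟨h1, h2, h3, h4, h5, h6⟩ := bd₁ t ht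
    obtain ⟨h1', h2', h3', h4', h5', h6'⟩ := bd₂ t ht
    simp [h1, h2, h3, h4, h5, h6, h1', h2', h3', h4', h5', h6']
  have q := sup_H ρ₁ ρ₂ b k k₀ ℓ L T C hρ₁ hρ₂ hL hC hsup dφ dψ dw bd
  have hbox : ∀ u v z H : ℝ, Real.sqrt H ≤ R → u ^ 2 + v ^ 2 + z ^ 2 ≤ C * H →
      |u| ≤ r ∧ |v| ≤ r ∧ |z| ≤ r := by
    intro u v z H h1 h2
    have h3 : H ≤ R ^ 2 := (Real.sqrt_le_left hR.le).1 h1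
    have h4 := mul_le_mul_of_nonneg_left h3 hC.le
    refine ⟨Real.abs_le_sqrt ?_, Real.abs_le_sqrt ?_, Real.abs_le_sqrt ?_⟩ <;>
      nlinarith [sq_nonneg u, sq_nonneg v, sq_nonneg z]
  simp only [Hn_eq ρ₁ ρ₂ b k k₀ ℓ L dφ dψ dw, one_mul] at q ⊢
  refine gron ρ₁ ρ₂ b k k₀ ℓ L T (Λ * C) c hL dφ dψ dw bd ?_
  intro t ht x hx
  have ht' : t ∈ Set.Icc 0 T := ⟨ht.1.le, ht.2.le⟩
  obtain ⟨b1, b2, b3⟩ := hbox _ _ _ _ (hR₁ t ht') (q₁ t ht' x hx)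
  obtain ⟨b1', b2', b3'⟩ := hbox _ _ _ _ (hR₂ t ht') (q₂ t ht' x hx)
  have L1 := hl₁ _ _ _ _ _ _ b1 b2 b3 b1' b2' b3'
  have L2 := hl₂ _ _ _ _ _ _ b1 b2 b3 b1' b2' b3'
  have L3 := hl₃ _ _ _ _ _ _ b1 b2 b3 b1' b2' b3'
  have hq := q t ht' x hx
  have P₁ := pde₁ x hx t ht'
  have P₂ := pde₂ x hx t ht'
  rw [pde_conv dφ₁ dψ₁ dw₁] at P₁
  rw [pde_conv dφ₂ dψ₂ dw₂] at P₂
  have hqΛ := mul_le_mul_of_nonneg_left hq hΛ0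
  refine (pde_alg (G1 := g₁ (φ₁t x t) - g₁ (φ₂t x t)) (G2 := g₂ (ψ₁t x t) - g₂ (ψ₂t x t))
    (G3 := g₃ (w₁t x t) - g₃ (w₂t x t))
    (F1 := f₁ (φ₁ x t) (ψ₁ x t) (w₁ x t) - f₁ (φ₂ x t) (ψ₂ x t) (w₂ x t))
    (F2 := f₂ (φ₁ x t) (ψ₁ x t) (w₁ x t) - f₂ (φ₂ x t) (ψ₂ x t) (w₂ x t))
    (F3 := f₃ (φ₁ x t) (ψ₁ x t) (w₁ x t) - f₃ (φ₂ x t) (ψ₂ x t) (w₂ x t))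
    (by linarith [P₁.1, P₂.1]) (by linarith [P₁.2.1, P₂.2.1]) (by linarith [P₁.2.2, P₂.2.2])
    (ha₁.2.1 x) (ha₂.2.1 x) (ha₃.2.1 x) (mono_mul hg₁.2.1 _ _) (mono_mul hg₂.2.1 _ _)
    (mono_mul hg₃.2.1 _ _) (le_trans ?_ hqΛ)).trans ?_
  · rw [hΛ]
    linarith
  · rw [mul_assoc]
    refine add_le_add le_rfl ?_
    simp only [enD]
    exact en_ge ρ₁ ρ₂ _ _ _ _ hρ₁ hρ₂ (by positivity)
end

section
/- (Boundedness of the stationary set.) Let L, ℓ, k, k₀, b > 0 and let β > 0 be a constant such that ∫₀^L(|φ_x|²+|ψ_x|²+|w_x|²)dx ≤ β[b∥ψ_x∥² + k∥φ_x+ψ+ℓw∥² + k₀∥w_x−ℓφ∥²] for all C¹ triples (φ,ψ,w) vanishing at x = 0 and x = L. Assume f₁,f₂,f₃ ∈ C¹(ℝ³) admit F ∈ C¹(ℝ³) with ∇F = (f₁,f₂,f₃) satisfying ∇F(u,v,w)·(u,v,w) ≥ F(u,v,w) − α(|u|²+|v|²+|w|²) − c_F and F(u,v,w) ≥ −α(|u|²+|v|²+|w|²)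 − c_F for all u,v,w, with 0 ≤ α < π²/(2βL²) and c_F > 0. Then every C² solution (φ,ψ,w) on [0,L] of the stationary Bresse system −k(φ_x+ψ+ℓw)_x − k₀ℓ(w_x−ℓφ) + f₁(φ,ψ,w) = 0, −bψ_xx + k(φ_x+ψ+ℓw) + f₂(φ,ψ,w) = 0, −k₀(w_x−ℓφ)_x + kℓ(φ_x+ψ+ℓw) + f₃(φ,ψ,w) = 0, with φ = ψ = w = 0 at x = 0 and x = L, satisfies [1 − 2αβL²/π²] (∥φ_x∥² + ∥ψ_x∥² + ∥w_x∥²) ≤ 2βc_F L. -/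
open MeasureTheory


lemma poincare_aux (L c : ℝ) (hL : 0 < L) (hc : 0 < c) (hcL : c * L < Real.pi) (u : ℝ → ℝ)
    (hu : ContDiff ℝ 1 u) (h0 : u 0 = 0) (h1 : u L = 0) :
    c ^ 2 * (∫ x in (0:ℝ)..L, (u x) ^ 2) ≤ ∫ x in (0:ℝ)..L, (deriv u x) ^ 2 := by
  have hd : ∀ x, HasDerivAt u (deriv u x) x := fun x =>
    (hu.differentiable (by norm_num) x).hasDerivAt
  have hcu : Continuous u := hu.continuous
  have hcd : Continuous (deriv u) := hu.continuous_deriv (by norm_num)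
  have hcos : ∀ x ∈ Set.uIcc 0 L, Real.cos (c * (x - L / 2)) ≠ 0 := by
    intro x hx
    rw [Set.uIcc_of_le hL.le] at hx
    refine (Real.cos_pos_of_mem_Ioo ⟨?_, ?_⟩).ne'
    · nlinarith [hx.1, hx.2]
    · nlinarith [hx.1, hx.2]
  have htan : ContinuousOn (fun x => Real.tan (c * (x - L / 2))) (Set.uIcc 0 L) := by
    have : (fun x => Real.tan (c * (x - L / 2))) =
        fun x => Real.sin (c * (x - L / 2)) / Real.cos (c * (x - L / 2)) := by
      funext x; rw [Real.tan_eq_sin_div_cos]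
    rw [this]
    exact ContinuousOn.div (by fun_prop) (by fun_prop) hcos
  have key : ∫ x in (0:ℝ)..L, ((deriv u x + c * Real.tan (c * (x - L / 2)) * u x) ^ 2
      - ((deriv u x) ^ 2 - c ^ 2 * (u x) ^ 2)) = 0 := by
    have := intervalIntegral.integral_eq_sub_of_hasDerivAt (a := 0) (b := L)
      (f := fun x => c * Real.tan (c * (x - L / 2)) * (u x) ^ 2)
      (f' := fun x => ((deriv u x + c * Real.tan (c * (x - L / 2)) * u x) ^ 2
      - ((deriv u x) ^ 2 - c ^ 2 * (u x) ^ 2))) ?_ ?_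
    · rw [this]; simp [h0, h1]
    · intro x hx
      have h2 : HasDerivAt (fun x : ℝ => c * (x - L / 2)) c x := by
        simpa using ((hasDerivAt_id x).sub_const (L / 2)).const_mul c
      have h3 := (Real.hasDerivAt_tan (hcos x hx)).comp x h2
      have h4 := (h3.const_mul c).mul ((hd x).pow 2)
      refine h4.congr_deriv ?_
      have h5 : 1 / Real.cos (c * (x - L / 2)) ^ 2 = 1 + Real.tan (c * (x - L / 2)) ^ 2 := by
        rw [Real.tan_eq_sin_div_cos]
        have h6 := hcos x hx
        have h7 := Real.sin_sq_add_cos_sq (c * (x - L / 2))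
        generalize c * (x - L / 2) = y at *
        field_simp
        linarith
      simp only [h5, Function.comp, Pi.pow_apply]
      push_cast
      ring
    · apply ContinuousOn.intervalIntegrable
      have := hcu.continuousOn (s := Set.uIcc 0 L)
      have := hcd.continuousOn (s := Set.uIcc 0 L)
      fun_prop
  have hi1 : IntervalIntegrable
      (fun x => (deriv u x + c * Real.tan (c * (x - L / 2)) * u x) ^ 2) volume 0 L := by
    apply ContinuousOn.intervalIntegrable
    have := hcu.continuousOn (s := Set.uIcc 0 L)
    have := hcd.continuousOn (s := Set.uIcc 0 L)
    fun_prop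
  have hi2 : IntervalIntegrable (fun x => (deriv u x) ^ 2) volume 0 L :=
    (by fun_prop : Continuous fun x => (deriv u x) ^ 2).intervalIntegrable _ _
  have hi3 : IntervalIntegrable (fun x => c ^ 2 * (u x) ^ 2) volume 0 L :=
    (by fun_prop : Continuous fun x => c ^ 2 * (u x) ^ 2).intervalIntegrable _ _
  rw [intervalIntegral.integral_sub hi1 (hi2.sub hi3), intervalIntegral.integral_sub hi2 hi3,
    intervalIntegral.integral_const_mul] at key
  have := intervalIntegral.integral_nonneg (μ := volume) hL.le
    (fun x _ => sq_nonneg (deriv u x + c * Real.tan (c * (x - L / 2)) * u x))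
  linarith

lemma poincare (L : ℝ) (hL : 0 < L) (u : ℝ → ℝ)
    (hu : ContDiff ℝ 1 u) (h0 : u 0 = 0) (h1 : u L = 0) :
    (∫ x in (0:ℝ)..L, (u x) ^ 2) ≤ L ^ 2 / Real.pi ^ 2 * ∫ x in (0:ℝ)..L, (deriv u x) ^ 2 := by
  have hpi := Real.pi_pos
  have hpos : 0 < Real.pi / L := by positivity
  have h : (Real.pi / L) ^ 2 * (∫ x in (0:ℝ)..L, (u x) ^ 2)
      ≤ ∫ x in (0:ℝ)..L, (deriv u x) ^ 2 := by
    have ht : Filter.Tendsto (fun c : ℝ => c ^ 2 * (∫ x in (0:ℝ)..L, (u x) ^ 2))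
        (nhdsWithin (Real.pi / L) (Set.Iio (Real.pi / L)))
        (nhds ((Real.pi / L) ^ 2 * (∫ x in (0:ℝ)..L, (u x) ^ 2))) :=
      ((by fun_prop : Continuous fun c : ℝ =>
        c ^ 2 * (∫ x in (0:ℝ)..L, (u x) ^ 2)).tendsto _).mono_left nhdsWithin_le_nhds
    refine le_of_tendsto ht ?_
    filter_upwards [Ioo_mem_nhdsLT hpos] with c hc
    exact poincare_aux L c hL hc.1 ((lt_div_iff₀ hL).1 hc.2) u hu h0 h1
  calc (∫ x in (0:ℝ)..L, (u x) ^ 2)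
      = L ^ 2 / Real.pi ^ 2 * ((Real.pi / L) ^ 2 * (∫ x in (0:ℝ)..L, (u x) ^ 2)) := by
        field_simp
    _ ≤ _ := by gcongr

/-- Boundedness of the stationary set. Let `L, ℓ, k, k₀, b > 0` and
let `β > 0` satisfy the Bresse–Poincaré inequality for all `C¹` triples vanishing
at `0` and `L`. Assume `f₁,f₂,f₃ ∈ C¹(ℝ³)` admit `F ∈ C¹(ℝ³)` with
`∇F = (f₁,f₂,f₃)` satisfying
`∇F(u,v,w)·(u,v,w) ≥ F(u,v,w) − α(|u|²+|v|²+|w|²) − c_F` and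
`F(u,v,w) ≥ −α(|u|²+|v|²+|w|²) − c_F`, with `0 ≤ α < π²/(2βL²)`, `c_F > 0`. Then
every `C²` solution `(φ,ψ,w)` of the stationary Bresse system with Dirichlet
boundary conditions satisfies
`[1 − 2αβL²/π²](∥φ_x∥² + ∥ψ_x∥² + ∥w_x∥²) ≤ 2βc_F L`. -/
theorem stmt_18 (ρ₁ ρ₂ k k₀ b ℓ L β α c_F : ℝ)
    (hρ₁ : 0 < ρ₁) (hρ₂ : 0 < ρ₂) (hk : 0 < k) (hk₀ : 0 < k₀) (hb : 0 < b)
    (hℓ : 0 < ℓ) (hL : 0 < L) (hβ : 0 < β)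
    (hβ' : ∀ φ ψ w : ℝ → ℝ, ContDiff ℝ 1 φ → ContDiff ℝ 1 ψ → ContDiff ℝ 1 w →
      φ 0 = 0 → φ L = 0 → ψ 0 = 0 → ψ L = 0 → w 0 = 0 → w L = 0 →
      (∫ x in (0:ℝ)..L, ((deriv φ x) ^ 2 + (deriv ψ x) ^ 2 + (deriv w x) ^ 2))
        ≤ β * (b * (∫ x in (0:ℝ)..L, (deriv ψ x) ^ 2)
          + k * (∫ x in (0:ℝ)..L, (deriv φ x + ψ x + ℓ * w x) ^ 2)
          + k₀ * (∫ x in (0:ℝ)..L, (deriv w x - ℓ * φ x) ^ 2)))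
    (hα : 0 ≤ α) (hα' : α < Real.pi ^ 2 / (2 * β * L ^ 2)) (hcF : 0 < c_F)
    (f₁ f₂ f₃ : ℝ → ℝ → ℝ → ℝ) (F : ℝ → ℝ → ℝ → ℝ)
    (hf₁ : Continuous fun z : ℝ × ℝ × ℝ => f₁ z.1 z.2.1 z.2.2)
    (hf₂ : Continuous fun z : ℝ × ℝ × ℝ => f₂ z.1 z.2.1 z.2.2)
    (hf₃ : Continuous fun z : ℝ × ℝ × ℝ => f₃ z.1 z.2.1 z.2.2)
    (hgrad : ∀ u v w' : ℝ,
      HasDerivAt (fun s => F s v w') (f₁ u v w') u ∧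
      HasDerivAt (fun s => F u s w') (f₂ u v w') v ∧
      HasDerivAt (fun s => F u v s) (f₃ u v w') w')
    (hFdissip : ∀ u v w' : ℝ,
      f₁ u v w' * u + f₂ u v w' * v + f₃ u v w' * w'
        ≥ F u v w' - α * (|u| ^ 2 + |v| ^ 2 + |w'| ^ 2) - c_F)
    (hFlow : ∀ u v w' : ℝ,
      F u v w' ≥ -α * (|u| ^ 2 + |v| ^ 2 + |w'| ^ 2) - c_F) :
    ∀ φ ψ w : ℝ → ℝ, ContDiff ℝ 2 φ → ContDiff ℝ 2 ψ → ContDiff ℝ 2 w →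
      φ 0 = 0 → φ L = 0 → ψ 0 = 0 → ψ L = 0 → w 0 = 0 → w L = 0 →
      (∀ x ∈ Set.Icc (0:ℝ) L,
        (-(k * deriv (fun y => deriv φ y + ψ y + ℓ * w y) x)
          - k₀ * ℓ * (deriv w x - ℓ * φ x) + f₁ (φ x) (ψ x) (w x) = 0) ∧
        (-(b * deriv (deriv ψ) x) + k * (deriv φ x + ψ x + ℓ * w x)
          + f₂ (φ x) (ψ x) (w x) = 0) ∧
        (-(k₀ * deriv (fun y => deriv w y - ℓ * φ y) x)
          + k * ℓ * (deriv φ x + ψ x + ℓ * w x) + f₃ (φ x) (ψ x) (w x) = 0)) →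
      (1 - 2 * α * β * L ^ 2 / Real.pi ^ 2) *
          ((∫ x in (0:ℝ)..L, (deriv φ x) ^ 2) + (∫ x in (0:ℝ)..L, (deriv ψ x) ^ 2)
            + (∫ x in (0:ℝ)..L, (deriv w x) ^ 2))
        ≤ 2 * β * c_F * L := by
  intro φ ψ w hφ hψ hw hφ0 hφL hψ0 hψL hw0 hwL hsol
  have hφ1 : ContDiff ℝ 1 φ := hφ.of_le (by norm_num)
  have hψ1 : ContDiff ℝ 1 ψ := hψ.of_le (by norm_num)
  have hw1 : ContDiff ℝ 1 w := hw.of_le (by norm_num)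
  have hB := hβ' φ ψ w hφ1 hψ1 hw1 hφ0 hφL hψ0 hψL hw0 hwL
  have p1 := poincare L hL φ hφ1 hφ0 hφL
  have p2 := poincare L hL ψ hψ1 hψ0 hψL
  have p3 := poincare L hL w hw1 hw0 hwL
  have hφ' : ContDiff ℝ 1 (deriv φ) := (contDiff_succ_iff_deriv.1 (show ContDiff ℝ (1+1) φ by
    convert hφ using 1; norm_num)).2.2
  have hψ' : ContDiff ℝ 1 (deriv ψ) := (contDiff_succ_iff_deriv.1 (show ContDiff ℝ (1+1) ψ by
    convert hψ using 1; norm_num)).2.2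
  have hw' : ContDiff ℝ 1 (deriv w) := (contDiff_succ_iff_deriv.1 (show ContDiff ℝ (1+1) w by
    convert hw using 1; norm_num)).2.2
  have hS : ContDiff ℝ 1 (fun y => deriv φ y + ψ y + ℓ * w y) :=
    (hφ'.add hψ1).add (contDiff_const.mul hw1)
  have hT : ContDiff ℝ 1 (fun y => deriv w y - ℓ * φ y) := hw'.sub (contDiff_const.mul hφ1)
  set S := fun y => deriv φ y + ψ y + ℓ * w y with hSdef
  set T := fun y => deriv w y - ℓ * φ y with hTdef
  have D : ∀ {u : ℝ → ℝ}, ContDiff ℝ 1 u → ∀ x, HasDerivAt u (deriv u x) x := fun hu x =>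
    (hu.differentiable (by norm_num) x).hasDerivAt
  have C : ∀ {u : ℝ → ℝ}, ContDiff ℝ 1 u → Continuous (deriv u) := fun hu =>
    hu.continuous_deriv (by norm_num)
  have cφ := hφ1.continuous
  have cψ := hψ1.continuous
  have cw := hw1.continuous
  have cφ' := hφ'.continuous
  have cψ' := hψ'.continuous
  have cw' := hw'.continuous
  have cψ'' := C hψ'
  have cS := hS.continuous
  have cT := hT.continuous
  have cS' := C hS
  have cT' := C hT
  let G' : ℝ → ℝ := fun x => k * (deriv S x * φ x + S x * deriv φ x)
    + b * (deriv (deriv ψ) x * ψ x + deriv ψ x * deriv ψ x)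
    + k₀ * (deriv T x * w x + T x * deriv w x)
  have cG' : Continuous G' := by fun_prop
  have hG : ∫ x in (0:ℝ)..L, G' x = 0 := by
    rw [intervalIntegral.integral_eq_sub_of_hasDerivAt (a := 0) (b := L)
      (f := fun x => k * (S x * φ x) + b * (deriv ψ x * ψ x) + k₀ * (T x * w x))
      (f' := G') ?_ (cG'.intervalIntegrable _ _)]
    · simp [hφ0, hφL, hψ0, hψL, hw0, hwL]
    · intro x _
      exact (((((D hS x).mul (D hφ1 x)).const_mul k).add
        (((D hψ' x).mul (D hψ1 x)).const_mul b)).add (((D hT x).mul (D hw1 x)).const_mul k₀))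
  have I : ∀ {u : ℝ → ℝ}, Continuous u → IntervalIntegrable u volume 0 L := fun hu =>
    hu.intervalIntegrable _ _
  have hmono : ∫ x in (0:ℝ)..L, (b * (deriv ψ x) ^ 2 + k * (S x) ^ 2 + k₀ * (T x) ^ 2)
      ≤ ∫ x in (0:ℝ)..L, (G' x + 2 * α * ((φ x) ^ 2 + (ψ x) ^ 2 + (w x) ^ 2) + 2 * c_F) := by
    apply intervalIntegral.integral_mono_on hL.le (I (by fun_prop)) (I (by fun_prop))
    intro x hx
    obtain ⟨e1, e2, e3⟩ := hsol x hx
    have d1 := hFdissip (φ x) (ψ x) (w x)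
    have d2 := hFlow (φ x) (ψ x) (w x)
    simp only [sq_abs] at d1 d2
    have hSx : S x = deriv φ x + ψ x + ℓ * w x := rfl
    have hTx : T x = deriv w x - ℓ * φ x := rfl
    rw [← hTx] at e1
    rw [← hSx] at e2 e3
    have hid : b * (deriv ψ x) ^ 2 + k * (S x) ^ 2 + k₀ * (T x) ^ 2 = G' x -
        (f₁ (φ x) (ψ x) (w x) * φ x + f₂ (φ x) (ψ x) (w x) * ψ x
          + f₃ (φ x) (ψ x) (w x) * w x) := by
      have a1 : deriv φ x = S x - ψ x - ℓ * w x := by rw [hSx]; ring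
      have a2 : deriv w x = T x + ℓ * φ x := by rw [hTx]; ring
      simp only [G']
      rw [a1, a2]
      linear_combination e1 * φ x + e2 * ψ x + e3 * w x
    rw [hid]
    linarith
  have i1 := I (u := fun x => (φ x) ^ 2) (by fun_prop)
  have i2 := I (u := fun x => (ψ x) ^ 2) (by fun_prop)
  have i3 := I (u := fun x => (w x) ^ 2) (by fun_prop)
  have j1 := I (u := fun x => (deriv φ x) ^ 2) (by fun_prop)
  have j2 := I (u := fun x => (deriv ψ x) ^ 2) (by fun_prop)
  have j3 := I (u := fun x => (deriv w x) ^ 2) (by fun_prop)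
  have m2 := I (u := fun x => (S x) ^ 2) (by fun_prop)
  have m3 := I (u := fun x => (T x) ^ 2) (by fun_prop)
  rw [intervalIntegral.integral_add ((j2.const_mul b).add (m2.const_mul k)) (m3.const_mul k₀),
    intervalIntegral.integral_add (j2.const_mul b) (m2.const_mul k),
    intervalIntegral.integral_add ((I cG').add (((i1.add i2).add i3).const_mul _)) (I (by fun_prop)),
    intervalIntegral.integral_add (I cG') (((i1.add i2).add i3).const_mul _), hG,
    intervalIntegral.integral_const_mul, intervalIntegral.integral_const_mul,
    intervalIntegral.integral_const_mul, intervalIntegral.integral_const_mul,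
    intervalIntegral.integral_add (i1.add i2) i3, intervalIntegral.integral_add i1 i2,
    intervalIntegral.integral_const] at hmono
  rw [intervalIntegral.integral_add (j1.add j2) j3, intervalIntegral.integral_add j1 j2] at hB
  simp only [smul_eq_mul, sub_zero] at hmono
  have q1 := mul_le_mul_of_nonneg_left hmono hβ.le
  have q2 := mul_le_mul_of_nonneg_left (add_le_add (add_le_add p1 p2) p3)
    (by positivity : 0 ≤ 2 * α * β)
  have q3 := hB.trans q1
  generalize (∫ x in (0:ℝ)..L, (deriv φ x) ^ 2) = A1 at *
  generalize (∫ x in (0:ℝ)..L, (deriv ψ x) ^ 2) = A2 at *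
  generalize (∫ x in (0:ℝ)..L, (deriv w x) ^ 2) = A3 at *
  have e : 2 * α * β * L ^ 2 / Real.pi ^ 2 = 2 * α * β * (L ^ 2 / Real.pi ^ 2) := by ring
  rw [e]
  nlinarith [q2, q3]
end

section
/- (Quasi-stability estimate.) Assume f₁,f₂,f₃ ∈ C¹(ℝ³) with |∇f_i(u,v,w)| ≤ c_f(1+|u|^{p−1}+|v|^{p−1}+|w|^{p−1}) for some c_f > 0, p ≥ 1; g₁,g₂,g₃ ∈ C¹(ℝ) monotone increasing with g_i(0) = 0 and m ≤ g_i' ≤ M for constants 0 < m ≤ M; and a₁,a₂,a₃ ∈ L^∞(0,L) nonnegative with a_i(x) ≥ a₀ > 0 on open intervals I_i ⊂ [0,L] such that (L₁,L₂) := I₁ ∩ I₂ ∩ I₃ ≠ ∅. Let R > 0. Then there exist constants c₁ > 0 and ω > 0, depending only on R and the data, such that for any two C² classical solutions Z¹, Z² of the semilinear Bresse system with localized damping on [0,L]×[0,∞) satisfying ∥Z^i(t)∥_H ≤ R for all t ≥ 0, the differences φ̃ = φ¹−φ², ψ̃ = ψ¹−ψ², w̃ = w¹−w² satisfy for all t ≥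 0: ∥Z¹(t) − Z²(t)∥²_H ≤ c₁ e^{−ωt} ∥Z¹(0) − Z²(0)∥²_H + c₁ sup_{σ ∈ [0,t]} ( ∥φ̃(σ)∥²_{L^{2p}(0,L)} + ∥ψ̃(σ)∥²_{L^{2p}(0,L)} + ∥w̃(σ)∥²_{L^{2p}(0,L)} ). -/
open MeasureTheory

/-- `(φ,ψ,w)` is a classical solution, of class `C^N`, of the semilinear Bresse
system with localized damping on `[0,L] × [0,∞)`, with Dirichlet boundary
conditions. -/
def IsBresseSolutionInfty (N : ℕ) (ρ₁ ρ₂ k k₀ b ℓ L : ℝ)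
    (a₁ a₂ a₃ g₁ g₂ g₃ : ℝ → ℝ) (f₁ f₂ f₃ : ℝ → ℝ → ℝ → ℝ)
    (φ ψ w : ℝ → ℝ → ℝ) : Prop :=
  ContDiff ℝ N (fun z : ℝ × ℝ => φ z.1 z.2) ∧
  ContDiff ℝ N (fun z : ℝ × ℝ => ψ z.1 z.2) ∧
  ContDiff ℝ N (fun z : ℝ × ℝ => w z.1 z.2) ∧
  (∀ t ∈ Set.Ici (0:ℝ),
    φ 0 t = 0 ∧ φ L t = 0 ∧ ψ 0 t = 0 ∧ ψ L t = 0 ∧ w 0 t = 0 ∧ w L t = 0) ∧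
  (∀ x ∈ Set.Icc (0:ℝ) L, ∀ t ∈ Set.Ici (0:ℝ),
    (ρ₁ * deriv (deriv (fun s => φ x s)) t
      - k * deriv (fun y => deriv (fun y' => φ y' t) y + ψ y t + ℓ * w y t) x
      - k₀ * ℓ * (deriv (fun y => w y t) x - ℓ * φ x t)
      + a₁ x * g₁ (deriv (fun s => φ x s) t)
      + f₁ (φ x t) (ψ x t) (w x t) = 0) ∧
    (ρ₂ * deriv (deriv (fun s => ψ x s)) t
      - b * deriv (fun y => deriv (fun y' => ψ y' t) y) x
      + k * (deriv (fun y => φ y t) x + ψ x t + ℓ * w x t)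
      + a₂ x * g₂ (deriv (fun s => ψ x s) t)
      + f₂ (φ x t) (ψ x t) (w x t) = 0) ∧
    (ρ₁ * deriv (deriv (fun s => w x s)) t
      - k₀ * deriv (fun y => deriv (fun y' => w y' t) y - ℓ * φ y t) x
      + k * ℓ * (deriv (fun y => φ y t) x + ψ x t + ℓ * w x t)
      + a₃ x * g₃ (deriv (fun s => w x s) t)
      + f₃ (φ x t) (ψ x t) (w x t) = 0))

structure Parts (f fx ft fxx fxt ftt : ℝ → ℝ → ℝ) : Prop where
  c : Continuous (fun z : ℝ × ℝ => f z.1 z.2)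
  cx : Continuous (fun z : ℝ × ℝ => fx z.1 z.2)
  ct : Continuous (fun z : ℝ × ℝ => ft z.1 z.2)
  cxx : Continuous (fun z : ℝ × ℝ => fxx z.1 z.2)
  cxt : Continuous (fun z : ℝ × ℝ => fxt z.1 z.2)
  ctt : Continuous (fun z : ℝ × ℝ => ftt z.1 z.2)
  dx : ∀ x t, HasDerivAt (fun y => f y t) (fx x t) x
  dt : ∀ x t, HasDerivAt (fun s => f x s) (ft x t) t
  dxx : ∀ x t, HasDerivAt (fun y => fx y t) (fxx x t) x
  dxt : ∀ x t, HasDerivAt (fun s => fx x s) (fxt x t) t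
  dtx : ∀ x t, HasDerivAt (fun y => ft y t) (fxt x t) x
  dtt : ∀ x t, HasDerivAt (fun s => ft x s) (ftt x t) t

theorem Parts.sub {f fx ft fxx fxt ftt g gx gt gxx gxt gtt : ℝ → ℝ → ℝ}
    (hf : Parts f fx ft fxx fxt ftt) (hg : Parts g gx gt gxx gxt gtt) :
    Parts (fun x s => f x s - g x s) (fun x s => fx x s - gx x s) (fun x s => ft x s - gt x s)
      (fun x s => fxx x s - gxx x s) (fun x s => fxt x s - gxt x s)
      (fun x s => ftt x s - gtt x s) where
  c := hf.c.sub hg.c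
  cx := hf.cx.sub hg.cx
  ct := hf.ct.sub hg.ct
  cxx := hf.cxx.sub hg.cxx
  cxt := hf.cxt.sub hg.cxt
  ctt := hf.ctt.sub hg.ctt
  dx x t := (hf.dx x t).sub (hg.dx x t)
  dt x t := (hf.dt x t).sub (hg.dt x t)
  dxx x t := (hf.dxx x t).sub (hg.dxx x t)
  dxt x t := (hf.dxt x t).sub (hg.dxt x t)
  dtx x t := (hf.dtx x t).sub (hg.dtx x t)
  dtt x t := (hf.dtt x t).sub (hg.dtt x t)

theorem hasDerivAt_slice1 {F : ℝ × ℝ → ℝ} {x t : ℝ} (h : DifferentiableAt ℝ F (x, t)) :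
    HasDerivAt (fun y => F (y, t)) (fderiv ℝ F (x, t) (1, 0)) x := by
  have h1 : HasDerivAt (fun y : ℝ => (y, t)) ((1 : ℝ), (0 : ℝ)) x :=
    (hasDerivAt_id x).prodMk (hasDerivAt_const x t)
  exact h.hasFDerivAt.comp_hasDerivAt x h1

theorem hasDerivAt_slice2 {F : ℝ × ℝ → ℝ} {x t : ℝ} (h : DifferentiableAt ℝ F (x, t)) :
    HasDerivAt (fun s => F (x, s)) (fderiv ℝ F (x, t) (0, 1)) t := by
  have h1 : HasDerivAt (fun s : ℝ => (x, s)) ((0 : ℝ), (1 : ℝ)) t :=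
    (hasDerivAt_const t x).prodMk (hasDerivAt_id t)
  exact h.hasFDerivAt.comp_hasDerivAt t h1

theorem parts_of_contDiff {f : ℝ → ℝ → ℝ}
    (hf : ContDiff ℝ 2 (fun z : ℝ × ℝ => f z.1 z.2)) :
    ∃ fx ft fxx fxt ftt, Parts f fx ft fxx fxt ftt := by
  set F : ℝ × ℝ → ℝ := fun z => f z.1 z.2 with hF
  have hd : Differentiable ℝ F := hf.differentiable (by norm_num)
  have h1 : ∀ v : ℝ × ℝ, ContDiff ℝ 1 (fun z => fderiv ℝ F z v) := fun v =>
    (hf.fderiv_right (m := 1) (by norm_num)).clm_apply contDiff_const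
  have hd1 : ∀ v, Differentiable ℝ (fun z => fderiv ℝ F z v) := fun v =>
    (h1 v).differentiable (by norm_num)
  have h2 : ∀ v u : ℝ × ℝ, Continuous (fun z => fderiv ℝ (fun z => fderiv ℝ F z v) z u) :=
    fun v u => ((h1 v).continuous_fderiv (by norm_num)).clm_apply continuous_const
  have hdd : Differentiable ℝ (fderiv ℝ F) :=
    (hf.fderiv_right (m := 1) (by norm_num)).differentiable (by norm_num)
  have hsym : ∀ z, fderiv ℝ (fun z => fderiv ℝ F z (0, 1)) z (1, 0)
      = fderiv ℝ (fun z => fderiv ℝ F z (1, 0)) z (0, 1) := by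
    intro z
    have hs : IsSymmSndFDerivAt ℝ F z :=
      hf.contDiffAt.isSymmSndFDerivAt (by simp)
    have e : ∀ v u : ℝ × ℝ, fderiv ℝ (fun z => fderiv ℝ F z v) z u
        = fderiv ℝ (fderiv ℝ F) z u v := by
      intro v u
      rw [fderiv_clm_apply (hdd z) (differentiableAt_const v)]
      simp
    rw [e, e]
    exact hs.eq (1, 0) (0, 1)
  refine ⟨fun x t => fderiv ℝ F (x, t) (1, 0), fun x t => fderiv ℝ F (x, t) (0, 1),
    fun x t => fderiv ℝ (fun z => fderiv ℝ F z (1, 0)) (x, t) (1, 0),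
    fun x t => fderiv ℝ (fun z => fderiv ℝ F z (1, 0)) (x, t) (0, 1),
    fun x t => fderiv ℝ (fun z => fderiv ℝ F z (0, 1)) (x, t) (0, 1), ?_⟩
  constructor
  · exact hf.continuous
  · exact (h1 _).continuous
  · exact (h1 _).continuous
  · exact h2 _ _
  · exact h2 _ _
  · exact h2 _ _
  · exact fun x t => hasDerivAt_slice1 (hd (x, t))
  · exact fun x t => hasDerivAt_slice2 (hd (x, t))
  · exact fun x t => hasDerivAt_slice1 (hd1 _ (x, t))
  · exact fun x t => hasDerivAt_slice2 (hd1 _ (x, t))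
  · intro x t
    rw [← hsym]
    exact hasDerivAt_slice1 (hd1 _ (x, t))
  · exact fun x t => hasDerivAt_slice2 (hd1 _ (x, t))

theorem leibniz {G G' : ℝ → ℝ → ℝ} (L : ℝ)
    (hG : Continuous (fun z : ℝ × ℝ => G z.1 z.2))
    (hG' : Continuous (fun z : ℝ × ℝ => G' z.1 z.2))
    (hd : ∀ x t, HasDerivAt (fun s => G x s) (G' x t) t) (t : ℝ) :
    HasDerivAt (fun s => ∫ x in (0:ℝ)..L, G x s) (∫ x in (0:ℝ)..L, G' x t) t := by
  have hK : IsCompact (Set.uIcc (0:ℝ) L ×ˢ Set.Icc (t-1) (t+1)) :=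
    isCompact_uIcc.prod isCompact_Icc
  obtain ⟨B, hB⟩ := hK.exists_bound_of_continuousOn hG'.continuousOn
  have cs : ∀ s, Continuous (fun x => G x s) := fun s =>
    hG.comp (Continuous.prodMk_left s)
  have cs' : ∀ s, Continuous (fun x => G' x s) := fun s =>
    hG'.comp (Continuous.prodMk_left s)
  refine (intervalIntegral.hasDerivAt_integral_of_dominated_loc_of_deriv_le
    (F := fun s x => G x s) (F' := fun s x => G' x s) (bound := fun _ => B)
    (s := Set.Icc (t-1) (t+1)) (Icc_mem_nhds (by linarith) (by linarith)) ?_ ?_ ?_ ?_ ?_ ?_).2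
  · exact Filter.Eventually.of_forall fun s => (cs s).aestronglyMeasurable
  · exact (cs t).intervalIntegrable _ _
  · exact (cs' t).aestronglyMeasurable
  · exact Filter.Eventually.of_forall fun x hx s hs =>
      hB (x, s) ⟨Set.uIoc_subset_uIcc hx, hs⟩
  · exact intervalIntegrable_const
  · exact Filter.Eventually.of_forall fun x hx s hs => hd x s

theorem exists_cutoff (L : ℝ) (W : Set ℝ) (hW : IsOpen W) (hne : W.Nonempty)
    (hsub : W ⊆ Set.Icc 0 L) :
    ∃ q ξ ξ' : ℝ → ℝ, ∃ Q : ℝ, (∀ x, HasDerivAt q (1 - ξ x) x) ∧ (∀ x, HasDerivAt ξ (ξ' x) x) ∧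
      Continuous ξ' ∧ q 0 = 0 ∧ q L = 0 ∧ 0 < Q ∧ (∀ x, 0 ≤ ξ x) ∧ (∀ x, x ∉ W → ξ x = 0) ∧
      (∀ x ∈ Set.Icc 0 L, |q x| ≤ Q ∧ ξ x ≤ Q ∧ |ξ' x| ≤ Q) := by
  obtain ⟨c, hc⟩ := hne
  obtain ⟨r, hr, hrW⟩ := Metric.isOpen_iff.1 hW c hc
  let f : ContDiffBump c := ⟨r/2, r, by linarith, by linarith⟩
  have hsm : ContDiff ℝ 1 (fun x => L * f.normed volume x) :=
    contDiff_const.mul f.contDiff_normed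
  have hsupp : Function.support (f.normed volume) = Metric.ball c r :=
    f.support_normed_eq
  have hsub' : W ⊆ Set.Ioo 0 L := by
    have := interior_maximal hsub hW
    rwa [interior_Icc] at this
  have hL : 0 ≤ L := by have := hsub' hc; linarith [this.1, this.2]
  have hcont : Continuous (fun x => L * f.normed volume x) := hsm.continuous
  have hint : ∫ x in (0:ℝ)..L, L * f.normed volume x = L := by
    rw [intervalIntegral.integral_const_mul,
      intervalIntegral.integral_eq_integral_of_support_subset, f.integral_normed, mul_one]
    rw [hsupp]
    exact (hrW.trans hsub').trans Set.Ioo_subset_Ioc_self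
  have hq : ∀ x, HasDerivAt (fun x => x - ∫ y in (0:ℝ)..x, L * f.normed volume y)
      (1 - L * f.normed volume x) x := fun x =>
    (hasDerivAt_id x).sub (hcont.integral_hasStrictDerivAt 0 x).hasDerivAt
  have hc' : Continuous (deriv (fun x => L * f.normed volume x)) :=
    hsm.continuous_deriv (by norm_num)
  have hqc : Continuous (fun x => x - ∫ y in (0:ℝ)..x, L * f.normed volume y) :=
    continuous_iff_continuousAt.2 fun x => (hq x).continuousAt
  obtain ⟨B1, hB1⟩ := (isCompact_Icc (a := (0:ℝ)) (b := L)).exists_bound_of_continuousOn hqc.continuousOn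
  obtain ⟨B2, hB2⟩ := (isCompact_Icc (a := (0:ℝ)) (b := L)).exists_bound_of_continuousOn hcont.continuousOn
  obtain ⟨B3, hB3⟩ := (isCompact_Icc (a := (0:ℝ)) (b := L)).exists_bound_of_continuousOn hc'.continuousOn
  have m0 : (0:ℝ) ∈ Set.Icc 0 L := ⟨le_rfl, hL⟩
  have n1 := (norm_nonneg _).trans (hB1 0 m0)
  have n2 := (norm_nonneg _).trans (hB2 0 m0)
  have n3 := (norm_nonneg _).trans (hB3 0 m0)
  refine ⟨_, _, _, B1 + B2 + B3 + 1, hq,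
    fun x => (hsm.differentiable (by norm_num) x).hasDerivAt, hc', by simp, by simp only [hint, sub_self], by linarith,
    fun x => mul_nonneg hL (f.nonneg_normed x), ?_, ?_⟩
  · intro x hx
    have : x ∉ Function.support (f.normed volume) := by
      rw [hsupp]; exact fun h => hx (hrW h)
    simp [Function.notMem_support.1 this]
  · intro x hx
    have a1 := hB1 x hx
    have a2 := hB2 x hx
    have a3 := hB3 x hx
    rw [Real.norm_eq_abs] at a1 a2 a3
    refine ⟨by linarith, by linarith [le_abs_self (L * f.normed volume x)], by linarith⟩

theorem exists_slope (g : ℝ → ℝ) (m M : ℝ) (hmM : m ≤ M) (hg : ContDiff ℝ 1 g)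
    (hd : ∀ s, m ≤ deriv g s ∧ deriv g s ≤ M) (x y : ℝ) :
    ∃ θ, m ≤ θ ∧ θ ≤ M ∧ g x - g y = θ * (x - y) := by
  have hdiff : Differentiable ℝ g := hg.differentiable (by norm_num)
  rcases lt_trichotomy x y with h | h | h
  · obtain ⟨c, -, hc⟩ := exists_deriv_eq_slope g h hdiff.continuous.continuousOn hdiff.differentiableOn
    refine ⟨deriv g c, (hd c).1, (hd c).2, ?_⟩
    rw [hc]
    have : y - x ≠ 0 := by linarith
    field_simp; ring
  · exact ⟨m, le_rfl, hmM, by simp [h]⟩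
  · obtain ⟨c, -, hc⟩ := exists_deriv_eq_slope g h hdiff.continuous.continuousOn hdiff.differentiableOn
    refine ⟨deriv g c, (hd c).1, (hd c).2, ?_⟩
    rw [hc]
    have : x - y ≠ 0 := by linarith
    field_simp

theorem f_lip (f : ℝ → ℝ → ℝ → ℝ) (c_f p K : ℝ) (hcf : 0 < c_f) (hp : 1 ≤ p)
    (hf : ContDiff ℝ 1 (fun z : ℝ × ℝ × ℝ => f z.1 z.2.1 z.2.2))
    (hdf : ∀ z : ℝ × ℝ × ℝ, ‖fderiv ℝ (fun q : ℝ × ℝ × ℝ => f q.1 q.2.1 q.2.2) z‖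
      ≤ c_f * (1 + |z.1| ^ (p - 1) + |z.2.1| ^ (p - 1) + |z.2.2| ^ (p - 1)))
    (u v w u' v' w' : ℝ) (h1 : |u| ≤ K) (h2 : |v| ≤ K) (h3 : |w| ≤ K)
    (h1' : |u'| ≤ K) (h2' : |v'| ≤ K) (h3' : |w'| ≤ K) :
    (f u v w - f u' v' w') ^ 2 ≤ (c_f * (1 + K ^ (p-1) + K ^ (p-1) + K ^ (p-1))) ^ 2 *
      ((u - u') ^ 2 + (v - v') ^ 2 + (w - w') ^ 2) := by
  have key := Convex.norm_image_sub_le_of_norm_fderiv_le (𝕜 := ℝ)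
    (f := fun z : ℝ × ℝ × ℝ => f z.1 z.2.1 z.2.2)
    (C := c_f * (1 + K ^ (p-1) + K ^ (p-1) + K ^ (p-1)))
    (s := Metric.closedBall 0 K) (x := (u', v', w')) (y := (u, v, w))
    (fun x _ => hf.differentiable (by norm_num) x) ?_ (convex_closedBall _ _) ?_ ?_
  · simp only [Real.norm_eq_abs] at key
    have hn : ‖((u, v, w) : ℝ × ℝ × ℝ) - (u', v', w')‖ ^ 2 ≤ (u - u') ^ 2 + (v - v') ^ 2 + (w - w') ^ 2 := by
      simp only [Prod.mk_sub_mk, Prod.norm_mk, Real.norm_eq_abs]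
      rcases max_choice |u - u'| (max |v - v'| |w - w'|) with h | h <;> rw [h]
      · rw [sq_abs]; nlinarith [sq_nonneg (v - v'), sq_nonneg (w - w')]
      · rcases max_choice |v - v'| |w - w'| with h | h <;> rw [h, sq_abs] <;>
        nlinarith [sq_nonneg (v - v'), sq_nonneg (w - w'), sq_nonneg (u - u')]
    calc _ = |f u v w - f u' v' w'| ^ 2 := (sq_abs _).symm
      _ ≤ _ := pow_le_pow_left₀ (abs_nonneg _) key 2
      _ = _ := mul_pow _ _ 2
      _ ≤ _ := mul_le_mul_of_nonneg_left hn (sq_nonneg _)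
  · intro z hz
    have hz' : ‖z‖ ≤ K := by simpa using hz
    have e1 : |z.1| ≤ K := (norm_fst_le z).trans hz'
    have e2 : |z.2.1| ≤ K := (norm_fst_le z.2).trans ((norm_snd_le z).trans hz')
    have e3 : |z.2.2| ≤ K := (norm_snd_le z.2).trans ((norm_snd_le z).trans hz')
    have hp' : 0 ≤ p - 1 := by linarith
    refine (hdf z).trans ?_
    gcongr
  · simp [Prod.norm_def, h1', h2', h3']
  · simp [Prod.norm_def, h1, h2, h3]

theorem l2_le_l2p (L p : ℝ) (hL : 0 < L) (hp : 1 ≤ p) (u : ℝ → ℝ) (hu : Continuous u) :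
    ∫ x in (0:ℝ)..L, u x ^ 2 ≤ max 1 L * (∫ x in (0:ℝ)..L, |u x| ^ (2 * p)) ^ (1 / p) := by
  have hp0 : 0 < p := by linarith
  have h2p : 0 ≤ 2 * p := by linarith
  have hvol : (volume (Set.Ioc 0 L)) = ENNReal.ofReal L := by simp
  have cont2 : Continuous (fun x => |u x| ^ (2 * p)) := hu.abs.rpow_const fun _ => Or.inr h2p
  have e : ∀ x, (u x ^ 2) ^ p = |u x| ^ (2 * p) := by
    intro x
    rw [← sq_abs, ← Real.rpow_natCast, ← Real.rpow_mul (abs_nonneg _)]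
    norm_num
  have key := (convexOn_rpow hp).map_set_average_le (μ := volume) (t := Set.Ioc 0 L)
    (f := fun x => u x ^ 2)
    (fun x hx => (Real.continuousAt_rpow_const _ _ (Or.inr hp0.le)).continuousWithinAt) isClosed_Ici
    (by rw [hvol]; simpa using hL) (by rw [hvol]; simp)
    (Filter.Eventually.of_forall fun x => Set.mem_Ici.2 (sq_nonneg _))
    ((hu.pow 2).integrableOn_Ioc) (by
      refine Continuous.integrableOn_Ioc ?_
      simpa [Function.comp_def, e] using cont2)
  simp only [e] at key
  rw [setAverage_eq, setAverage_eq, ← intervalIntegral.integral_of_le hL.le,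
    ← intervalIntegral.integral_of_le hL.le] at key
  have hr : volume.real (Set.Ioc 0 L) = L := by simp [Measure.real, hL.le]
  rw [hr] at key
  simp only [smul_eq_mul] at key
  set I := ∫ x in (0:ℝ)..L, u x ^ 2
  set J := ∫ x in (0:ℝ)..L, |u x| ^ (2 * p)
  have hI : 0 ≤ I := intervalIntegral.integral_nonneg hL.le fun x _ => sq_nonneg _
  have hJ : 0 ≤ J := intervalIntegral.integral_nonneg hL.le fun x _ => by positivity
  have k2 := Real.rpow_le_rpow (by positivity) key (z := 1 / p) (by positivity)
  rw [← Real.rpow_mul (by positivity), mul_one_div_cancel hp0.ne', Real.rpow_one,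
    Real.mul_rpow (by positivity) hJ] at k2
  have k3 : I ≤ L * (L⁻¹ ^ (1/p)) * J ^ (1/p) := by
    have := mul_le_mul_of_nonneg_left k2 hL.le
    rw [← mul_assoc, mul_inv_cancel₀ hL.ne', one_mul] at this
    linarith
  refine k3.trans (mul_le_mul_of_nonneg_right ?_ (by positivity))
  have : L * L⁻¹ ^ (1/p) = L ^ (1 - 1/p) := by
    rw [Real.inv_rpow hL.le, Real.rpow_sub hL, Real.rpow_one]; rfl
  rw [this]
  have h1p : 1/p ≤ 1 := by rw [div_le_one hp0]; exact hp
  rcases le_total L 1 with h | h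
  · exact (Real.rpow_le_one hL.le h (by linarith)).trans (le_max_left _ _)
  · refine le_trans ?_ (le_max_right _ _)
    calc L ^ (1 - 1/p) ≤ L ^ (1:ℝ) := Real.rpow_le_rpow_of_exponent_le h (by
            have : 0 < 1/p := by positivity
            linarith)
      _ = L := Real.rpow_one L

theorem young (ε a b B : ℝ) (hε : 0 < ε) (hb : b ^ 2 ≤ B) : a * b ≤ ε * a ^ 2 + B / (4 * ε) := by
  have h : a * b ≤ ε * a ^ 2 + b ^ 2 / (4 * ε) := by
    have : ε * a ^ 2 + b ^ 2 / (4 * ε) - a * b = (2 * ε * a - b) ^ 2 / (4 * ε) := by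
      field_simp; ring
    have h2 : 0 ≤ (2 * ε * a - b) ^ 2 / (4 * ε) := by positivity
    linarith
  have h3 : b ^ 2 / (4 * ε) ≤ B / (4 * ε) := by gcongr
  linarith

theorem sq_mul_le (q Q y Y : ℝ) (hq : |q| ≤ Q) (hy : y ^ 2 ≤ Y) : (q * y) ^ 2 ≤ Q ^ 2 * Y := by
  have : q ^ 2 ≤ Q ^ 2 := sq_le_sq' (abs_le.1 hq).1 (abs_le.1 hq).2
  rw [mul_pow]
  exact mul_le_mul this hy (sq_nonneg _) (sq_nonneg _)

theorem comp_est (κ ρ Q D C0 C1 C2 δ : ℝ) (hκ : 0 < κ) (hρ : 0 < ρ) (hQ : 0 < Q) (hD : 0 < D)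
    (hC0 : 0 < C0) (hC1 : 0 < C1) (hC2 : 0 < C2) (hδ : 0 < δ) :
    ∃ N0 : ℝ, ∀ N ≥ N0, ∃ C : ℝ, ∀ q ξ ξ' d y v u β α f U Y : ℝ,
      |q| ≤ Q → |ξ| ≤ Q → |ξ'| ≤ Q → 0 ≤ d → d ≤ D → ξ ≤ C0 * d → u ^ 2 ≤ U →
      β ^ 2 ≤ C1 * U → f ^ 2 ≤ C1 * U → α ^ 2 ≤ C2 * Y →
      -(1/2) * (κ * y ^ 2 + ρ * v ^ 2) + ξ * ρ * v ^ 2 + q * y * (β - d * v - f)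
        - 1/2 * ξ' * κ * u * y + 1/2 * ξ * u * (α + β - d * v - f) - N * (d * v + f) * v
      ≤ -(1/4) * (κ * y ^ 2 + ρ * v ^ 2) + δ * Y + C * U := by
  refine ⟨C0 * ρ + Q ^ 2 * D / (4 * (κ/16)) + 1, fun N hN => ?_⟩
  refine ⟨Q ^ 2 * C1 / (4 * (κ/16)) + Q ^ 2 * C1 / (4 * (κ/16)) + Q ^ 2 * κ ^ 2 / (4 * (κ/16))
    + Q ^ 2 / (4 * (δ/C2)) + (C1 + Q ^ 2 / (4 * 1)) + (C1 + Q ^ 2 / (4 * 1))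
    + D * Q ^ 2 / 4 + N ^ 2 * C1 / (4 * (ρ/4)), ?_⟩
  intro q ξ ξ' d y v u β α f U Y hq hξ hξ' hd0 hdD hξd hu hβ hf hα
  have t1 : ξ * ρ * v ^ 2 ≤ C0 * ρ * (d * v ^ 2) := by
    have : 0 ≤ ρ * v ^ 2 := by positivity
    nlinarith
  have t2 := young (κ/16) y (q * β) (Q^2 * (C1 * U)) (by positivity) (sq_mul_le _ _ _ _ hq hβ)
  have t3 := young (κ/16) y (-q * f) (Q^2 * (C1 * U)) (by positivity)
    (sq_mul_le _ _ _ _ (by rwa [abs_neg]) hf)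
  have hdv : (d * v) ^ 2 ≤ D * (d * v ^ 2) := by
    have : 0 ≤ d * v ^ 2 := by positivity
    nlinarith
  have t4 := young (κ/16) y (-q * (d * v)) (Q^2 * (D * (d * v ^ 2))) (by positivity)
    (sq_mul_le _ _ _ _ (by rwa [abs_neg]) hdv)
  have hξ'2 : |-(1/2) * ξ' * κ| ≤ Q * κ := by
    rw [abs_mul, abs_mul, abs_of_pos hκ]
    have : |-(1/2 : ℝ)| = 1/2 := by norm_num
    rw [this]
    have := abs_nonneg ξ'
    gcongr; linarith
  have t5 := young (κ/16) y (-(1/2) * ξ' * κ * u) ((Q * κ)^2 * U) (by positivity)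
    (sq_mul_le _ _ _ _ hξ'2 hu)
  have hξ2 : |1/2 * ξ| ≤ Q := by
    rw [abs_mul]
    have : |(1/2 : ℝ)| = 1/2 := by norm_num
    rw [this]
    have := abs_nonneg ξ
    linarith
  have hξu := sq_mul_le _ _ _ _ hξ2 hu
  have t6 := young (δ/C2) α (1/2 * ξ * u) (Q^2 * U) (by positivity) hξu
  have t6' : δ / C2 * α ^ 2 ≤ δ * Y := by
    calc δ / C2 * α ^ 2 ≤ δ / C2 * (C2 * Y) := by gcongr
      _ = δ * Y := by field_simp
  have t7 := young 1 β (1/2 * ξ * u) (Q^2 * U) (by positivity) hξu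
  have t8 := young 1 (-f) (1/2 * ξ * u) (Q^2 * U) (by positivity) hξu
  have t9 : -(1/2 * ξ * u * (d * v)) ≤ d * v ^ 2 + D * Q ^ 2 / 4 * U := by
    have a1 : -(1/2 * ξ * u * (d * v)) ≤ d * v ^ 2 + d * ((1/2 * ξ * u) ^ 2 / 4) := by
      have : 0 ≤ d * (v + 1/2 * ξ * u / 2) ^ 2 := by positivity
      nlinarith
    have a2 : d * ((1/2 * ξ * u) ^ 2 / 4) ≤ D * (Q ^ 2 * U / 4) := by gcongr
    linarith
  have t10 := young (ρ/4) v (-N * f) (N ^ 2 * (C1 * U)) (by positivity)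
    (by rw [mul_pow, neg_sq]; gcongr)
  have t11 : (C0 * ρ + Q ^ 2 * D / (4 * (κ/16)) + 1) * (d * v ^ 2) ≤ N * (d * v ^ 2) := by
    gcongr
  have z1 : Q^2 * (D * (d * v ^ 2)) / (4 * (κ/16)) = Q ^ 2 * D / (4 * (κ/16)) * (d * v ^ 2) := by ring
  rw [z1] at t4
  generalize Q ^ 2 * D / (4 * (κ/16)) = X at *
  have fin : (Q ^ 2 * C1 / (4 * (κ/16)) + Q ^ 2 * C1 / (4 * (κ/16)) + Q ^ 2 * κ ^ 2 / (4 * (κ/16))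
    + Q ^ 2 / (4 * (δ/C2)) + (C1 + Q ^ 2 / (4 * 1)) + (C1 + Q ^ 2 / (4 * 1))
    + D * Q ^ 2 / 4 + N ^ 2 * C1 / (4 * (ρ/4))) * U
    = Q^2 * (C1 * U) / (4 * (κ/16)) + Q^2 * (C1 * U) / (4 * (κ/16)) + (Q * κ)^2 * U / (4 * (κ/16))
    + Q^2 * U / (4 * (δ/C2)) + (C1 * U + Q^2 * U / (4 * 1)) + (C1 * U + Q^2 * U / (4 * 1))
    + D * Q ^ 2 / 4 * U + N ^ 2 * (C1 * U) / (4 * (ρ/4)) := by ring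
  rw [fin]
  nlinarith only [t1, t2, t3, t4, t5, t6, t6', t7, t8, t9, t10, t11, hβ, hf]

/-- energy density -/
noncomputable def eD (ρ₁ ρ₂ k k₀ b ℓ p p₁ p₂ s s₁ s₂ w w₁ w₂ : ℝ) : ℝ :=
  1/2 * (ρ₁ * p₂ ^ 2 + ρ₂ * s₂ ^ 2 + ρ₁ * w₂ ^ 2 + b * s₁ ^ 2 + k * (p₁ + s + ℓ * w) ^ 2
    + k₀ * (w₁ - ℓ * p) ^ 2)

/-- Lyapunov density -/
noncomputable def lD (ρ₁ ρ₂ k k₀ b ℓ N q ξ p p₁ p₂ s s₁ s₂ w w₁ w₂ : ℝ) : ℝ :=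
  N * eD ρ₁ ρ₂ k k₀ b ℓ p p₁ p₂ s s₁ s₂ w w₁ w₂
  + q * (ρ₁ * p₂ * p₁ + ρ₂ * s₂ * s₁ + ρ₁ * w₂ * w₁)
  + 1/2 * ξ * (ρ₁ * p * p₂ + ρ₂ * s * s₂ + ρ₁ * w * w₂)

/-- dissipation -/
noncomputable def dD (ρ₁ ρ₂ k k₀ b ℓ N q ξ ξ' p p₁ p₂ s s₁ s₂ w w₁ w₂ h₁ h₂ h₃ : ℝ) : ℝ :=
  -(1/2) * (k * p₁ ^ 2 + ρ₁ * p₂ ^ 2 + b * s₁ ^ 2 + ρ₂ * s₂ ^ 2 + k₀ * w₁ ^ 2 + ρ₁ * w₂ ^ 2)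
  + ξ * (ρ₁ * p₂ ^ 2 + ρ₂ * s₂ ^ 2 + ρ₁ * w₂ ^ 2)
  + q * (p₁ * (-k₀ * ℓ ^ 2 * p - h₁) + s₁ * (-k * s - k * ℓ * w - h₂)
    + w₁ * (-k * ℓ * s - k * ℓ ^ 2 * w - h₃))
  - 1/2 * ξ' * (k * p * p₁ + b * s * s₁ + k₀ * w * w₁)
  + 1/2 * ξ * (p * (k * s₁ + (k + k₀) * ℓ * w₁ - k₀ * ℓ ^ 2 * p - h₁)
    + s * (-k * p₁ - k * s - k * ℓ * w - h₂)
    + w * (-(k₀ + k) * ℓ * p₁ - k * ℓ * s - k * ℓ ^ 2 * w - h₃))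
  - N * (h₁ * p₂ + h₂ * s₂ + h₃ * w₂)

theorem lin2_sq (a b x y S : ℝ) (h : x ^ 2 + y ^ 2 ≤ S) :
    (a * x + b * y) ^ 2 ≤ (a ^ 2 + b ^ 2) * S := by
  have : (a * x + b * y) ^ 2 ≤ (a ^ 2 + b ^ 2) * (x ^ 2 + y ^ 2) := by
    nlinarith [sq_nonneg (a * y - b * x)]
  exact this.trans (mul_le_mul_of_nonneg_left h (by positivity))

theorem e_upper (ρ₁ ρ₂ k k₀ b ℓ : ℝ) (hρ₁ : 0 < ρ₁) (hρ₂ : 0 < ρ₂) (hk : 0 < k) (hk₀ : 0 < k₀)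
    (hb : 0 < b) :
    ∃ C > 0, ∀ p p₁ p₂ s s₁ s₂ w w₁ w₂ : ℝ, eD ρ₁ ρ₂ k k₀ b ℓ p p₁ p₂ s s₁ s₂ w w₁ w₂ ≤
      2 * (k * p₁ ^ 2 + ρ₁ * p₂ ^ 2 + b * s₁ ^ 2 + ρ₂ * s₂ ^ 2 + k₀ * w₁ ^ 2 + ρ₁ * w₂ ^ 2)
      + C * (p ^ 2 + s ^ 2 + w ^ 2) := by
  refine ⟨2 * k + 2 * k * ℓ ^ 2 + k₀ * ℓ ^ 2, by positivity, ?_⟩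
  intro p p₁ p₂ s s₁ s₂ w w₁ w₂
  unfold eD
  have h1 : k * (p₁ + s + ℓ * w) ^ 2 ≤ k * (3 * p₁ ^ 2 + 3 * s ^ 2 + 3 * ℓ ^ 2 * w ^ 2) := by
    gcongr
    nlinarith [sq_nonneg (p₁ - s), sq_nonneg (p₁ - ℓ * w), sq_nonneg (s - ℓ * w)]
  have h2 : k₀ * (w₁ - ℓ * p) ^ 2 ≤ k₀ * (2 * w₁ ^ 2 + 2 * ℓ ^ 2 * p ^ 2) := by
    gcongr
    nlinarith [sq_nonneg (w₁ + ℓ * p)]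
  have : 0 ≤ k * p ^ 2 := by positivity
  have : 0 ≤ k * w ^ 2 := by positivity
  have : 0 ≤ k * s ^ 2 := by positivity
  have : 0 ≤ k * p₁ ^ 2 := by positivity
  have : 0 ≤ b * s₁ ^ 2 := by positivity
  have : 0 ≤ k₀ * w₁ ^ 2 := by positivity
  have : 0 ≤ ρ₁ * p₂ ^ 2 := by positivity
  have : 0 ≤ ρ₁ * w₂ ^ 2 := by positivity
  have : 0 ≤ ρ₂ * s₂ ^ 2 := by positivity
  have : 0 ≤ k * ℓ ^ 2 * p ^ 2 := by positivity
  have : 0 ≤ k * ℓ ^ 2 * w ^ 2 := by positivity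
  have : 0 ≤ k * ℓ ^ 2 * s ^ 2 := by positivity
  have : 0 ≤ k₀ * ℓ ^ 2 * p ^ 2 := by positivity
  have : 0 ≤ k₀ * ℓ ^ 2 * w ^ 2 := by positivity
  have : 0 ≤ k₀ * ℓ ^ 2 * s ^ 2 := by positivity
  linarith

theorem e_lower (ρ₁ ρ₂ k k₀ b ℓ : ℝ) (hρ₁ : 0 < ρ₁) (hρ₂ : 0 < ρ₂) (hk : 0 < k) (hk₀ : 0 < k₀)
    (hb : 0 < b) :
    ∃ C > 0, ∀ p p₁ p₂ s s₁ s₂ w w₁ w₂ : ℝ,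
      k * p₁ ^ 2 + ρ₁ * p₂ ^ 2 + b * s₁ ^ 2 + ρ₂ * s₂ ^ 2 + k₀ * w₁ ^ 2 + ρ₁ * w₂ ^ 2
      ≤ 6 * eD ρ₁ ρ₂ k k₀ b ℓ p p₁ p₂ s s₁ s₂ w w₁ w₂ + C * (p ^ 2 + s ^ 2 + w ^ 2) := by
  refine ⟨3 * k + 3 * k * ℓ ^ 2 + 2 * k₀ * ℓ ^ 2, by positivity, ?_⟩
  intro p p₁ p₂ s s₁ s₂ w w₁ w₂
  unfold eD
  have h1 : k * p₁ ^ 2 ≤ k * (3 * (p₁ + s + ℓ * w) ^ 2 + 3 * s ^ 2 + 3 * ℓ ^ 2 * w ^ 2) := by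
    gcongr
    nlinarith [sq_nonneg (p₁ + s + ℓ * w + s), sq_nonneg (p₁ + s + ℓ * w + ℓ * w), sq_nonneg (s - ℓ * w)]
  have h2 : k₀ * w₁ ^ 2 ≤ k₀ * (2 * (w₁ - ℓ * p) ^ 2 + 2 * ℓ ^ 2 * p ^ 2) := by
    gcongr
    nlinarith [sq_nonneg (w₁ - ℓ * p - ℓ * p)]
  have : 0 ≤ k * p ^ 2 := by positivity
  have : 0 ≤ k * w ^ 2 := by positivity
  have : 0 ≤ k * s ^ 2 := by positivity
  have : 0 ≤ k * (p₁ + s + ℓ * w) ^ 2 := by positivity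
  have : 0 ≤ b * s₁ ^ 2 := by positivity
  have : 0 ≤ k₀ * (w₁ - ℓ * p) ^ 2 := by positivity
  have : 0 ≤ ρ₁ * p₂ ^ 2 := by positivity
  have : 0 ≤ ρ₁ * w₂ ^ 2 := by positivity
  have : 0 ≤ ρ₂ * s₂ ^ 2 := by positivity
  have : 0 ≤ k * ℓ ^ 2 * p ^ 2 := by positivity
  have : 0 ≤ k * ℓ ^ 2 * w ^ 2 := by positivity
  have : 0 ≤ k * ℓ ^ 2 * s ^ 2 := by positivity
  have : 0 ≤ k₀ * ℓ ^ 2 * p ^ 2 := by positivity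
  have : 0 ≤ k₀ * ℓ ^ 2 * w ^ 2 := by positivity
  have : 0 ≤ k₀ * ℓ ^ 2 * s ^ 2 := by positivity
  linarith

theorem prod_bd (κ ρ Q : ℝ) (hκ : 0 < κ) (hρ : 0 < ρ) (hQ : 0 < Q) :
    ∃ C > 0, ∀ q ξ y v u : ℝ, |q| ≤ Q → |ξ| ≤ Q →
      |q * (ρ * v * y) + 1/2 * ξ * (ρ * u * v)| ≤ C * (κ * y ^ 2 + ρ * v ^ 2) + C * u ^ 2 := by
  refine ⟨Q + Q * ρ / κ + Q * ρ, by positivity, ?_⟩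
  intro q ξ y v u hq hξ
  have a1 : |q * (ρ * v * y)| ≤ Q * (ρ * (v ^ 2 + y ^ 2) / 2) := by
    rw [abs_mul]
    gcongr
    rw [abs_le]
    constructor
    · nlinarith [mul_nonneg hρ.le (sq_nonneg (v + y))]
    · nlinarith [mul_nonneg hρ.le (sq_nonneg (v - y))]
  have a2 : |1/2 * ξ * (ρ * u * v)| ≤ Q * (ρ * (v ^ 2 + u ^ 2) / 2) := by
    rw [abs_mul]
    have : |1/2 * ξ| ≤ Q := by
      rw [abs_mul]
      have : |(1/2 : ℝ)| = 1/2 := by norm_num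
      rw [this]
      have := abs_nonneg ξ
      linarith
    gcongr
    rw [abs_le]
    constructor
    · nlinarith [mul_nonneg hρ.le (sq_nonneg (v + u))]
    · nlinarith [mul_nonneg hρ.le (sq_nonneg (v - u))]
  have a3 := abs_add_le (q * (ρ * v * y)) (1/2 * ξ * (ρ * u * v))
  have e1 : Q * ρ / κ * (κ * y ^ 2) = Q * ρ * y ^ 2 := by field_simp
  have : 0 ≤ Q * (κ * y ^ 2) := by positivity
  have : 0 ≤ Q * ρ * (κ * y ^ 2) := by positivity
  have : 0 ≤ Q * ρ / κ * (ρ * v ^ 2) := by positivity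
  have : 0 ≤ Q * ρ * (ρ * v ^ 2) := by positivity
  have : 0 ≤ Q * ρ * v ^ 2 := by positivity
  have : 0 ≤ Q * ρ / κ * u ^ 2 := by positivity
  have : 0 ≤ Q * ρ * u ^ 2 := by positivity
  have : 0 ≤ Q * ρ * y ^ 2 := by positivity
  have : 0 ≤ Q * u ^ 2 := by positivity
  nlinarith

set_option maxHeartbeats 1600000 in
theorem pointwise_est (ρ₁ ρ₂ k k₀ b ℓ Q D C0 Cf : ℝ)
    (hρ₁ : 0 < ρ₁) (hρ₂ : 0 < ρ₂) (hk : 0 < k) (hk₀ : 0 < k₀)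
    (hb : 0 < b) (hQ : 0 < Q) (hD : 0 < D) (hC0 : 0 < C0) (hCf : 0 < Cf) :
    ∃ N C : ℝ, 0 < C ∧
      ∀ q ξ p p₁ p₂ s s₁ s₂ w w₁ w₂ : ℝ, |q| ≤ Q → |ξ| ≤ Q →
      (eD ρ₁ ρ₂ k k₀ b ℓ p p₁ p₂ s s₁ s₂ w w₁ w₂ - C * (p ^ 2 + s ^ 2 + w ^ 2) ≤
        lD ρ₁ ρ₂ k k₀ b ℓ N q ξ p p₁ p₂ s s₁ s₂ w w₁ w₂) ∧
      (lD ρ₁ ρ₂ k k₀ b ℓ N q ξ p p₁ p₂ s s₁ s₂ w w₁ w₂ ≤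
        C * (eD ρ₁ ρ₂ k k₀ b ℓ p p₁ p₂ s s₁ s₂ w w₁ w₂ + (p ^ 2 + s ^ 2 + w ^ 2))) ∧
      ∀ ξ' d₁ d₂ d₃ F₁ F₂ F₃ : ℝ, |ξ'| ≤ Q → 0 ≤ d₁ → d₁ ≤ D → ξ ≤ C0 * d₁ →
        0 ≤ d₂ → d₂ ≤ D → ξ ≤ C0 * d₂ → 0 ≤ d₃ → d₃ ≤ D → ξ ≤ C0 * d₃ →
        F₁ ^ 2 ≤ Cf * (p ^ 2 + s ^ 2 + w ^ 2) → F₂ ^ 2 ≤ Cf * (p ^ 2 + s ^ 2 + w ^ 2) →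
        F₃ ^ 2 ≤ Cf * (p ^ 2 + s ^ 2 + w ^ 2) →
        dD ρ₁ ρ₂ k k₀ b ℓ N q ξ ξ' p p₁ p₂ s s₁ s₂ w w₁ w₂
          (d₁ * p₂ + F₁) (d₂ * s₂ + F₂) (d₃ * w₂ + F₃) ≤
        -(1/16) * eD ρ₁ ρ₂ k k₀ b ℓ p p₁ p₂ s s₁ s₂ w w₁ w₂ + C * (p ^ 2 + s ^ 2 + w ^ 2) := by
  obtain ⟨δ, hδ, hδk, hδb, hδk₀⟩ : ∃ δ > 0, 24 * δ ≤ k ∧ 24 * δ ≤ b ∧ 24 * δ ≤ k₀ := by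
    refine ⟨min k (min b k₀) / 24, by positivity, ?_, ?_, ?_⟩
    · linarith [min_le_left k (min b k₀)]
    · linarith [min_le_right k (min b k₀), min_le_left b k₀]
    · linarith [min_le_right k (min b k₀), min_le_right b k₀]
  obtain ⟨C1, hC1, hCf1, hc1, hc2, hc3⟩ : ∃ C1 > 0, Cf ≤ C1 ∧ (k₀ * ℓ ^ 2) ^ 2 ≤ C1 ∧
      (-k) ^ 2 + (-k * ℓ) ^ 2 ≤ C1 ∧ (-k * ℓ) ^ 2 + (-k * ℓ ^ 2) ^ 2 ≤ C1 := by
    refine ⟨Cf + (k₀ * ℓ ^ 2) ^ 2 + ((-k) ^ 2 + (-k * ℓ) ^ 2) + ((-k * ℓ) ^ 2 + (-k * ℓ ^ 2) ^ 2),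
      by positivity, ?_, ?_, ?_, ?_⟩ <;>
    linarith [sq_nonneg (k₀ * ℓ ^ 2), sq_nonneg (-k), sq_nonneg (-k * ℓ), sq_nonneg (-k * ℓ ^ 2)]
  obtain ⟨C2, hC2, hc4, hc5, hc6⟩ : ∃ C2 > 0, k ^ 2 + ((k + k₀) * ℓ) ^ 2 ≤ C2 ∧ (-k) ^ 2 ≤ C2 ∧
      (-(k₀ + k) * ℓ) ^ 2 ≤ C2 := by
    refine ⟨k ^ 2 + ((k + k₀) * ℓ) ^ 2 + (-k) ^ 2 + (-(k₀ + k) * ℓ) ^ 2, by positivity, ?_, ?_, ?_⟩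
    <;> linarith [sq_nonneg k, sq_nonneg ((k + k₀) * ℓ), sq_nonneg (-k), sq_nonneg (-(k₀ + k) * ℓ)]
  obtain ⟨N1, hN1⟩ := comp_est k ρ₁ Q D C0 C1 C2 δ hk hρ₁ hQ hD hC0 hC1 hC2 hδ
  obtain ⟨N2, hN2⟩ := comp_est b ρ₂ Q D C0 C1 C2 δ hb hρ₂ hQ hD hC0 hC1 hC2 hδ
  obtain ⟨N3, hN3⟩ := comp_est k₀ ρ₁ Q D C0 C1 C2 δ hk₀ hρ₁ hQ hD hC0 hC1 hC2 hδ
  obtain ⟨P1, hP1, hP1'⟩ := prod_bd k ρ₁ Q hk hρ₁ hQ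
  obtain ⟨P2, hP2, hP2'⟩ := prod_bd b ρ₂ Q hb hρ₂ hQ
  obtain ⟨P3, hP3, hP3'⟩ := prod_bd k₀ ρ₁ Q hk₀ hρ₁ hQ
  obtain ⟨Cu, hCu, hCu'⟩ := e_upper ρ₁ ρ₂ k k₀ b ℓ hρ₁ hρ₂ hk hk₀ hb
  obtain ⟨Cl, hCl, hCl'⟩ := e_lower ρ₁ ρ₂ k k₀ b ℓ hρ₁ hρ₂ hk hk₀ hb
  obtain ⟨P, hP, hPe⟩ : ∃ P, 0 < P ∧ P = P1 + P2 + P3 := ⟨_, by positivity, rfl⟩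
  obtain ⟨N, hNe⟩ : ∃ N, N = |N1| + |N2| + |N3| + 1 + 6 * P := ⟨_, rfl⟩
  have n1 : N ≥ N1 := by
    linarith [le_abs_self N1, abs_nonneg N2, abs_nonneg N3]
  have n2 : N ≥ N2 := by
    linarith [le_abs_self N2, abs_nonneg N1, abs_nonneg N3]
  have n3 : N ≥ N3 := by
    linarith [le_abs_self N3, abs_nonneg N1, abs_nonneg N2]
  have n4 : 1 + 6 * P ≤ N := by
    linarith [abs_nonneg N1, abs_nonneg N2, abs_nonneg N3]
  clear hNe
  have hN0 : 0 < N := by linarith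
  obtain ⟨K1, hK1⟩ := hN1 N n1
  obtain ⟨K2, hK2⟩ := hN2 N n2
  obtain ⟨K3, hK3⟩ := hN3 N n3
  clear hN1 hN2 hN3
  refine ⟨N, |K1| + |K2| + |K3| + Cu + P * Cl + P + N + 6 * P, by positivity, ?_⟩
  intro q ξ p p₁ p₂ s s₁ s₂ w w₁ w₂ hq hξ
  obtain ⟨U, hU⟩ : ∃ U, U = p ^ 2 + s ^ 2 + w ^ 2 := ⟨_, rfl⟩
  obtain ⟨Y, hY⟩ : ∃ Y, Y = p₁ ^ 2 + s₁ ^ 2 + w₁ ^ 2 := ⟨_, rfl⟩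
  obtain ⟨g, hg⟩ : ∃ g, g = k * p₁ ^ 2 + ρ₁ * p₂ ^ 2 + b * s₁ ^ 2 + ρ₂ * s₂ ^ 2 + k₀ * w₁ ^ 2
    + ρ₁ * w₂ ^ 2 := ⟨_, rfl⟩
  have hU0 : 0 ≤ U := by rw [hU]; positivity
  have eu := hCu' p p₁ p₂ s s₁ s₂ w w₁ w₂
  have el := hCl' p p₁ p₂ s s₁ s₂ w w₁ w₂
  have he0 : 0 ≤ eD ρ₁ ρ₂ k k₀ b ℓ p p₁ p₂ s s₁ s₂ w w₁ w₂ := by unfold eD; positivity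
  rw [← hU, ← hg] at eu el
  have hp0 : 0 ≤ k * p₁ ^ 2 + ρ₁ * p₂ ^ 2 := by positivity
  have hs0 : 0 ≤ b * s₁ ^ 2 + ρ₂ * s₂ ^ 2 := by positivity
  have hw0 : 0 ≤ k₀ * w₁ ^ 2 + ρ₁ * w₂ ^ 2 := by positivity
  have b1 := hP1' q ξ p₁ p₂ p hq hξ
  have b2 := hP2' q ξ s₁ s₂ s hq hξ
  have b3 := hP3' q ξ w₁ w₂ w hq hξ
  have bs : |q * (ρ₁ * p₂ * p₁ + ρ₂ * s₂ * s₁ + ρ₁ * w₂ * w₁)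
      + 1/2 * ξ * (ρ₁ * p * p₂ + ρ₂ * s * s₂ + ρ₁ * w * w₂)| ≤ P * g + P * U := by
    have c1 : P1 * (k * p₁ ^ 2 + ρ₁ * p₂ ^ 2) + P1 * p ^ 2 ≤
      P * (k * p₁ ^ 2 + ρ₁ * p₂ ^ 2) + P * p ^ 2 := by gcongr <;> linarith
    have c2 : P2 * (b * s₁ ^ 2 + ρ₂ * s₂ ^ 2) + P2 * s ^ 2 ≤
      P * (b * s₁ ^ 2 + ρ₂ * s₂ ^ 2) + P * s ^ 2 := by gcongr <;> linarith
    have c3 : P3 * (k₀ * w₁ ^ 2 + ρ₁ * w₂ ^ 2) + P3 * w ^ 2 ≤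
      P * (k₀ * w₁ ^ 2 + ρ₁ * w₂ ^ 2) + P * w ^ 2 := by gcongr <;> linarith
    rw [hg, hU]
    rw [abs_le] at b1 b2 b3 ⊢
    constructor
    · linarith [b1.1, b2.1, b3.1]
    · linarith [b1.2, b2.2, b3.2]
  have hl : lD ρ₁ ρ₂ k k₀ b ℓ N q ξ p p₁ p₂ s s₁ s₂ w w₁ w₂ =
     N * eD ρ₁ ρ₂ k k₀ b ℓ p p₁ p₂ s s₁ s₂ w w₁ w₂ +
      (q * (ρ₁ * p₂ * p₁ + ρ₂ * s₂ * s₁ + ρ₁ * w₂ * w₁)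
      + 1/2 * ξ * (ρ₁ * p * p₂ + ρ₂ * s * s₂ + ρ₁ * w * w₂)) := by unfold lD; ring
  rw [← hU, hl]
  clear b1 b2 b3 hP1' hP2' hP3' hl
  generalize hEE : eD ρ₁ ρ₂ k k₀ b ℓ p p₁ p₂ s s₁ s₂ w w₁ w₂ = e at *
  generalize (q * (ρ₁ * p₂ * p₁ + ρ₂ * s₂ * s₁ + ρ₁ * w₂ * w₁)
      + 1/2 * ξ * (ρ₁ * p * p₂ + ρ₂ * s * s₂ + ρ₁ * w * w₂)) = X at *
  have k1 : K1 * U ≤ |K1| * U := by gcongr; exact le_abs_self _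
  have k2 : K2 * U ≤ |K2| * U := by gcongr; exact le_abs_self _
  have k3 : K3 * U ≤ |K3| * U := by gcongr; exact le_abs_self _
  have k1' : 0 ≤ |K1| * U := by positivity
  have k2' : 0 ≤ |K2| * U := by positivity
  have k3' : 0 ≤ |K3| * U := by positivity
  have k1e : 0 ≤ |K1| * e := by positivity
  have k2e : 0 ≤ |K2| * e := by positivity
  have k3e : 0 ≤ |K3| * e := by positivity
  have u1 : 0 ≤ Cu * U := by positivity
  have u2 : 0 ≤ P * Cl * U := by positivity
  have u3 : 0 ≤ P * U := by positivity
  have u4 : 0 ≤ N * U := by positivity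
  have u1e : 0 ≤ Cu * e := by positivity
  have u2e : 0 ≤ P * Cl * e := by positivity
  have u3e : 0 ≤ P * e := by positivity
  have u5 : P * g ≤ P * (6 * e + Cl * U) := by gcongr
  have u6 : (1 + 6 * P) * e ≤ N * e := by gcongr
  refine ⟨?_, ?_, ?_⟩
  · have := (abs_le.1 bs).1
    linarith
  · have := (abs_le.1 bs).2
    linarith
  · intro ξ' d₁ d₂ d₃ F₁ F₂ F₃ hξ' hd1 hd1' hd1x hd2 hd2' hd2x hd3 hd3' hd3x hF1 hF2 hF3
    have hup : p ^ 2 ≤ U := by rw [hU]; linarith [sq_nonneg s, sq_nonneg w]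
    have hus : s ^ 2 ≤ U := by rw [hU]; linarith [sq_nonneg p, sq_nonneg w]
    have huw : w ^ 2 ≤ U := by rw [hU]; linarith [sq_nonneg s, sq_nonneg p]
    have husw : s ^ 2 + w ^ 2 ≤ U := by rw [hU]; linarith [sq_nonneg p]
    have hyp : p₁ ^ 2 ≤ Y := by rw [hY]; linarith [sq_nonneg s₁, sq_nonneg w₁]
    have hysw : s₁ ^ 2 + w₁ ^ 2 ≤ Y := by rw [hY]; linarith [sq_nonneg p₁]
    have hY0 : 0 ≤ Y := by rw [hY]; positivity
    have cfu : Cf * U ≤ C1 * U := by gcongr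
    have r1 := hK1 q ξ ξ' d₁ p₁ p₂ p (-(k₀ * ℓ ^ 2) * p) (k * s₁ + (k + k₀) * ℓ * w₁) F₁ U Y
      hq hξ hξ' hd1 hd1' hd1x hup
      (by rw [mul_pow, neg_sq]; exact mul_le_mul hc1 hup (sq_nonneg _) hC1.le) (hF1.trans cfu)
      ((lin2_sq _ _ _ _ _ hysw).trans (by gcongr))
    have r2 := hK2 q ξ ξ' d₂ s₁ s₂ s (-k * s + -k * ℓ * w) (-k * p₁) F₂ U Y
      hq hξ hξ' hd2 hd2' hd2x hus
      ((lin2_sq _ _ _ _ _ husw).trans (by gcongr)) (hF2.trans cfu)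
      (by rw [mul_pow]; exact mul_le_mul hc5 hyp (sq_nonneg _) hC2.le)
    have r3 := hK3 q ξ ξ' d₃ w₁ w₂ w (-k * ℓ * s + -k * ℓ ^ 2 * w) (-(k₀ + k) * ℓ * p₁) F₃ U Y
      hq hξ hξ' hd3 hd3' hd3x huw
      ((lin2_sq _ _ _ _ _ husw).trans (by gcongr)) (hF3.trans cfu)
      (by rw [mul_pow]; exact mul_le_mul hc6 hyp (sq_nonneg _) hC2.le)
    have y1 : 24 * δ * Y ≤ g := by
      have z1 : 24 * δ * p₁ ^ 2 ≤ k * p₁ ^ 2 := by gcongr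
      have z2 : 24 * δ * s₁ ^ 2 ≤ b * s₁ ^ 2 := by gcongr
      have z3 : 24 * δ * w₁ ^ 2 ≤ k₀ * w₁ ^ 2 := by gcongr
      have : 0 ≤ ρ₁ * p₂ ^ 2 := by positivity
      have : 0 ≤ ρ₁ * w₂ ^ 2 := by positivity
      have : 0 ≤ ρ₂ * s₂ ^ 2 := by positivity
      rw [hg, hY]; linarith
    have tot := add_le_add (add_le_add r1 r2) r3
    have final : dD ρ₁ ρ₂ k k₀ b ℓ N q ξ ξ' p p₁ p₂ s s₁ s₂ w w₁ w₂
          (d₁ * p₂ + F₁) (d₂ * s₂ + F₂) (d₃ * w₂ + F₃) ≤ -(1/4) * g + 3 * δ * Y + (K1 + K2 + K3) * U := by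
      rw [hg]
      refine le_trans (le_of_eq ?_) (tot.trans (le_of_eq ?_))
      · unfold dD; ring
      · ring
    linarith

theorem int_aux (L : ℝ) (G F H : ℝ → ℝ) (cG : Continuous G) (cF : Continuous F)
    (hF : ∫ x in (0:ℝ)..L, F x = 0) (h : ∀ x, H x = G x - F x) :
    ∫ x in (0:ℝ)..L, G x = ∫ x in (0:ℝ)..L, H x := by
  simp only [h]
  rw [intervalIntegral.integral_sub (cG.intervalIntegrable _ _) (cF.intervalIntegrable _ _), hF,
    sub_zero]

theorem linf_bound (ℓ L A : ℝ) (p p₁ s s₁ w w₁ : ℝ → ℝ) (hL : 0 < L)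
    (hp : ∀ x, HasDerivAt p (p₁ x) x) (hs : ∀ x, HasDerivAt s (s₁ x) x)
    (hw : ∀ x, HasDerivAt w (w₁ x) x) (cp : Continuous p₁) (cs : Continuous s₁)
    (cw : Continuous w₁) (p0 : p 0 = 0) (s0 : s 0 = 0) (w0 : w 0 = 0)
    (h1 : ∫ x in (0:ℝ)..L, s₁ x ^ 2 ≤ A) (h2 : ∫ x in (0:ℝ)..L, (p₁ x + s x + ℓ * w x) ^ 2 ≤ A)
    (h3 : ∫ x in (0:ℝ)..L, (w₁ x - ℓ * p x) ^ 2 ≤ A) (x : ℝ) (hx : x ∈ Set.Icc 0 L) :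
    |p x| ≤ √(Real.exp (2 * L) * (3 * A)) ∧ |s x| ≤ √(Real.exp (2 * L) * (3 * A)) ∧
      |w x| ≤ √(Real.exp (2 * L) * (3 * A)) := by
  have cpp : Continuous p := continuous_iff_continuousAt.2 fun x => (hp x).continuousAt
  have css : Continuous s := continuous_iff_continuousAt.2 fun x => (hs x).continuousAt
  have cww : Continuous w := continuous_iff_continuousAt.2 fun x => (hw x).continuousAt
  set μ : ℝ → ℝ := fun x => s₁ x ^ 2 + (p₁ x + s x + ℓ * w x) ^ 2 + (w₁ x - ℓ * p x) ^ 2 with hμ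
  have cμ : Continuous μ := by rw [hμ]; fun_prop
  have μ0 : ∀ x, 0 ≤ μ x := fun x => by rw [hμ]; positivity
  have hμL : ∫ x in (0:ℝ)..L, μ x ≤ 3 * A := by
    rw [hμ, intervalIntegral.integral_add, intervalIntegral.integral_add]
    · linarith
    all_goals apply Continuous.intervalIntegrable; fun_prop
  set Y : ℝ → ℝ := fun x => Real.exp (-2 * x) * (p x * p x + s x * s x + w x * w x)
    - ∫ y in (0:ℝ)..x, μ y with hY
  have hd : ∀ x, HasDerivAt Y ((Real.exp (-2 * x) * (-2 * 1)) * (p x * p x + s x * s x + w x * w x)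
      + Real.exp (-2 * x) * ((p₁ x * p x + p x * p₁ x) + (s₁ x * s x + s x * s₁ x)
        + (w₁ x * w x + w x * w₁ x)) - μ x) x := by
    intro x
    exact ((((hasDerivAt_id x).const_mul (-2)).exp.mul
      ((((hp x).mul (hp x)).add ((hs x).mul (hs x))).add ((hw x).mul (hw x))))).sub
      (cμ.integral_hasStrictDerivAt 0 x).hasDerivAt
  have anti : AntitoneOn Y (Set.Icc 0 L) := by
    refine antitoneOn_of_deriv_nonpos (convex_Icc _ _)
      (fun x _ => (hd x).continuousAt.continuousWithinAt)
      (fun x _ => (hd x).differentiableAt.differentiableWithinAt) ?_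
    intro x hx
    rw [interior_Icc] at hx
    rw [(hd x).deriv]
    have e1 : Real.exp (-2 * x) ≤ 1 := Real.exp_le_one_iff.2 (by linarith [hx.1])
    have e0 := Real.exp_pos (-2 * x)
    have k1 : (-2 * 1) * (p x * p x + s x * s x + w x * w x) + ((p₁ x * p x + p x * p₁ x)
      + (s₁ x * s x + s x * s₁ x) + (w₁ x * w x + w x * w₁ x)) ≤ μ x := by
      rw [hμ]
      have : p₁ x * p x + w₁ x * w x = (p₁ x + s x + ℓ * w x) * p x - s x * p x
        + (w₁ x - ℓ * p x) * w x := by ring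
      nlinarith [sq_nonneg (p₁ x + s x + ℓ * w x - p x), sq_nonneg (w₁ x - ℓ * p x - w x),
        sq_nonneg (s₁ x - s x), sq_nonneg (s x + p x), sq_nonneg (w x)]
    have k2 := mul_le_mul_of_nonneg_left k1 e0.le
    have k3 : Real.exp (-2 * x) * μ x ≤ 1 * μ x := mul_le_mul_of_nonneg_right e1 (μ0 x)
    linarith
  have hY0 : Y 0 = 0 := by simp [hY, p0, s0, w0]
  have hYx : Y x ≤ 0 := hY0 ▸ anti ⟨le_rfl, hL.le⟩ hx hx.1
  have hi : ∫ y in (0:ℝ)..x, μ y ≤ ∫ y in (0:ℝ)..L, μ y :=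
    intervalIntegral.integral_mono_interval le_rfl hx.1 hx.2
      (Filter.Eventually.of_forall μ0) (cμ.intervalIntegrable _ _)
  have hb : Real.exp (-2 * x) * (p x * p x + s x * s x + w x * w x) ≤ 3 * A := by
    have : Y x = Real.exp (-2 * x) * (p x * p x + s x * s x + w x * w x)
      - ∫ y in (0:ℝ)..x, μ y := rfl
    linarith
  have hy : p x * p x + s x * s x + w x * w x ≤ Real.exp (2 * L) * (3 * A) := by
    have hA : 0 ≤ 3 * A := le_trans (by
      have : 0 ≤ p x * p x + s x * s x + w x * w x := by nlinarith [sq_nonneg (p x), sq_nonneg (s x), sq_nonneg (w x)]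
      positivity) hb
    calc p x * p x + s x * s x + w x * w x
        = Real.exp (2 * x) * (Real.exp (-2 * x) * (p x * p x + s x * s x + w x * w x)) := by
          rw [← mul_assoc, ← Real.exp_add]; simp
      _ ≤ Real.exp (2 * L) * (3 * A) := by
          have := hx.2
          have : 0 ≤ Real.exp (-2 * x) * (p x * p x + s x * s x + w x * w x) :=
            mul_nonneg (Real.exp_pos _).le
              (by nlinarith [sq_nonneg (p x), sq_nonneg (s x), sq_nonneg (w x)])
          gcongr
  refine ⟨Real.abs_le_sqrt ?_, Real.abs_le_sqrt ?_, Real.abs_le_sqrt ?_⟩ <;>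
  nlinarith [sq_nonneg (p x), sq_nonneg (s x), sq_nonneg (w x)]

theorem lD_hasDeriv (ρ₁ ρ₂ k k₀ b ℓ N q ξ t : ℝ) {p p₁ p₂ s s₁ s₂ w w₁ w₂ : ℝ → ℝ}
    {p' p₁' p₂' s' s₁' s₂' w' w₁' w₂' : ℝ}
    (hp : HasDerivAt p p' t) (hp₁ : HasDerivAt p₁ p₁' t) (hp₂ : HasDerivAt p₂ p₂' t)
    (hs : HasDerivAt s s' t) (hs₁ : HasDerivAt s₁ s₁' t) (hs₂ : HasDerivAt s₂ s₂' t)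
    (hw : HasDerivAt w w' t) (hw₁ : HasDerivAt w₁ w₁' t) (hw₂ : HasDerivAt w₂ w₂' t) :
    HasDerivAt (fun τ => lD ρ₁ ρ₂ k k₀ b ℓ N q ξ (p τ) (p₁ τ) (p₂ τ) (s τ) (s₁ τ) (s₂ τ)
      (w τ) (w₁ τ) (w₂ τ))
      (N * (ρ₁ * p₂ t * p₂' + ρ₂ * s₂ t * s₂' + ρ₁ * w₂ t * w₂' + b * s₁ t * s₁'
        + k * (p₁ t + s t + ℓ * w t) * (p₁' + s' + ℓ * w') + k₀ * (w₁ t - ℓ * p t) * (w₁' - ℓ * p'))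
      + q * (ρ₁ * (p₂' * p₁ t + p₂ t * p₁') + ρ₂ * (s₂' * s₁ t + s₂ t * s₁')
        + ρ₁ * (w₂' * w₁ t + w₂ t * w₁'))
      + 1/2 * ξ * (ρ₁ * (p' * p₂ t + p t * p₂') + ρ₂ * (s' * s₂ t + s t * s₂')
        + ρ₁ * (w' * w₂ t + w t * w₂'))) t := by
  have E := ((((((hp₂.mul hp₂).const_mul ρ₁).add ((hs₂.mul hs₂).const_mul ρ₂)).add
    ((hw₂.mul hw₂).const_mul ρ₁)).add ((hs₁.mul hs₁).const_mul b)).add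
    ((((hp₁.add hs).add (hw.const_mul ℓ)).mul ((hp₁.add hs).add (hw.const_mul ℓ))).const_mul k)).add
    (((hw₁.sub (hp.const_mul ℓ)).mul (hw₁.sub (hp.const_mul ℓ))).const_mul k₀)
  have I := ((((hp₂.mul hp₁).const_mul ρ₁).add ((hs₂.mul hs₁).const_mul ρ₂)).add
    ((hw₂.mul hw₁).const_mul ρ₁)).const_mul q
  have J := ((((hp.mul hp₂).const_mul ρ₁).add ((hs.mul hs₂).const_mul ρ₂)).add
    ((hw.mul hw₂).const_mul ρ₁)).const_mul (1/2 * ξ)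
  have T := ((E.const_mul (N * (1/2))).add I).add J
  refine HasDerivAt.congr_deriv (T.congr_of_eventuallyEq (Filter.Eventually.of_forall fun τ => ?_)) ?_
  · simp only [lD, eD, Pi.add_apply, Pi.mul_apply, Pi.sub_apply]; ring
  · simp only [Pi.add_apply, Pi.mul_apply, Pi.sub_apply]; ring

theorem flux_hasDeriv (ρ₁ ρ₂ k k₀ b ℓ N x : ℝ) {q ξ p p₁ p₂ s s₁ s₂ w w₁ w₂ : ℝ → ℝ}
    {q' ξ' p' p₁' p₂' s' s₁' s₂' w' w₁' w₂' : ℝ} (hq : HasDerivAt q q' x) (hξ : HasDerivAt ξ ξ' x)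
    (hp : HasDerivAt p p' x) (hp₁ : HasDerivAt p₁ p₁' x) (hp₂ : HasDerivAt p₂ p₂' x)
    (hs : HasDerivAt s s' x) (hs₁ : HasDerivAt s₁ s₁' x) (hs₂ : HasDerivAt s₂ s₂' x)
    (hw : HasDerivAt w w' x) (hw₁ : HasDerivAt w₁ w₁' x) (hw₂ : HasDerivAt w₂ w₂' x) :
    HasDerivAt (fun y => N * (k * p₂ y * (p₁ y + s y + ℓ * w y) + b * s₂ y * s₁ y
        + k₀ * w₂ y * (w₁ y - ℓ * p y))
      + 1/2 * q y * (k * (p₁ y * p₁ y) + ρ₁ * (p₂ y * p₂ y) + b * (s₁ y * s₁ y) + ρ₂ * (s₂ y * s₂ y)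
        + k₀ * (w₁ y * w₁ y) + ρ₁ * (w₂ y * w₂ y))
      + 1/2 * ξ y * (k * (p y * p₁ y) + b * (s y * s₁ y) + k₀ * (w y * w₁ y)))
      (N * (k * p₂' * (p₁ x + s x + ℓ * w x) + k * p₂ x * (p₁' + s' + ℓ * w')
        + b * s₂' * s₁ x + b * s₂ x * s₁' + k₀ * w₂' * (w₁ x - ℓ * p x)
        + k₀ * w₂ x * (w₁' - ℓ * p'))
      + 1/2 * q' * (k * (p₁ x * p₁ x) + ρ₁ * (p₂ x * p₂ x) + b * (s₁ x * s₁ x) + ρ₂ * (s₂ x * s₂ x)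
        + k₀ * (w₁ x * w₁ x) + ρ₁ * (w₂ x * w₂ x))
      + q x * (k * (p₁ x * p₁') + ρ₁ * (p₂ x * p₂') + b * (s₁ x * s₁') + ρ₂ * (s₂ x * s₂')
        + k₀ * (w₁ x * w₁') + ρ₁ * (w₂ x * w₂'))
      + 1/2 * ξ' * (k * (p x * p₁ x) + b * (s x * s₁ x) + k₀ * (w x * w₁ x))
      + 1/2 * ξ x * (k * (p' * p₁ x + p x * p₁') + b * (s' * s₁ x + s x * s₁')
        + k₀ * (w' * w₁ x + w x * w₁'))) x := by
  have E := (((hp₂.mul ((hp₁.add hs).add (hw.const_mul ℓ))).const_mul k).add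
    ((hs₂.mul hs₁).const_mul b)).add ((hw₂.mul (hw₁.sub (hp.const_mul ℓ))).const_mul k₀)
  have I := hq.mul (((((((hp₁.mul hp₁).const_mul k).add ((hp₂.mul hp₂).const_mul ρ₁)).add
    ((hs₁.mul hs₁).const_mul b)).add ((hs₂.mul hs₂).const_mul ρ₂)).add
    ((hw₁.mul hw₁).const_mul k₀)).add ((hw₂.mul hw₂).const_mul ρ₁))
  have J := hξ.mul ((((hp.mul hp₁).const_mul k).add ((hs.mul hs₁).const_mul b)).add
    ((hw.mul hw₁).const_mul k₀))
  have T := ((E.const_mul N).add (I.const_mul (1/2))).add (J.const_mul (1/2))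
  refine HasDerivAt.congr_deriv (T.congr_of_eventuallyEq (Filter.Eventually.of_forall fun τ => ?_)) ?_
  · simp only [Pi.add_apply, Pi.mul_apply, Pi.sub_apply]; ring
  · simp only [Pi.add_apply, Pi.mul_apply, Pi.sub_apply]; ring

theorem lyap_deriv (ρ₁ ρ₂ k k₀ b ℓ L N : ℝ) (q ξ ξ' : ℝ → ℝ)
    (hq : ∀ x, HasDerivAt q (1 - ξ x) x) (hξ : ∀ x, HasDerivAt ξ (ξ' x) x) (cξ' : Continuous ξ')
    (q0 : q 0 = 0) (qL : q L = 0)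
    {p p₁ p₂ p₁₁ p₁₂ p₂₂ s s₁ s₂ s₁₁ s₁₂ s₂₂ w w₁ w₂ w₁₁ w₁₂ w₂₂ : ℝ → ℝ → ℝ}
    (hp : Parts p p₁ p₂ p₁₁ p₁₂ p₂₂) (hs : Parts s s₁ s₂ s₁₁ s₁₂ s₂₂)
    (hw : Parts w w₁ w₂ w₁₁ w₁₂ w₂₂) (t : ℝ)
    (hp0 : p 0 t = 0) (hpL : p L t = 0) (hs0 : s 0 t = 0) (hsL : s L t = 0)
    (hw0 : w 0 t = 0) (hwL : w L t = 0)
    (hp0' : p₂ 0 t = 0) (hpL' : p₂ L t = 0) (hs0' : s₂ 0 t = 0) (hsL' : s₂ L t = 0)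
    (hw0' : w₂ 0 t = 0) (hwL' : w₂ L t = 0) :
    HasDerivAt (fun τ => ∫ x in (0:ℝ)..L, lD ρ₁ ρ₂ k k₀ b ℓ N (q x) (ξ x)
        (p x τ) (p₁ x τ) (p₂ x τ) (s x τ) (s₁ x τ) (s₂ x τ) (w x τ) (w₁ x τ) (w₂ x τ))
      (∫ x in (0:ℝ)..L, dD ρ₁ ρ₂ k k₀ b ℓ N (q x) (ξ x) (ξ' x)
        (p x t) (p₁ x t) (p₂ x t) (s x t) (s₁ x t) (s₂ x t) (w x t) (w₁ x t) (w₂ x t)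
        (k * p₁₁ x t + k * s₁ x t + (k + k₀) * ℓ * w₁ x t - k₀ * ℓ ^ 2 * p x t - ρ₁ * p₂₂ x t)
        (b * s₁₁ x t - k * p₁ x t - k * s x t - k * ℓ * w x t - ρ₂ * s₂₂ x t)
        (k₀ * w₁₁ x t - (k₀ + k) * ℓ * p₁ x t - k * ℓ * s x t - k * ℓ ^ 2 * w x t - ρ₁ * w₂₂ x t))
      t := by
  have cq : Continuous q := continuous_iff_continuousAt.2 fun x => (hq x).continuousAt
  have cξ : Continuous ξ := continuous_iff_continuousAt.2 fun x => (hξ x).continuousAt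
  obtain ⟨a1, a2, a3, a4, a5, a6, -, -, -, -, -, -⟩ := id hp
  obtain ⟨b1, b2, b3, b4, b5, b6, -, -, -, -, -, -⟩ := id hs
  obtain ⟨c1, c2, c3, c4, c5, c6, -, -, -, -, -, -⟩ := id hw
  have main := leibniz L (G := fun x τ => lD ρ₁ ρ₂ k k₀ b ℓ N (q x) (ξ x)
        (p x τ) (p₁ x τ) (p₂ x τ) (s x τ) (s₁ x τ) (s₂ x τ) (w x τ) (w₁ x τ) (w₂ x τ))
    (by unfold lD eD; fun_prop) (by fun_prop)
    (fun x τ => lD_hasDeriv ρ₁ ρ₂ k k₀ b ℓ N (q x) (ξ x) τ (hp.dt x τ) (hp.dxt x τ) (hp.dtt x τ)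
      (hs.dt x τ) (hs.dxt x τ) (hs.dtt x τ) (hw.dt x τ) (hw.dxt x τ) (hw.dtt x τ)) t
  refine main.congr_deriv ?_
  have sl : ∀ {f : ℝ → ℝ → ℝ}, Continuous (fun z : ℝ × ℝ => f z.1 z.2) →
    Continuous (fun x => f x t) := fun h => h.comp (Continuous.prodMk_left t)
  have a1 := sl a1
  have a2 := sl a2
  have a3 := sl a3
  have a4 := sl a4
  have a5 := sl a5
  have a6 := sl a6
  have b1 := sl b1
  have b2 := sl b2
  have b3 := sl b3
  have b4 := sl b4
  have b5 := sl b5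
  have b6 := sl b6
  have c1 := sl c1
  have c2 := sl c2
  have c3 := sl c3
  have c4 := sl c4
  have c5 := sl c5
  have c6 := sl c6
  have hflux := intervalIntegral.integral_eq_sub_of_hasDerivAt (a := 0) (b := L)
    (fun x _ => flux_hasDeriv ρ₁ ρ₂ k k₀ b ℓ N x (hq x) (hξ x) (hp.dx x t) (hp.dxx x t) (hp.dtx x t)
      (hs.dx x t) (hs.dxx x t) (hs.dtx x t) (hw.dx x t) (hw.dxx x t) (hw.dtx x t))
    (by apply Continuous.intervalIntegrable; fun_prop)
  simp only [hp0, hpL, hs0, hsL, hw0, hwL, hp0', hpL', hs0', hsL', hw0', hwL', q0, qL, mul_zero,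
    zero_mul, add_zero, sub_zero] at hflux
  refine int_aux L _ _ _ ?_ ?_ hflux ?_
  · fun_prop
  · fun_prop
  · intro x
    simp only [dD]
    ring

theorem H_eq (ρ₁ ρ₂ k k₀ b ℓ L t : ℝ)
    {p p₁ p₂ p₁₁ p₁₂ p₂₂ s s₁ s₂ s₁₁ s₁₂ s₂₂ w w₁ w₂ w₁₁ w₁₂ w₂₂ : ℝ → ℝ → ℝ}
    (hp : Parts p p₁ p₂ p₁₁ p₁₂ p₂₂) (hs : Parts s s₁ s₂ s₁₁ s₁₂ s₂₂)
    (hw : Parts w w₁ w₂ w₁₁ w₁₂ w₂₂) :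
    HnormSq ρ₁ ρ₂ b k k₀ ℓ L p s w t = 2 * ∫ x in (0:ℝ)..L, eD ρ₁ ρ₂ k k₀ b ℓ
      (p x t) (p₁ x t) (p₂ x t) (s x t) (s₁ x t) (s₂ x t) (w x t) (w₁ x t) (w₂ x t) := by
  have sl : ∀ {f : ℝ → ℝ → ℝ}, Continuous (fun z : ℝ × ℝ => f z.1 z.2) →
    Continuous (fun x => f x t) := fun h => h.comp (Continuous.prodMk_left t)
  have a1 := sl hp.c
  have a2 := sl hp.cx
  have a3 := sl hp.ct
  have b1 := sl hs.c
  have b2 := sl hs.cx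
  have b3 := sl hs.ct
  have c1 := sl hw.c
  have c2 := sl hw.cx
  have c3 := sl hw.ct
  unfold HnormSq eD
  simp only [(hp.dt _ _).deriv, (hp.dx _ _).deriv, (hs.dt _ _).deriv, (hs.dx _ _).deriv,
    (hw.dt _ _).deriv, (hw.dx _ _).deriv]
  rw [intervalIntegral.integral_const_mul]
  rw [intervalIntegral.integral_add, intervalIntegral.integral_add, intervalIntegral.integral_add,
    intervalIntegral.integral_add, intervalIntegral.integral_add]
  · simp only [intervalIntegral.integral_const_mul]
    ring
  all_goals apply Continuous.intervalIntegrable; fun_prop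

theorem H_linf (ρ₁ ρ₂ k k₀ b ℓ L R t : ℝ)
    (hρ₁ : 0 < ρ₁) (hρ₂ : 0 < ρ₂) (hk : 0 < k) (hk₀ : 0 < k₀) (hb : 0 < b) (hL : 0 < L)
    {p p₁ p₂ p₁₁ p₁₂ p₂₂ s s₁ s₂ s₁₁ s₁₂ s₂₂ w w₁ w₂ w₁₁ w₁₂ w₂₂ : ℝ → ℝ → ℝ}
    (hp : Parts p p₁ p₂ p₁₁ p₁₂ p₂₂) (hs : Parts s s₁ s₂ s₁₁ s₁₂ s₂₂)
    (hw : Parts w w₁ w₂ w₁₁ w₁₂ w₂₂) (p0 : p 0 t = 0) (s0 : s 0 t = 0) (w0 : w 0 t = 0)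
    (hH : √(HnormSq ρ₁ ρ₂ b k k₀ ℓ L p s w t) ≤ R) (x : ℝ) (hx : x ∈ Set.Icc 0 L) :
    |p x t| ≤ √(Real.exp (2 * L) * (3 * (R ^ 2 / b + R ^ 2 / k + R ^ 2 / k₀))) ∧
    |s x t| ≤ √(Real.exp (2 * L) * (3 * (R ^ 2 / b + R ^ 2 / k + R ^ 2 / k₀))) ∧
    |w x t| ≤ √(Real.exp (2 * L) * (3 * (R ^ 2 / b + R ^ 2 / k + R ^ 2 / k₀))) := by
  have sl : ∀ {f : ℝ → ℝ → ℝ}, Continuous (fun z : ℝ × ℝ => f z.1 z.2) →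
    Continuous (fun x => f x t) := fun h => h.comp (Continuous.prodMk_left t)
  have h := (Real.sqrt_le_iff.1 hH).2
  unfold HnormSq at h
  simp only [(hp.dt _ _).deriv, (hp.dx _ _).deriv, (hs.dt _ _).deriv, (hs.dx _ _).deriv,
    (hw.dt _ _).deriv, (hw.dx _ _).deriv] at h
  have nn : ∀ (c : ℝ) (f : ℝ → ℝ), 0 < c → 0 ≤ c * ∫ x in (0:ℝ)..L, f x ^ 2 := fun c f hc =>
    mul_nonneg hc.le (intervalIntegral.integral_nonneg hL.le fun x _ => sq_nonneg _)
  have i1 := nn ρ₁ (fun x => p₂ x t) hρ₁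
  have i2 := nn ρ₂ (fun x => s₂ x t) hρ₂
  have i3 := nn ρ₁ (fun x => w₂ x t) hρ₁
  have i4 := nn b (fun x => s₁ x t) hb
  have i5 := nn k (fun x => p₁ x t + s x t + ℓ * w x t) hk
  have i6 := nn k₀ (fun x => w₁ x t - ℓ * p x t) hk₀
  have r1 : 0 ≤ R ^ 2 / b := by positivity
  have r2 : 0 ≤ R ^ 2 / k := by positivity
  have r3 : 0 ≤ R ^ 2 / k₀ := by positivity
  refine linf_bound ℓ L _ (fun x => p x t) (fun x => p₁ x t) (fun x => s x t) (fun x => s₁ x t)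
    (fun x => w x t) (fun x => w₁ x t) hL (fun x => hp.dx x t) (fun x => hs.dx x t)
    (fun x => hw.dx x t) (sl hp.cx) (sl hs.cx) (sl hw.cx) p0 s0 w0 ?_ ?_ ?_ x hx
  · have : ∫ x in (0:ℝ)..L, s₁ x t ^ 2 ≤ R ^ 2 / b := by
      rw [le_div_iff₀ hb]; linarith
    linarith
  · have : ∫ x in (0:ℝ)..L, (p₁ x t + s x t + ℓ * w x t) ^ 2 ≤ R ^ 2 / k := by
      rw [le_div_iff₀ hk]; linarith
    linarith
  · have : ∫ x in (0:ℝ)..L, (w₁ x t - ℓ * p x t) ^ 2 ≤ R ^ 2 / k₀ := by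
      rw [le_div_iff₀ hk₀]; linarith
    linarith

theorem gron_s19 (V V' : ℝ → ℝ) (ω B T : ℝ) (hω : 0 < ω) (hB : 0 ≤ B) (hT : 0 ≤ T)
    (hd : ∀ t, 0 ≤ t → HasDerivAt V (V' t) t)
    (h : ∀ t ∈ Set.Icc 0 T, V' t ≤ -ω * V t + B) :
    V T ≤ Real.exp (-ω * T) * V 0 + B / ω := by
  have hd' : ∀ t, 0 ≤ t → HasDerivAt (fun t => Real.exp (ω * t) * (V t - B / ω))
      (Real.exp (ω * t) * (ω * 1) * (V t - B / ω) + Real.exp (ω * t) * V' t) t := fun t ht =>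
    ((hasDerivAt_id t).const_mul ω).exp.mul ((hd t ht).sub_const _)
  have anti : AntitoneOn (fun t => Real.exp (ω * t) * (V t - B / ω)) (Set.Icc 0 T) := by
    refine antitoneOn_of_deriv_nonpos (convex_Icc _ _)
      (fun x hx => (hd' x hx.1).continuousAt.continuousWithinAt)
      (fun x hx => (hd' x ?_).differentiableAt.differentiableWithinAt) ?_
    · exact (interior_subset hx).1
    · intro x hx
      have hx' := interior_subset hx
      rw [(hd' x hx'.1).deriv]
      have e := Real.exp_pos (ω * x)
      have := mul_le_mul_of_nonneg_left (h x hx') e.le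
      have z : ω * (B / ω) = B := by field_simp
      have : Real.exp (ω * x) * (ω * 1) * (V x - B / ω) =
        Real.exp (ω * x) * (ω * V x - B) := by
        linear_combination (-Real.exp (ω * x)) * z
      linarith
  have h1 := anti ⟨le_rfl, hT⟩ ⟨hT, le_rfl⟩ hT
  simp only [mul_zero, Real.exp_zero, one_mul] at h1
  have h2 := mul_le_mul_of_nonneg_left h1 (Real.exp_pos (-ω * T)).le
  rw [← mul_assoc, ← Real.exp_add] at h2
  have : -ω * T + ω * T = 0 := by ring
  rw [this, Real.exp_zero, one_mul] at h2
  have : 0 ≤ Real.exp (-ω * T) * (B / ω) := by positivity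
  linarith

theorem bc_deriv {p p₁ p₂ p₁₁ p₁₂ p₂₂ : ℝ → ℝ → ℝ} (hp : Parts p p₁ p₂ p₁₁ p₁₂ p₂₂) (a : ℝ)
    (h : ∀ t, 0 ≤ t → p a t = 0) (t : ℝ) (ht : 0 ≤ t) : p₂ a t = 0 := by
  have h1 : HasDerivWithinAt (fun τ => p a τ) (p₂ a t) (Set.Ici t) t := (hp.dt a t).hasDerivWithinAt
  have h2 : HasDerivWithinAt (fun τ => p a τ) 0 (Set.Ici t) t :=
    (hasDerivWithinAt_const t (Set.Ici t) (0:ℝ)).congr (fun y hy => h y (ht.trans hy)) (h t ht)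
  exact (uniqueDiffWithinAt_Ici t).eq_deriv _ h1 h2

theorem sol_parts {ρ₁ ρ₂ k k₀ b ℓ L : ℝ}
    {a₁ a₂ a₃ g₁ g₂ g₃ : ℝ → ℝ} {f₁ f₂ f₃ : ℝ → ℝ → ℝ → ℝ} {p s w : ℝ → ℝ → ℝ}
    (h : IsBresseSolutionInfty 2 ρ₁ ρ₂ k k₀ b ℓ L a₁ a₂ a₃ g₁ g₂ g₃ f₁ f₂ f₃ p s w) :
    ∃ p₁ p₂ p₁₁ p₁₂ p₂₂ s₁ s₂ s₁₁ s₁₂ s₂₂ w₁ w₂ w₁₁ w₁₂ w₂₂,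
      Parts p p₁ p₂ p₁₁ p₁₂ p₂₂ ∧ Parts s s₁ s₂ s₁₁ s₁₂ s₂₂ ∧ Parts w w₁ w₂ w₁₁ w₁₂ w₂₂ ∧
      (∀ t, 0 ≤ t → p 0 t = 0 ∧ p L t = 0 ∧ s 0 t = 0 ∧ s L t = 0 ∧ w 0 t = 0 ∧ w L t = 0) ∧
      (∀ x ∈ Set.Icc 0 L, ∀ t, 0 ≤ t →
        (k * p₁₁ x t + k * s₁ x t + (k + k₀) * ℓ * w₁ x t - k₀ * ℓ ^ 2 * p x t - ρ₁ * p₂₂ x t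
          = a₁ x * g₁ (p₂ x t) + f₁ (p x t) (s x t) (w x t)) ∧
        (b * s₁₁ x t - k * p₁ x t - k * s x t - k * ℓ * w x t - ρ₂ * s₂₂ x t
          = a₂ x * g₂ (s₂ x t) + f₂ (p x t) (s x t) (w x t)) ∧
        (k₀ * w₁₁ x t - (k₀ + k) * ℓ * p₁ x t - k * ℓ * s x t - k * ℓ ^ 2 * w x t - ρ₁ * w₂₂ x t
          = a₃ x * g₃ (w₂ x t) + f₃ (p x t) (s x t) (w x t))) := by
  obtain ⟨cp, cs, cw, bc, pde⟩ := h
  obtain ⟨p₁, p₂, p₁₁, p₁₂, p₂₂, hp⟩ := parts_of_contDiff (f := p) (by exact_mod_cast cp)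
  obtain ⟨s₁, s₂, s₁₁, s₁₂, s₂₂, hs⟩ := parts_of_contDiff (f := s) (by exact_mod_cast cs)
  obtain ⟨w₁, w₂, w₁₁, w₁₂, w₂₂, hw⟩ := parts_of_contDiff (f := w) (by exact_mod_cast cw)
  refine ⟨p₁, p₂, p₁₁, p₁₂, p₂₂, s₁, s₂, s₁₁, s₁₂, s₂₂, w₁, w₂, w₁₁, w₁₂, w₂₂, hp, hs, hw,
    fun t ht => bc t ht, ?_⟩
  intro x hx t ht
  obtain ⟨e1, e2, e3⟩ := pde x hx t ht
  have dt : ∀ {f f₁ f₂ f₁₁ f₁₂ f₂₂}, Parts f f₁ f₂ f₁₁ f₁₂ f₂₂ →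
      (deriv (fun s => f x s)) = fun s => f₂ x s := fun h => funext fun s => (h.dt x s).deriv
  rw [dt hp, (hp.dtt x t).deriv] at e1
  rw [dt hs, (hs.dtt x t).deriv] at e2
  rw [dt hw, (hw.dtt x t).deriv] at e3
  simp only [(hp.dx _ _).deriv, (hs.dx _ _).deriv, (hw.dx _ _).deriv] at e1 e2 e3
  have q1 : deriv (fun y => p₁ y t + s y t + ℓ * w y t) x = p₁₁ x t + s₁ x t + ℓ * w₁ x t :=
    (((hp.dxx x t).add (hs.dx x t)).add ((hw.dx x t).const_mul ℓ)).deriv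
  have q3 : deriv (fun y => w₁ y t - ℓ * p y t) x = w₁₁ x t - ℓ * p₁ x t :=
    ((hw.dxx x t).sub ((hp.dx x t).const_mul ℓ)).deriv
  rw [q1] at e1
  rw [(hs.dxx x t).deriv] at e2
  rw [q3] at e3
  refine ⟨?_, ?_, ?_⟩
  · linear_combination -e1
  · linear_combination -e2
  · linear_combination -e3

theorem core (ρ₁ ρ₂ k k₀ b ℓ L N C B T : ℝ) (hL : 0 < L) (hC : 0 < C) (hT : 0 ≤ T)
    (q ξ ξ' : ℝ → ℝ)
    (hq : ∀ x, HasDerivAt q (1 - ξ x) x) (hξ : ∀ x, HasDerivAt ξ (ξ' x) x) (cξ' : Continuous ξ')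
    (q0 : q 0 = 0) (qL : q L = 0)
    {p p₁ p₂ p₁₁ p₁₂ p₂₂ s s₁ s₂ s₁₁ s₁₂ s₂₂ w w₁ w₂ w₁₁ w₁₂ w₂₂ : ℝ → ℝ → ℝ}
    (hp : Parts p p₁ p₂ p₁₁ p₁₂ p₂₂) (hs : Parts s s₁ s₂ s₁₁ s₁₂ s₂₂)
    (hw : Parts w w₁ w₂ w₁₁ w₁₂ w₂₂)
    (bc : ∀ t, 0 ≤ t → p 0 t = 0 ∧ p L t = 0 ∧ s 0 t = 0 ∧ s L t = 0 ∧ w 0 t = 0 ∧ w L t = 0)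
    (H1 : ∀ x ∈ Set.Icc 0 L, ∀ t, 0 ≤ t →
      eD ρ₁ ρ₂ k k₀ b ℓ (p x t) (p₁ x t) (p₂ x t) (s x t) (s₁ x t) (s₂ x t)
        (w x t) (w₁ x t) (w₂ x t) - C * (p x t ^ 2 + s x t ^ 2 + w x t ^ 2) ≤
      lD ρ₁ ρ₂ k k₀ b ℓ N (q x) (ξ x) (p x t) (p₁ x t) (p₂ x t) (s x t) (s₁ x t) (s₂ x t)
        (w x t) (w₁ x t) (w₂ x t))
    (H2 : ∀ x ∈ Set.Icc 0 L, ∀ t, 0 ≤ t →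
      lD ρ₁ ρ₂ k k₀ b ℓ N (q x) (ξ x) (p x t) (p₁ x t) (p₂ x t) (s x t) (s₁ x t) (s₂ x t)
        (w x t) (w₁ x t) (w₂ x t) ≤
      C * (eD ρ₁ ρ₂ k k₀ b ℓ (p x t) (p₁ x t) (p₂ x t) (s x t) (s₁ x t) (s₂ x t)
        (w x t) (w₁ x t) (w₂ x t) + (p x t ^ 2 + s x t ^ 2 + w x t ^ 2)))
    (H3 : ∀ x ∈ Set.Icc 0 L, ∀ t, 0 ≤ t →
      dD ρ₁ ρ₂ k k₀ b ℓ N (q x) (ξ x) (ξ' x)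
        (p x t) (p₁ x t) (p₂ x t) (s x t) (s₁ x t) (s₂ x t) (w x t) (w₁ x t) (w₂ x t)
        (k * p₁₁ x t + k * s₁ x t + (k + k₀) * ℓ * w₁ x t - k₀ * ℓ ^ 2 * p x t - ρ₁ * p₂₂ x t)
        (b * s₁₁ x t - k * p₁ x t - k * s x t - k * ℓ * w x t - ρ₂ * s₂₂ x t)
        (k₀ * w₁₁ x t - (k₀ + k) * ℓ * p₁ x t - k * ℓ * s x t - k * ℓ ^ 2 * w x t - ρ₁ * w₂₂ x t) ≤
      -(1/16) * eD ρ₁ ρ₂ k k₀ b ℓ (p x t) (p₁ x t) (p₂ x t) (s x t) (s₁ x t) (s₂ x t)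
        (w x t) (w₁ x t) (w₂ x t) + C * (p x t ^ 2 + s x t ^ 2 + w x t ^ 2))
    (HU : ∀ t ∈ Set.Icc 0 T, (∫ x in (0:ℝ)..L, (p x t ^ 2 + s x t ^ 2 + w x t ^ 2)) ≤ B) :
    (∫ x in (0:ℝ)..L, eD ρ₁ ρ₂ k k₀ b ℓ (p x T) (p₁ x T) (p₂ x T) (s x T) (s₁ x T) (s₂ x T)
        (w x T) (w₁ x T) (w₂ x T)) ≤
      C * Real.exp (-(1 / (16 * C)) * T) * (∫ x in (0:ℝ)..L, eD ρ₁ ρ₂ k k₀ b ℓ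
        (p x 0) (p₁ x 0) (p₂ x 0) (s x 0) (s₁ x 0) (s₂ x 0) (w x 0) (w₁ x 0) (w₂ x 0))
      + (2 * C + (1/16 + C) * (16 * C)) * B := by
  have sl : ∀ {f : ℝ → ℝ → ℝ} (t : ℝ), Continuous (fun z : ℝ × ℝ => f z.1 z.2) →
    Continuous (fun x => f x t) := fun t h => h.comp (Continuous.prodMk_left t)
  have cq : Continuous q := continuous_iff_continuousAt.2 fun x => (hq x).continuousAt
  have cξ : Continuous ξ := continuous_iff_continuousAt.2 fun x => (hξ x).continuousAt
  set E : ℝ → ℝ := fun t => ∫ x in (0:ℝ)..L, eD ρ₁ ρ₂ k k₀ b ℓ (p x t) (p₁ x t) (p₂ x t)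
    (s x t) (s₁ x t) (s₂ x t) (w x t) (w₁ x t) (w₂ x t) with hE
  set U : ℝ → ℝ := fun t => ∫ x in (0:ℝ)..L, (p x t ^ 2 + s x t ^ 2 + w x t ^ 2) with hU
  set V : ℝ → ℝ := fun t => ∫ x in (0:ℝ)..L, lD ρ₁ ρ₂ k k₀ b ℓ N (q x) (ξ x)
        (p x t) (p₁ x t) (p₂ x t) (s x t) (s₁ x t) (s₂ x t) (w x t) (w₁ x t) (w₂ x t) with hV
  set V' : ℝ → ℝ := fun t => ∫ x in (0:ℝ)..L, dD ρ₁ ρ₂ k k₀ b ℓ N (q x) (ξ x) (ξ' x)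
        (p x t) (p₁ x t) (p₂ x t) (s x t) (s₁ x t) (s₂ x t) (w x t) (w₁ x t) (w₂ x t)
        (k * p₁₁ x t + k * s₁ x t + (k + k₀) * ℓ * w₁ x t - k₀ * ℓ ^ 2 * p x t - ρ₁ * p₂₂ x t)
        (b * s₁₁ x t - k * p₁ x t - k * s x t - k * ℓ * w x t - ρ₂ * s₂₂ x t)
        (k₀ * w₁₁ x t - (k₀ + k) * ℓ * p₁ x t - k * ℓ * s x t - k * ℓ ^ 2 * w x t - ρ₁ * w₂₂ x t)
    with hV'
  have key : ∀ t, 0 ≤ t → E t - C * U t ≤ V t ∧ V t ≤ C * (E t + U t) ∧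
      V' t ≤ -(1/16) * E t + C * U t := by
    intro t ht
    have a1 := sl t hp.c
    have a2 := sl t hp.cx
    have a3 := sl t hp.ct
    have a4 := sl t hp.cxx
    have a5 := sl t hp.ctt
    have b1 := sl t hs.c
    have b2 := sl t hs.cx
    have b3 := sl t hs.ct
    have b4 := sl t hs.cxx
    have b5 := sl t hs.ctt
    have c1 := sl t hw.c
    have c2 := sl t hw.cx
    have c3 := sl t hw.ct
    have c4 := sl t hw.cxx
    have c5 := sl t hw.ctt
    have ie : Continuous (fun x => eD ρ₁ ρ₂ k k₀ b ℓ (p x t) (p₁ x t) (p₂ x t)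
        (s x t) (s₁ x t) (s₂ x t) (w x t) (w₁ x t) (w₂ x t)) := by unfold eD; fun_prop
    have iu : Continuous (fun x => p x t ^ 2 + s x t ^ 2 + w x t ^ 2) := by fun_prop
    have il : Continuous (fun x => lD ρ₁ ρ₂ k k₀ b ℓ N (q x) (ξ x)
        (p x t) (p₁ x t) (p₂ x t) (s x t) (s₁ x t) (s₂ x t) (w x t) (w₁ x t) (w₂ x t)) := by
      unfold lD eD; fun_prop
    have id : Continuous (fun x => dD ρ₁ ρ₂ k k₀ b ℓ N (q x) (ξ x) (ξ' x)
        (p x t) (p₁ x t) (p₂ x t) (s x t) (s₁ x t) (s₂ x t) (w x t) (w₁ x t) (w₂ x t)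
        (k * p₁₁ x t + k * s₁ x t + (k + k₀) * ℓ * w₁ x t - k₀ * ℓ ^ 2 * p x t - ρ₁ * p₂₂ x t)
        (b * s₁₁ x t - k * p₁ x t - k * s x t - k * ℓ * w x t - ρ₂ * s₂₂ x t)
        (k₀ * w₁₁ x t - (k₀ + k) * ℓ * p₁ x t - k * ℓ * s x t - k * ℓ ^ 2 * w x t
          - ρ₁ * w₂₂ x t)) := by
      unfold dD; fun_prop
    have je := ie.intervalIntegrable (μ := volume) 0 L
    have ju := iu.intervalIntegrable (μ := volume) 0 L
    have jl := il.intervalIntegrable (μ := volume) 0 L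
    have jd := id.intervalIntegrable (μ := volume) 0 L
    refine ⟨?_, ?_, ?_⟩
    · have := intervalIntegral.integral_mono_on hL.le (je.sub (ju.const_mul C)) jl
        (fun x hx => H1 x hx t ht)
      rw [intervalIntegral.integral_sub je (ju.const_mul C),
        intervalIntegral.integral_const_mul] at this
      exact this
    · have := intervalIntegral.integral_mono_on hL.le jl ((je.add ju).const_mul C)
        (fun x hx => H2 x hx t ht)
      rw [intervalIntegral.integral_const_mul, intervalIntegral.integral_add je ju] at this
      exact this
    · have := intervalIntegral.integral_mono_on hL.le jd
        ((je.const_mul (-(1/16))).add (ju.const_mul C)) (fun x hx => H3 x hx t ht)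
      rw [intervalIntegral.integral_add (je.const_mul _) (ju.const_mul C),
        intervalIntegral.integral_const_mul, intervalIntegral.integral_const_mul] at this
      exact this
  have dV : ∀ t, 0 ≤ t → HasDerivAt V (V' t) t := by
    intro t ht
    obtain ⟨z1, z2, z3, z4, z5, z6⟩ := bc t ht
    exact lyap_deriv ρ₁ ρ₂ k k₀ b ℓ L N q ξ ξ' hq hξ cξ' q0 qL hp hs hw t z1 z2 z3 z4 z5 z6
      (bc_deriv hp 0 (fun t ht => (bc t ht).1) t ht)
      (bc_deriv hp L (fun t ht => (bc t ht).2.1) t ht)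
      (bc_deriv hs 0 (fun t ht => (bc t ht).2.2.1) t ht)
      (bc_deriv hs L (fun t ht => (bc t ht).2.2.2.1) t ht)
      (bc_deriv hw 0 (fun t ht => (bc t ht).2.2.2.2.1) t ht)
      (bc_deriv hw L (fun t ht => (bc t ht).2.2.2.2.2) t ht)
  have U0 : ∀ t, 0 ≤ U t := fun t => intervalIntegral.integral_nonneg hL.le fun x _ => by positivity
  have HU' : ∀ t ∈ Set.Icc 0 T, U t ≤ B := HU
  have B0 : 0 ≤ B := (U0 0).trans (HU' 0 ⟨le_rfl, hT⟩)
  have g := gron_s19 V V' (1 / (16 * C)) ((1/16 + C) * B) T (by positivity) (by positivity) hT dV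
    (by
      intro t ht
      obtain ⟨-, k2, k3⟩ := key t ht.1
      have u := HU' t ht
      have : 1 / (16 * C) * V t ≤ 1/16 * (E t + U t) := by
        calc 1 / (16 * C) * V t ≤ 1 / (16 * C) * (C * (E t + U t)) := by gcongr
          _ = _ := by field_simp
      have := mul_le_mul_of_nonneg_left u (by positivity : 0 ≤ 1/16 + C)
      linarith)
  obtain ⟨k1, -, -⟩ := key T hT
  obtain ⟨-, k2, -⟩ := key 0 le_rfl
  have uT := mul_le_mul_of_nonneg_left (HU' T ⟨hT, le_rfl⟩) hC.le
  have u0 := HU' 0 ⟨le_rfl, hT⟩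
  have e1 : Real.exp (-(1 / (16 * C)) * T) ≤ 1 := by
    apply Real.exp_le_one_iff.2
    have : 0 ≤ 1 / (16 * C) * T := by positivity
    linarith
  have e0 := Real.exp_pos (-(1 / (16 * C)) * T)
  have s1 := mul_le_mul_of_nonneg_left k2 e0.le
  have s2 : Real.exp (-(1 / (16 * C)) * T) * (C * U 0) ≤ 1 * (C * B) :=
    mul_le_mul e1 (mul_le_mul_of_nonneg_left u0 hC.le) (mul_nonneg hC.le (U0 0)) zero_le_one
  have s3 : (1/16 + C) * B / (1 / (16 * C)) = (1/16 + C) * (16 * C) * B := by field_simp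
  rw [s3] at g
  change E T ≤ C * Real.exp (-(1 / (16 * C)) * T) * E 0 + _
  linarith

theorem lp_bdd (L p K : ℝ) (hL : 0 < L) (hp : 1 ≤ p) (hK : 0 ≤ K) (u : ℝ → ℝ) (hu : Continuous u)
    (h : ∀ x ∈ Set.Icc 0 L, |u x| ≤ K) :
    (∫ x in (0:ℝ)..L, |u x| ^ (2 * p)) ^ (1 / p) ≤ (L * K ^ (2 * p)) ^ (1 / p) := by
  have c : Continuous fun x => |u x| ^ (2 * p) :=
    hu.abs.rpow_const fun x => Or.inr (by linarith)
  apply Real.rpow_le_rpow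
  · exact intervalIntegral.integral_nonneg hL.le fun x _ => by positivity
  · have := intervalIntegral.integral_mono_on (μ := volume) hL.le (c.intervalIntegrable 0 L)
      (continuous_const.intervalIntegrable 0 L)
      (fun x hx => Real.rpow_le_rpow (abs_nonneg _) (h x hx) (by linarith : 0 ≤ 2 * p))
    simpa using this
  · positivity

/-- Quasi-stability estimate. Under assumptions `(f.1)–(a.1)` of
the paper (`fᵢ ∈ C¹(ℝ³)` with `|∇fᵢ| ≤ c_f(1+|u|^{p−1}+|v|^{p−1}+|w|^{p−1})`;
`gᵢ ∈ C¹` increasing, `gᵢ(0)=0`, `m ≤ gᵢ' ≤ M`; `aᵢ ∈ L^∞` nonnegative with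
`aᵢ ≥ a₀ > 0` on open intervals `Iᵢ` having nonempty intersection), for any
`R > 0` there exist `c₁, ω > 0`, depending only on `R` and the data, such that for
any two `C²` solutions `Z¹, Z²` on `[0,L]×[0,∞)` with `∥Zⁱ(t)∥_H ≤ R` for all
`t ≥ 0`, the differences `φ̃, ψ̃, w̃` satisfy for all `t ≥ 0`:
`∥Z¹(t) − Z²(t)∥²_H ≤ c₁e^{−ωt}∥Z¹(0) − Z²(0)∥²_H
  + c₁ sup_{σ∈[0,t]} (∥φ̃(σ)∥²_{L^{2p}} + ∥ψ̃(σ)∥²_{L^{2p}} + ∥w̃(σ)∥²_{L^{2p}})`,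
where `∥u∥²_{L^{2p}(0,L)} = (∫₀^L |u|^{2p})^{1/p}`. -/
theorem stmt_19 (ρ₁ ρ₂ k k₀ b ℓ L : ℝ)
    (hρ₁ : 0 < ρ₁) (hρ₂ : 0 < ρ₂) (hk : 0 < k) (hk₀ : 0 < k₀) (hb : 0 < b)
    (hℓ : 0 < ℓ) (hL : 0 < L)
    (f₁ f₂ f₃ : ℝ → ℝ → ℝ → ℝ) (c_f pexp : ℝ) (hcf : 0 < c_f) (hp : 1 ≤ pexp)
    (hf₁ : ContDiff ℝ 1 (fun z : ℝ × ℝ × ℝ => f₁ z.1 z.2.1 z.2.2))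
    (hf₂ : ContDiff ℝ 1 (fun z : ℝ × ℝ × ℝ => f₂ z.1 z.2.1 z.2.2))
    (hf₃ : ContDiff ℝ 1 (fun z : ℝ × ℝ × ℝ => f₃ z.1 z.2.1 z.2.2))
    (hdf₁ : ∀ z : ℝ × ℝ × ℝ, ‖fderiv ℝ (fun q : ℝ × ℝ × ℝ => f₁ q.1 q.2.1 q.2.2) z‖
      ≤ c_f * (1 + |z.1| ^ (pexp - 1) + |z.2.1| ^ (pexp - 1) + |z.2.2| ^ (pexp - 1)))
    (hdf₂ : ∀ z : ℝ × ℝ × ℝ, ‖fderiv ℝ (fun q : ℝ × ℝ × ℝ => f₂ q.1 q.2.1 q.2.2) z‖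
      ≤ c_f * (1 + |z.1| ^ (pexp - 1) + |z.2.1| ^ (pexp - 1) + |z.2.2| ^ (pexp - 1)))
    (hdf₃ : ∀ z : ℝ × ℝ × ℝ, ‖fderiv ℝ (fun q : ℝ × ℝ × ℝ => f₃ q.1 q.2.1 q.2.2) z‖
      ≤ c_f * (1 + |z.1| ^ (pexp - 1) + |z.2.1| ^ (pexp - 1) + |z.2.2| ^ (pexp - 1)))
    (g₁ g₂ g₃ : ℝ → ℝ) (m M : ℝ) (hm : 0 < m) (hmM : m ≤ M)
    (hg₁ : ContDiff ℝ 1 g₁ ∧ Monotone g₁ ∧ g₁ 0 = 0 ∧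
      ∀ s, m ≤ deriv g₁ s ∧ deriv g₁ s ≤ M)
    (hg₂ : ContDiff ℝ 1 g₂ ∧ Monotone g₂ ∧ g₂ 0 = 0 ∧
      ∀ s, m ≤ deriv g₂ s ∧ deriv g₂ s ≤ M)
    (hg₃ : ContDiff ℝ 1 g₃ ∧ Monotone g₃ ∧ g₃ 0 = 0 ∧
      ∀ s, m ≤ deriv g₃ s ∧ deriv g₃ s ≤ M)
    (a₁ a₂ a₃ : ℝ → ℝ) (a₀ : ℝ) (ha₀ : 0 < a₀)
    (α₁ β₁ α₂ β₂ α₃ β₃ : ℝ)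
    (hI₁ : Set.Ioo α₁ β₁ ⊆ Set.Icc (0:ℝ) L)
    (hI₂ : Set.Ioo α₂ β₂ ⊆ Set.Icc (0:ℝ) L)
    (hI₃ : Set.Ioo α₃ β₃ ⊆ Set.Icc (0:ℝ) L)
    (ha₁ : Measurable a₁ ∧ (∀ x, 0 ≤ a₁ x) ∧ (∃ A, ∀ x, a₁ x ≤ A) ∧
      ∀ x ∈ Set.Ioo α₁ β₁, a₀ ≤ a₁ x)
    (ha₂ : Measurable a₂ ∧ (∀ x, 0 ≤ a₂ x) ∧ (∃ A, ∀ x, a₂ x ≤ A) ∧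
      ∀ x ∈ Set.Ioo α₂ β₂, a₀ ≤ a₂ x)
    (ha₃ : Measurable a₃ ∧ (∀ x, 0 ≤ a₃ x) ∧ (∃ A, ∀ x, a₃ x ≤ A) ∧
      ∀ x ∈ Set.Ioo α₃ β₃, a₀ ≤ a₃ x)
    (hint : (Set.Ioo α₁ β₁ ∩ Set.Ioo α₂ β₂ ∩ Set.Ioo α₃ β₃).Nonempty)
    (R : ℝ) (hR : 0 < R) :
    ∃ c₁ ω : ℝ, 0 < c₁ ∧ 0 < ω ∧
      ∀ φ₁' ψ₁' w₁' φ₂' ψ₂' w₂' : ℝ → ℝ → ℝ,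
        IsBresseSolutionInfty 2 ρ₁ ρ₂ k k₀ b ℓ L a₁ a₂ a₃ g₁ g₂ g₃ f₁ f₂ f₃
          φ₁' ψ₁' w₁' →
        IsBresseSolutionInfty 2 ρ₁ ρ₂ k k₀ b ℓ L a₁ a₂ a₃ g₁ g₂ g₃ f₁ f₂ f₃
          φ₂' ψ₂' w₂' →
        (∀ t ∈ Set.Ici (0:ℝ),
          Real.sqrt (HnormSq ρ₁ ρ₂ b k k₀ ℓ L φ₁' ψ₁' w₁' t) ≤ R) →
        (∀ t ∈ Set.Ici (0:ℝ),
          Real.sqrt (HnormSq ρ₁ ρ₂ b k k₀ ℓ L φ₂' ψ₂' w₂' t) ≤ R) →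
        ∀ t ∈ Set.Ici (0:ℝ),
          HnormSq ρ₁ ρ₂ b k k₀ ℓ L
              (fun x s => φ₁' x s - φ₂' x s)
              (fun x s => ψ₁' x s - ψ₂' x s)
              (fun x s => w₁' x s - w₂' x s) t
            ≤ c₁ * Real.exp (-ω * t) *
                HnormSq ρ₁ ρ₂ b k k₀ ℓ L
                  (fun x s => φ₁' x s - φ₂' x s)
                  (fun x s => ψ₁' x s - ψ₂' x s)
                  (fun x s => w₁' x s - w₂' x s) 0
              + c₁ * sSup ((fun σ =>
                  (∫ x in (0:ℝ)..L, |φ₁' x σ - φ₂' x σ| ^ (2 * pexp)) ^ (1 / pexp)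
                  + (∫ x in (0:ℝ)..L, |ψ₁' x σ - ψ₂' x σ| ^ (2 * pexp)) ^ (1 / pexp)
                  + (∫ x in (0:ℝ)..L, |w₁' x σ - w₂' x σ| ^ (2 * pexp)) ^ (1 / pexp))
                '' Set.Icc 0 t) := by
  obtain ⟨q, ξ, ξ', Q, hq, hξ, cξ', q0, qL, hQ, ξnn, ξoff, bd⟩ := exists_cutoff L
    (Set.Ioo α₁ β₁ ∩ Set.Ioo α₂ β₂ ∩ Set.Ioo α₃ β₃)
    ((isOpen_Ioo.inter isOpen_Ioo).inter isOpen_Ioo) hint (fun x hx => hI₁ hx.1.1)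
  obtain ⟨dg1, -, -, bg1⟩ := hg₁
  obtain ⟨dg2, -, -, bg2⟩ := hg₂
  obtain ⟨dg3, -, -, bg3⟩ := hg₃
  obtain ⟨-, na1, ⟨A1, uA1⟩, la1⟩ := ha₁
  obtain ⟨-, na2, ⟨A2, uA2⟩, la2⟩ := ha₂
  obtain ⟨-, na3, ⟨A3, uA3⟩, la3⟩ := ha₃
  have hM : 0 < M := lt_of_lt_of_le hm hmM
  set A := |A1| + |A2| + |A3| + 1 with hA
  have hApos : 0 < A := by positivity
  have vA1 : ∀ x, a₁ x ≤ A := fun x => by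
    have := uA1 x; have := le_abs_self A1; have := abs_nonneg A2; have := abs_nonneg A3; linarith
  have vA2 : ∀ x, a₂ x ≤ A := fun x => by
    have := uA2 x; have := le_abs_self A2; have := abs_nonneg A1; have := abs_nonneg A3; linarith
  have vA3 : ∀ x, a₃ x ≤ A := fun x => by
    have := uA3 x; have := le_abs_self A3; have := abs_nonneg A2; have := abs_nonneg A1; linarith
  set K := √(Real.exp (2 * L) * (3 * (R ^ 2 / b + R ^ 2 / k + R ^ 2 / k₀))) with hK
  have hK0 : 0 ≤ K := Real.sqrt_nonneg _
  set Cf := (c_f * (1 + K ^ (pexp - 1) + K ^ (pexp - 1) + K ^ (pexp - 1))) ^ 2 with hCf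
  have hCf0 : 0 < Cf := by positivity
  have hC00 : 0 < Q / (a₀ * m) := by positivity
  have hD : 0 < A * M := by positivity
  obtain ⟨N, C, hC, est⟩ := pointwise_est ρ₁ ρ₂ k k₀ b ℓ Q (A * M) (Q / (a₀ * m)) Cf
    hρ₁ hρ₂ hk hk₀ hb (by first | exact hQ | exact hQ.le) (by first | exact hD | exact hD.le)
    (by first | exact hC00 | exact hC00.le) (by first | exact hCf0 | exact hCf0.le)
  have dbd : ∀ (a : ℝ → ℝ) (x θ : ℝ), x ∈ Set.Icc 0 L → (∀ x, 0 ≤ a x) → (∀ x, a x ≤ A) →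
      (x ∈ Set.Ioo α₁ β₁ ∩ Set.Ioo α₂ β₂ ∩ Set.Ioo α₃ β₃ → a₀ ≤ a x) → m ≤ θ → θ ≤ M →
      0 ≤ a x * θ ∧ a x * θ ≤ A * M ∧ ξ x ≤ Q / (a₀ * m) * (a x * θ) := by
    intro a x θ hx na ua la h1 h2
    have t0 : 0 < θ := lt_of_lt_of_le hm h1
    refine ⟨mul_nonneg (na x) t0.le, mul_le_mul (ua x) h2 t0.le hApos.le, ?_⟩
    by_cases hxW : x ∈ Set.Ioo α₁ β₁ ∩ Set.Ioo α₂ β₂ ∩ Set.Ioo α₃ β₃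
    · have : a₀ * m ≤ a x * θ := mul_le_mul (la hxW) h1 hm.le (na x)
      calc ξ x ≤ Q := (bd x hx).2.1
        _ = Q / (a₀ * m) * (a₀ * m) := by field_simp
        _ ≤ _ := mul_le_mul_of_nonneg_left this hC00.le
    · rw [ξoff x hxW]
      exact mul_nonneg hC00.le (mul_nonneg (na x) t0.le)
  set Cs := max 1 L with hCs
  have hCs1 : 1 ≤ Cs := le_max_left _ _
  set G := 2 * C + (1/16 + C) * (16 * C) with hG
  have hG0 : 0 < G := by positivity
  refine ⟨C + 2 * (G * Cs), 1 / (16 * C), by positivity, by positivity, ?_⟩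
  intro φ₁' ψ₁' w₁' φ₂' ψ₂' w₂' S1 S2 R1 R2 t ht
  obtain ⟨P₁, P₂, P₁₁, P₁₂, P₂₂, X₁, X₂, X₁₁, X₁₂, X₂₂, Y₁, Y₂, Y₁₁, Y₁₂, Y₂₂, hP, hX, hY, bcP,
    eqP⟩ := sol_parts S1
  obtain ⟨P₁', P₂', P₁₁', P₁₂', P₂₂', X₁', X₂', X₁₁', X₁₂', X₂₂', Y₁', Y₂', Y₁₁', Y₁₂', Y₂₂',
    hP', hX', hY', bcP', eqP'⟩ := sol_parts S2
  have hp' := hP.sub hP'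
  have hs' := hX.sub hX'
  have hw' := hY.sub hY'
  have LI1 : ∀ τ, 0 ≤ τ → ∀ x ∈ Set.Icc 0 L, |φ₁' x τ| ≤ K ∧ |ψ₁' x τ| ≤ K ∧ |w₁' x τ| ≤ K :=
    fun τ hτ x hx => H_linf ρ₁ ρ₂ k k₀ b ℓ L R τ hρ₁ hρ₂ hk hk₀ hb hL hP hX hY (bcP τ hτ).1
      (bcP τ hτ).2.2.1 (bcP τ hτ).2.2.2.2.1 (R1 τ hτ) x hx
  have LI2 : ∀ τ, 0 ≤ τ → ∀ x ∈ Set.Icc 0 L, |φ₂' x τ| ≤ K ∧ |ψ₂' x τ| ≤ K ∧ |w₂' x τ| ≤ K :=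
    fun τ hτ x hx => H_linf ρ₁ ρ₂ k k₀ b ℓ L R τ hρ₁ hρ₂ hk hk₀ hb hL hP' hX' hY' (bcP' τ hτ).1
      (bcP' τ hτ).2.2.1 (bcP' τ hτ).2.2.2.2.1 (R2 τ hτ) x hx
  have sp : ∀ σ, Continuous (fun x => φ₁' x σ - φ₂' x σ) := fun σ =>
    hp'.c.comp (Continuous.prodMk_left σ)
  have ss : ∀ σ, Continuous (fun x => ψ₁' x σ - ψ₂' x σ) := fun σ =>
    hs'.c.comp (Continuous.prodMk_left σ)
  have sw : ∀ σ, Continuous (fun x => w₁' x σ - w₂' x σ) := fun σ =>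
    hw'.c.comp (Continuous.prodMk_left σ)
  set S : ℝ → ℝ := fun σ =>
    (∫ x in (0:ℝ)..L, |φ₁' x σ - φ₂' x σ| ^ (2 * pexp)) ^ (1 / pexp)
    + (∫ x in (0:ℝ)..L, |ψ₁' x σ - ψ₂' x σ| ^ (2 * pexp)) ^ (1 / pexp)
    + (∫ x in (0:ℝ)..L, |w₁' x σ - w₂' x σ| ^ (2 * pexp)) ^ (1 / pexp) with hS
  have ab2 : ∀ x y : ℝ, |x| ≤ K → |y| ≤ K → |x - y| ≤ 2 * K := fun x y h1 h2 => by
    have := abs_sub x y; linarith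
  have bddS : BddAbove (S '' Set.Icc 0 t) := by
    refine ⟨(L * (2 * K) ^ (2 * pexp)) ^ (1 / pexp) + (L * (2 * K) ^ (2 * pexp)) ^ (1 / pexp)
      + (L * (2 * K) ^ (2 * pexp)) ^ (1 / pexp), ?_⟩
    rintro _ ⟨σ, hσ, rfl⟩
    have l1 := LI1 σ hσ.1
    have l2 := LI2 σ hσ.1
    exact add_le_add (add_le_add
      (lp_bdd L pexp (2 * K) hL hp (by positivity) _ (sp σ)
        fun x hx => ab2 _ _ (l1 x hx).1 (l2 x hx).1)
      (lp_bdd L pexp (2 * K) hL hp (by positivity) _ (ss σ)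
        fun x hx => ab2 _ _ (l1 x hx).2.1 (l2 x hx).2.1))
      (lp_bdd L pexp (2 * K) hL hp (by positivity) _ (sw σ)
        fun x hx => ab2 _ _ (l1 x hx).2.2 (l2 x hx).2.2)
  have HU : ∀ σ ∈ Set.Icc 0 t, (∫ x in (0:ℝ)..L, ((φ₁' x σ - φ₂' x σ) ^ 2 +
      (ψ₁' x σ - ψ₂' x σ) ^ 2 + (w₁' x σ - w₂' x σ) ^ 2)) ≤ Cs * sSup (S '' Set.Icc 0 t) := by
    intro σ hσ
    have cp := sp σ
    have cs := ss σ
    have cw := sw σ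
    have u1 := l2_le_l2p L pexp hL hp _ cp
    have u2 := l2_le_l2p L pexp hL hp _ cs
    have u3 := l2_le_l2p L pexp hL hp _ cw
    have le := le_csSup bddS (Set.mem_image_of_mem S hσ)
    have le' := mul_le_mul_of_nonneg_left le (by linarith : 0 ≤ Cs)
    rw [intervalIntegral.integral_add, intervalIntegral.integral_add]
    rotate_left
    iterate 4 (apply Continuous.intervalIntegrable; fun_prop)
    refine le_trans ?_ le'
    rw [hS]
    simp only [mul_add]
    exact add_le_add (add_le_add u1 u2) u3
  have bs : ∀ x ∈ Set.Icc 0 L, |q x| ≤ Q ∧ |ξ x| ≤ Q ∧ |ξ' x| ≤ Q := fun x hx =>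
    ⟨(bd x hx).1, by rw [abs_of_nonneg (ξnn x)]; exact (bd x hx).2.1, (bd x hx).2.2⟩
  have fin := core ρ₁ ρ₂ k k₀ b ℓ L N C _ t hL hC ht q ξ ξ' hq hξ cξ' q0 qL hp' hs' hw'
    (by
      intro τ hτ
      obtain ⟨y1, y2, y3, y4, y5, y6⟩ := bcP τ hτ
      obtain ⟨z1, z2, z3, z4, z5, z6⟩ := bcP' τ hτ
      simp only [y1, y2, y3, y4, y5, y6, z1, z2, z3, z4, z5, z6, sub_zero, and_self])
    (fun x hx τ hτ => (est _ _ _ _ _ _ _ _ _ _ _ (bs x hx).1 (bs x hx).2.1).1)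
    (fun x hx τ hτ => (est _ _ _ _ _ _ _ _ _ _ _ (bs x hx).1 (bs x hx).2.1).2.1)
    (by
      intro x hx τ hτ
      obtain ⟨i1, i2, i3⟩ := LI1 τ hτ x hx
      obtain ⟨j1, j2, j3⟩ := LI2 τ hτ x hx
      obtain ⟨θ₁, l1, r1, s1⟩ := exists_slope g₁ m M hmM dg1 bg1 (P₂ x τ) (P₂' x τ)
      obtain ⟨θ₂, l2, r2, s2⟩ := exists_slope g₂ m M hmM dg2 bg2 (X₂ x τ) (X₂' x τ)
      obtain ⟨θ₃, l3, r3, s3⟩ := exists_slope g₃ m M hmM dg3 bg3 (Y₂ x τ) (Y₂' x τ)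
      obtain ⟨e1, e2, e3⟩ := eqP x hx τ hτ
      obtain ⟨e1', e2', e3'⟩ := eqP' x hx τ hτ
      obtain ⟨d1, d1', d1''⟩ := dbd a₁ x θ₁ hx na1 vA1 (fun h => la1 x h.1.1) l1 r1
      obtain ⟨d2, d2', d2''⟩ := dbd a₂ x θ₂ hx na2 vA2 (fun h => la2 x h.1.2) l2 r2
      obtain ⟨d3, d3', d3''⟩ := dbd a₃ x θ₃ hx na3 vA3 (fun h => la3 x h.2) l3 r3
      have F1 := f_lip f₁ c_f pexp K hcf hp hf₁ hdf₁ _ _ _ _ _ _ i1 i2 i3 j1 j2 j3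
      have F2 := f_lip f₂ c_f pexp K hcf hp hf₂ hdf₂ _ _ _ _ _ _ i1 i2 i3 j1 j2 j3
      have F3 := f_lip f₃ c_f pexp K hcf hp hf₃ hdf₃ _ _ _ _ _ _ i1 i2 i3 j1 j2 j3
      have main := (est (q x) (ξ x) (φ₁' x τ - φ₂' x τ) (P₁ x τ - P₁' x τ) (P₂ x τ - P₂' x τ)
        (ψ₁' x τ - ψ₂' x τ) (X₁ x τ - X₁' x τ) (X₂ x τ - X₂' x τ)
        (w₁' x τ - w₂' x τ) (Y₁ x τ - Y₁' x τ) (Y₂ x τ - Y₂' x τ)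
        (bs x hx).1 (bs x hx).2.1).2.2 (ξ' x) (a₁ x * θ₁) (a₂ x * θ₂) (a₃ x * θ₃) _ _ _
        (bs x hx).2.2 d1 d1' d1'' d2 d2' d2'' d3 d3' d3'' F1 F2 F3
      refine le_trans (le_of_eq ?_) main
      congr 1
      · linear_combination e1 - e1' + a₁ x * s1
      · linear_combination e2 - e2' + a₂ x * s2
      · linear_combination e3 - e3' + a₃ x * s3)
    HU
  rw [H_eq ρ₁ ρ₂ k k₀ b ℓ L t hp' hs' hw', H_eq ρ₁ ρ₂ k k₀ b ℓ L 0 hp' hs' hw']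
  set Et := ∫ x in (0:ℝ)..L, eD ρ₁ ρ₂ k k₀ b ℓ (φ₁' x t - φ₂' x t) (P₁ x t - P₁' x t)
    (P₂ x t - P₂' x t) (ψ₁' x t - ψ₂' x t) (X₁ x t - X₁' x t) (X₂ x t - X₂' x t)
    (w₁' x t - w₂' x t) (Y₁ x t - Y₁' x t) (Y₂ x t - Y₂' x t)
  set E0 := ∫ x in (0:ℝ)..L, eD ρ₁ ρ₂ k k₀ b ℓ (φ₁' x 0 - φ₂' x 0) (P₁ x 0 - P₁' x 0)
    (P₂ x 0 - P₂' x 0) (ψ₁' x 0 - ψ₂' x 0) (X₁ x 0 - X₁' x 0) (X₂ x 0 - X₂' x 0)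
    (w₁' x 0 - w₂' x 0) (Y₁ x 0 - Y₁' x 0) (Y₂ x 0 - Y₂' x 0)
  have hE0 : 0 ≤ E0 := intervalIntegral.integral_nonneg hL.le fun x _ => by
    unfold eD; positivity
  have hSm : 0 ≤ sSup (S '' Set.Icc 0 t) := by
    refine le_trans ?_ (le_csSup bddS (Set.mem_image_of_mem S ⟨le_rfl, ht⟩))
    have z : ∀ u : ℝ → ℝ, 0 ≤ (∫ x in (0:ℝ)..L, |u x| ^ (2 * pexp)) ^ (1 / pexp) := fun u =>
      Real.rpow_nonneg (intervalIntegral.integral_nonneg hL.le fun x _ => by positivity) _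
    exact add_nonneg (add_nonneg (z _) (z _)) (z _)
  have n1 : 0 ≤ 2 * (G * Cs) * (Real.exp (-(1 / (16 * C)) * t) * (2 * E0)) := by positivity
  have n2 : 0 ≤ C * sSup (S '' Set.Icc 0 t) := by positivity
  have fin' : Et ≤ C * Real.exp (-(1 / (16 * C)) * t) * E0
      + G * (Cs * sSup (S '' Set.Icc 0 t)) := fin
  change 2 * Et ≤ (C + 2 * (G * Cs)) * Real.exp (-(1 / (16 * C)) * t) * (2 * E0)
    + (C + 2 * (G * Cs)) * sSup (S '' Set.Icc 0 t)
  linarith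
end
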